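/- (Lorentz space improvement in the target) Let d ≥ 3, θ ∈ (0,1) and θ₀ = (d²+d−2)/(d²+d). For every s with p_θ < s < q_θ there exists a constant C < ∞, depending only on d, θ, s, such that for every nonnegative measurable f on ℝ^d: if θ ≠ θ₀ then ‖Xf‖_{L^{q_θ,s}_t L^{r_θ}_y} ≤ C·‖f‖_{L^{p_θ}}, and if θ = θ₀ then ‖Xf‖_{L^{q_{θ₀},s}(ℝ^d)} ≤ C·‖f‖_{L^{p_{θ₀}}} (recall q_{θ₀} = r_{θ₀}, so the mixed norm space is an ordinary Lebesgue–Lorentz space). -/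

import Mathlib

open MeasureTheory ENNReal Set Filter
noncomputable section

/-- Points of `ℝ^d` written as `(s, x)` with `s ∈ ℝ`, `x ∈ ℝ^(d-1)` (here `n = d-1`). -/
abbrev Pt (n : ℕ) := ℝ × (Fin n → ℝ)

/-- The moment curve `γ(t) = (t, t², …, t^n)` in `ℝ^n`. -/
def mom (n : ℕ) (t : ℝ) : Fin n → ℝ := fun i => t ^ (i.1 + 1)

/-- The restricted X-ray transform `Xf(t,y) = ∫ f(s, y + s·γ(t)) ds` of a
nonnegative function `f` on `ℝ^d`. -/
def Xray (n : ℕ) (f : Pt n → ℝ) (z : Pt n) : ℝ≥0∞ :=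
  ∫⁻ s : ℝ, ENNReal.ofReal (f (s, z.2 + s • mom n z.1))

/-- Mixed norm `‖g‖_{L^q_t L^r_y}` for an `ℝ≥0∞`-valued function on `ℝ × Y`. -/
def mixedNormG {Y : Type*} [MeasurableSpace Y] (ν : Measure Y) (q r : ℝ)
    (g : ℝ × Y → ℝ≥0∞) : ℝ≥0∞ :=
  (∫⁻ t : ℝ, (∫⁻ y, g (t, y) ^ r ∂ν) ^ (q / r)) ^ (1 / q)

/-- Mixed norm `‖g‖_{L^q_t L^r_y}` on `ℝ^d = ℝ × ℝ^(d-1)`, `ℝ≥0∞`-valued functions. -/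
def mixedNorm (n : ℕ) (q r : ℝ) (g : Pt n → ℝ≥0∞) : ℝ≥0∞ :=
  mixedNormG volume q r g

/-- Mixed norm of a real-valued function. -/
def mixedNormR (n : ℕ) (q r : ℝ) (g : Pt n → ℝ) : ℝ≥0∞ :=
  mixedNorm n q r fun z => ENNReal.ofReal |g z|

/-- The `L^p` norm of a real-valued function on `ℝ^d`. -/
def LpN (n : ℕ) (p : ℝ) (f : Pt n → ℝ) : ℝ≥0∞ :=
  (∫⁻ z : Pt n, ENNReal.ofReal |f z| ^ p) ^ (1 / p)

/-- The `L^p` norm restricted to a set. -/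
def LpNOn (n : ℕ) (p : ℝ) (f : Pt n → ℝ) (S : Set (Pt n)) : ℝ≥0∞ :=
  (∫⁻ z in S, ENNReal.ofReal |f z| ^ p) ^ (1 / p)

/-- `p_θ`, defined by `1/p_θ = 1 - θ + θd/(d+2)`. -/
def pExp (d : ℕ) (θ : ℝ) : ℝ := (1 - θ + θ * d / (d + 2))⁻¹

/-- `q_θ`, defined by `1/q_θ = θd/(d+2)`. -/
def qExp (d : ℕ) (θ : ℝ) : ℝ := (θ * d / (d + 2))⁻¹

/-- `r_θ`, defined by `1/r_θ = 1 - θ + θ(d²-d-2)/(d²+d-2)`. -/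
def rExp (d : ℕ) (θ : ℝ) : ℝ :=
  (1 - θ + θ * ((d:ℝ)^2 - d - 2) / ((d:ℝ)^2 + d - 2))⁻¹

/-- Dual exponent `p' = p/(p-1)`. -/
def dualExp (p : ℝ) : ℝ := p / (p - 1)

/-- `θ₀ = (d²+d-2)/(d²+d)`, the exponent where `q_θ = r_θ`. -/
def theta0 (d : ℕ) : ℝ := ((d:ℝ)^2 + d - 2) / ((d:ℝ)^2 + d)

/-- The mixed norm `‖Xf‖_{L^{q_θ}_t L^{r_θ}_y}`. -/
def XNorm (d : ℕ) (θ : ℝ) (f : Pt (d-1) → ℝ) : ℝ≥0∞ :=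
  mixedNorm (d-1) (qExp d θ) (rExp d θ) (Xray (d-1) f)

/-- The source norm `‖f‖_{L^{p_θ}}`. -/
def srcNorm (d : ℕ) (θ : ℝ) (f : Pt (d-1) → ℝ) : ℝ≥0∞ := LpN (d-1) (pExp d θ) f

/-- The dual mixed norm `‖g‖_{L^{q_θ'}_t L^{r_θ'}_y}`. -/
def dualNorm (d : ℕ) (θ : ℝ) (g : Pt (d-1) → ℝ) : ℝ≥0∞ :=
  mixedNormR (d-1) (dualExp (qExp d θ)) (dualExp (rExp d θ)) g

/-- The operator norm `A_θ` of `X : L^{p_θ} → L^{q_θ}_t L^{r_θ}_y` (restricted to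
nonnegative functions). -/
def Aconst (d : ℕ) (θ : ℝ) : ℝ≥0∞ :=
  sSup { M | ∃ f : Pt (d-1) → ℝ, Measurable f ∧ 0 ≤ f ∧
    srcNorm d θ f = 1 ∧ M = XNorm d θ f }

/-- The bilinear pairing `𝒳(f,g) = ∫ Xf · g`. -/
def pairing (n : ℕ) (f g : Pt n → ℝ) : ℝ≥0∞ :=
  ∫⁻ z : Pt n, Xray n f z * ENNReal.ofReal (g z)

/-- Indicator function of a set, as a real-valued function. -/
def ind (n : ℕ) (E : Set (Pt n)) : Pt n → ℝ := E.indicator fun _ => (1:ℝ)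

/-- `𝒳(E,F) = ∫ X1_E · 1_F`. -/
def pairSet (n : ℕ) (E F : Set (Pt n)) : ℝ≥0∞ := pairing n (ind n E) (ind n F)

/-- Dyadic level set `E_j = {z : 2^j ≤ f(z) < 2^(j+1)}`. -/
def lev (n : ℕ) (f : Pt n → ℝ) (j : ℤ) : Set (Pt n) :=
  {z | (2:ℝ) ^ j ≤ f z ∧ f z < (2:ℝ) ^ (j + 1)}

/-- The measure of the slice `{y : (t,y) ∈ F}`. -/
def sliceVol (n : ℕ) (F : Set (Pt n)) (t : ℝ) : ℝ≥0∞ :=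
  volume {y : Fin n → ℝ | (t, y) ∈ F}

/-- `F_k^l = F_k ∩ π⁻¹{t : 2^l ≤ |{y : (t,y) ∈ F_k}| < 2^(l+1)}` where `F_k` is
the `k`-th level set of `g`. -/
def Fkl (n : ℕ) (g : Pt n → ℝ) (k l : ℤ) : Set (Pt n) :=
  lev n g k ∩ {z | (2:ℝ≥0∞) ^ l ≤ sliceVol n (lev n g k) z.1 ∧
    sliceVol n (lev n g k) z.1 < (2:ℝ≥0∞) ^ (l + 1)}

/-- `F_{kl}^m`: the `k`-th level set of `g`, restricted to `t` with
`2^l ≤ ∫ g(t,y)^{r'} dy < 2^(l+1)` and `2^m ≤ |{y : (t,y) ∈ F_k}| < 2^(m+1)`. -/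
def Fklm (n : ℕ) (r' : ℝ) (g : Pt n → ℝ) (k l m : ℤ) : Set (Pt n) :=
  lev n g k ∩
  {z | (2:ℝ≥0∞) ^ l ≤ (∫⁻ y, ENNReal.ofReal (g (z.1, y)) ^ r') ∧
    (∫⁻ y, ENNReal.ofReal (g (z.1, y)) ^ r') < (2:ℝ≥0∞) ^ (l + 1)} ∩
  {z | (2:ℝ≥0∞) ^ m ≤ sliceVol n (lev n g k) z.1 ∧
    sliceVol n (lev n g k) z.1 < (2:ℝ≥0∞) ^ (m + 1)}

/-- The lower-triangular matrix `G_{t₀}` with entries `C(m,i)·t₀^(m-i)`, acting on `ℝ^(d-1)`. -/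
def Gmat (n : ℕ) (t₀ : ℝ) (x : Fin n → ℝ) : Fin n → ℝ := fun m =>
  ∑ i ∈ Finset.univ.filter (fun i : Fin n => i ≤ m),
    ((Nat.choose (m.1+1) (i.1+1)) : ℝ) * t₀ ^ (m.1 - i.1) * x i

/-- The symmetry group `G_d` of the restricted X-ray transform, with the (constant)
Jacobian determinant carried along: `IsSymJ n φ J` means `φ ∈ G_d` with Jacobian `J`. -/
inductive IsSymJ (n : ℕ) : (Pt n → Pt n) → ℝ → Prop
  | translation (v : Fin n → ℝ) : IsSymJ n (fun p => (p.1, p.2 + v)) 1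
  | scaling (α β : ℝ) (hα : 0 < α) (hβ : 0 < β) :
      IsSymJ n (fun p => (α * p.1, fun i => α * β ^ (i.1 + 1) * p.2 i))
        (α ^ (n+1) * β ^ (n * (n+1) / 2))
  | shift (s₀ t₀ : ℝ) :
      IsSymJ n (fun p => (p.1 + s₀, Gmat n t₀ p.2 + (p.1 + s₀) • mom n t₀)) 1
  | comp (φ ψ : Pt n → Pt n) (J₁ J₂ : ℝ) :
      IsSymJ n φ J₁ → IsSymJ n ψ J₂ → IsSymJ n (φ ∘ ψ) (J₁ * J₂)

/-- The `L^p`-normalized action `φ*f = J^(1/p) · (f ∘ φ)` of a symmetry on functions. -/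
def symAct (n : ℕ) (p : ℝ) (J : ℝ) (φ : Pt n → Pt n) (f : Pt n → ℝ) : Pt n → ℝ :=
  fun z => J ^ (1/p) * f (φ z)

/-- Lorentz norm `‖h‖_{L^{p,s}}` (up to equivalence), via dyadic level sets. -/
def lorentzNorm {α : Type*} [MeasurableSpace α] (μ : Measure α) (p s : ℝ)
    (h : α → ℝ≥0∞) : ℝ≥0∞ :=
  (∑' j : ℤ, ((2:ℝ≥0∞) ^ j *
      μ {z | (2:ℝ≥0∞) ^ j ≤ h z ∧ h z < (2:ℝ≥0∞) ^ (j+1)} ^ (1/p)) ^ s) ^ (1/s)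

/-- Weak `L^{p,∞}` norm. -/
def weakNorm {α : Type*} [MeasurableSpace α] (μ : Measure α) (p : ℝ)
    (h : α → ℝ≥0∞) : ℝ≥0∞ :=
  ⨆ l : ℝ≥0∞, l * μ {z | l < h z} ^ (1/p)

/-- Mixed Lorentz norm `‖g‖_{L^{q,s}_t L^r_y}` (up to equivalence). -/
def mixedLorentzG {Y : Type*} [MeasurableSpace Y] (ν : Measure Y) (q s r : ℝ)
    (g : ℝ × Y → ℝ≥0∞) : ℝ≥0∞ :=
  (∑' l : ℤ, (mixedNormG ν q r
      (Set.indicator {z : ℝ × Y | (2:ℝ≥0∞) ^ l ≤ (∫⁻ y, g (z.1, y) ^ r ∂ν) ∧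
        (∫⁻ y, g (z.1, y) ^ r ∂ν) < (2:ℝ≥0∞) ^ (l+1)} g)) ^ s) ^ (1/s)

/-- Weak mixed norm `‖g‖_{L^{q,∞}_t L^r_y}`. -/
def weakMixedG {Y : Type*} [MeasurableSpace Y] (ν : Measure Y) (q r : ℝ)
    (g : ℝ × Y → ℝ≥0∞) : ℝ≥0∞ :=
  ⨆ l : ℝ≥0∞, l * (volume {t : ℝ | l < (∫⁻ y, g (t, y) ^ r ∂ν) ^ (1/r)}) ^ (1/q)

/-- The paraball `B(s₀,t₀,ȳ,α,β)`. -/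
def paraball (n : ℕ) (s₀ t₀ : ℝ) (ybar : Fin n → ℝ) (α β : ℝ) : Set (Pt n) :=
  {z | |z.1 - s₀| < α ∧ ∀ m : Fin n,
    |(∑ i ∈ Finset.univ.filter (fun i : Fin n => i ≤ m),
        ((Nat.choose (m.1+1) (i.1+1)) : ℝ) * (-t₀) ^ (m.1 - i.1) *
          (z.2 i - (ybar + s₀ • mom n t₀) i))
      + (-t₀) ^ (m.1+1) * (z.1 + s₀)| ≤ β ^ (m.1+1) * α}

/-- The dual paraball `B*(s₀,t₀,ȳ,α,β)`. -/
def dualParaball (n : ℕ) (s₀ t₀ : ℝ) (ybar : Fin n → ℝ) (α β : ℝ) : Set (Pt n) :=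
  {z | |z.1 - t₀| < β ∧ ∀ m : Fin n,
    |(∑ i ∈ Finset.univ.filter (fun i : Fin n => i ≤ m),
        ((Nat.choose (m.1+1) (i.1+1)) : ℝ) * (-t₀) ^ (m.1 - i.1) * (z.2 i - ybar i))
      + s₀ * (z.1 ^ (m.1+1) + (-t₀) ^ (m.1+1))| ≤ β ^ (m.1+1) * α}

/-- The mock-distance between two paraballs. -/
def mockDist (n : ℕ) (sa ta : ℝ) (ya : Fin n → ℝ) (aa ba : ℝ)
    (sb tb : ℝ) (yb : Fin n → ℝ) (ab bb : ℝ) : ℝ :=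
  (max (aa ^ n * ba ^ (n * (n+1) / 2)) (ab ^ n * bb ^ (n * (n+1) / 2)) /
    min (aa ^ n * ba ^ (n * (n+1) / 2)) (ab ^ n * bb ^ (n * (n+1) / 2)))
  + (aa / ab + ab / aa) + (ba / bb + bb / ba)
  + |sa - sb| * (1/aa + 1/ab) + |ta - tb| * (1/ba + 1/bb)
  + ∑ m : Fin n,
      |(∑ i ∈ Finset.univ.filter (fun i : Fin n => i ≤ m),
          ((Nat.choose (m.1+1) (i.1+1)) : ℝ) * (-ta) ^ (m.1 - i.1) *
            ((yb + sb • mom n tb) i - (ya + sa • mom n ta) i))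
        + (-ta) ^ (m.1+1) * (sb + sa)| / (aa * ba ^ (m.1+1))
  + ∑ m : Fin n,
      |(∑ i ∈ Finset.univ.filter (fun i : Fin n => i ≤ m),
          ((Nat.choose (m.1+1) (i.1+1)) : ℝ) * (-tb) ^ (m.1 - i.1) *
            ((ya + sa • mom n ta) i - (yb + sb • mom n tb) i))
        + (-tb) ^ (m.1+1) * (sa + sb)| / (ab * bb ^ (m.1+1))
  + ∑ m : Fin n,
      |(∑ i ∈ Finset.univ.filter (fun i : Fin n => i ≤ m),
          ((Nat.choose (m.1+1) (i.1+1)) : ℝ) * (-sa) ^ (m.1 - i.1) * (yb i - ya i))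
        + sa * (tb ^ (m.1+1) + (-ta) ^ (m.1+1))| / (aa * ba ^ (m.1+1))
  + ∑ m : Fin n,
      |(∑ i ∈ Finset.univ.filter (fun i : Fin n => i ≤ m),
          ((Nat.choose (m.1+1) (i.1+1)) : ℝ) * (-sb) ^ (m.1 - i.1) * (ya i - yb i))
        + sb * (ta ^ (m.1+1) + (-tb) ^ (m.1+1))| / (ab * bb ^ (m.1+1))

namespace LX

def vv (n : ℕ) (t : ℝ) : Pt n := (1, mom n t)

def inc {n : ℕ} (z : Pt n) (t : ℝ) : Pt n := (t, z.2 - z.1 • mom n t)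

lemma measurable_mom (n : ℕ) : Measurable (mom n) := by
  unfold mom; fun_prop

lemma measurable_vv (n : ℕ) : Measurable (vv n) := by
  unfold vv; exact measurable_const.prodMk (measurable_mom n)

lemma measurable_inc (n : ℕ) : Measurable (fun p : Pt n × ℝ => inc p.1 p.2) := by
  unfold inc
  have := measurable_mom n
  fun_prop

lemma inc_add {n : ℕ} (z : Pt n) (w t : ℝ) : inc (z + w • vv n t) t = inc z t := by
  unfold inc vv
  ext i
  · rfl
  · simp; ring

/-- duality -/
lemma dual {n : ℕ} (h G : Pt n → ℝ≥0∞) (hh : Measurable h) (hG : Measurable G) :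
    ∫⁻ p : Pt n, (∫⁻ s : ℝ, h (s, p.2 + s • mom n p.1)) * G p =
      ∫⁻ z : Pt n, h z * ∫⁻ t : ℝ, G (inc z t) := by
  have hm := measurable_mom n
  have hin := measurable_inc n
  have m1 : Measurable (fun q : Pt n × ℝ => h (q.2, q.1.2 + q.2 • mom n q.1.1) * G q.1) := by
    apply Measurable.mul
    · apply hh.comp; fun_prop
    · exact hG.comp measurable_fst
  have m2 : Measurable (fun q : Pt n × ℝ => h q.1 * G (inc q.1 q.2)) := by
    apply Measurable.mul
    · exact hh.comp measurable_fst
    · exact hG.comp hin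
  calc ∫⁻ p : Pt n, (∫⁻ s : ℝ, h (s, p.2 + s • mom n p.1)) * G p
      = ∫⁻ p : Pt n, ∫⁻ s : ℝ, h (s, p.2 + s • mom n p.1) * G p := by
        apply lintegral_congr; intro p
        rw [lintegral_mul_const]
        apply hh.comp; fun_prop
    _ = ∫⁻ t : ℝ, ∫⁻ y : Fin n → ℝ, ∫⁻ s : ℝ, h (s, y + s • mom n t) * G (t, y) := by
        rw [Measure.volume_eq_prod, lintegral_prod]
        exact m1.lintegral_prod_right'.aemeasurable
    _ = ∫⁻ t : ℝ, ∫⁻ s : ℝ, ∫⁻ y : Fin n → ℝ, h (s, y + s • mom n t) * G (t, y) := by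
        apply lintegral_congr; intro t
        apply lintegral_lintegral_swap
        have : Measurable (fun q : (Fin n → ℝ) × ℝ => (((t, q.1), q.2) : Pt n × ℝ)) := by fun_prop
        exact (m1.comp this).aemeasurable
    _ = ∫⁻ t : ℝ, ∫⁻ s : ℝ, ∫⁻ y : Fin n → ℝ, h (s, y) * G (inc (s, y) t) := by
        apply lintegral_congr; intro t
        apply lintegral_congr; intro s
        rw [← lintegral_add_right_eq_self (μ := (volume : Measure (Fin n → ℝ)))
          (fun y => h (s, y) * G (inc (s, y) t)) (s • mom n t)]
        apply lintegral_congr; intro y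
        simp [inc]
    _ = ∫⁻ t : ℝ, ∫⁻ z : Pt n, h z * G (inc z t) := by
        apply lintegral_congr; intro t
        rw [Measure.volume_eq_prod, lintegral_prod]
        have : Measurable (fun q : Pt n => ((q, t) : Pt n × ℝ)) := by fun_prop
        exact (m2.comp this).aemeasurable
    _ = ∫⁻ z : Pt n, ∫⁻ t : ℝ, h z * G (inc z t) := by
        rw [lintegral_lintegral_swap]
        have : Measurable (fun q : ℝ × Pt n => ((q.2, q.1) : Pt n × ℝ)) := by fun_prop
        exact (m2.comp this).aemeasurable
    _ = _ := by
        apply lintegral_congr; intro z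
        rw [lintegral_const_mul]
        apply hG.comp
        exact hin.comp (measurable_const.prodMk measurable_id)

def Psi {n : ℕ} (E F : Set (Pt n)) (δ : ℝ) : (m : ℕ) → (j : ℕ) → Pt n → (Fin j → ℝ) → ℝ≥0∞
  | 0, _, z, _ => E.indicator 1 z
  | m+1, j, z, H => ∫⁻ t : ℝ, (Set.indicator {t | inc z t ∈ F ∧ ∀ i, δ ≤ |t - H i|} 1 t) *
      ∫⁻ w : ℝ, Psi E F δ m (j+1) (z + w • vv n t) (Fin.cons t H)

lemma measurable_cons (j : ℕ) :
    Measurable (fun p : ℝ × (Fin j → ℝ) => (Fin.cons p.1 p.2 : Fin (j+1) → ℝ)) := by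
  rw [measurable_pi_iff]
  intro i
  refine Fin.cases ?_ (fun i => ?_) i
  · simpa using measurable_fst
  · simp only [Fin.cons_succ]; fun_prop

lemma measurable_Psi {n : ℕ} {E F : Set (Pt n)} (δ : ℝ) (hE : MeasurableSet E)
    (hF : MeasurableSet F) (m : ℕ) : ∀ j, Measurable (fun p : Pt n × (Fin j → ℝ) =>
      Psi E F δ m j p.1 p.2) := by
  have hv := measurable_vv n
  have hin := measurable_inc n
  induction m with
  | zero =>
    intro j
    exact (measurable_one.indicator hE).comp measurable_fst
  | succ m ih =>
    intro j
    simp only [Psi]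
    refine Measurable.lintegral_prod_right' (f := fun q : (Pt n × (Fin j → ℝ)) × ℝ =>
      (Set.indicator {t | inc q.1.1 t ∈ F ∧ ∀ i, δ ≤ |t - q.1.2 i|} 1 q.2) *
      ∫⁻ w : ℝ, Psi E F δ m (j+1) (q.1.1 + w • vv n q.2) (Fin.cons q.2 q.1.2)) ?_
    apply Measurable.mul
    · have hS : MeasurableSet {q : (Pt n × (Fin j → ℝ)) × ℝ | inc q.1.1 q.2 ∈ F ∧
          ∀ i, δ ≤ |q.2 - q.1.2 i|} := by
        simp only [Set.ofPred_and, Set.ofPred_forall]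
        apply MeasurableSet.inter
        · exact (hin.comp (f := fun q : (Pt n × (Fin j → ℝ)) × ℝ => (q.1.1, q.2))
            (by fun_prop)) hF
        · refine MeasurableSet.iInter fun i => measurableSet_le measurable_const ?_
          have : Measurable (fun q : (Pt n × (Fin j → ℝ)) × ℝ => q.2 - q.1.2 i) := by fun_prop
          exact continuous_abs.measurable.comp this
      have := (measurable_one (α := ℝ≥0∞)).indicator hS
      exact this
    · refine Measurable.lintegral_prod_right' (f := fun q : ((Pt n × (Fin j → ℝ)) × ℝ) × ℝ =>
        Psi E F δ m (j+1) (q.1.1.1 + q.2 • vv n q.1.2) (Fin.cons q.1.2 q.1.1.2)) ?_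
      refine (ih (j+1)).comp (g := fun p : Pt n × (Fin (j+1) → ℝ) => Psi E F δ m (j+1) p.1 p.2) (f := fun q : ((Pt n × (Fin j → ℝ)) × ℝ) × ℝ =>
        (q.1.1.1 + q.2 • vv n q.1.2, Fin.cons q.1.2 q.1.1.2)) ?_
      apply Measurable.prodMk
      · fun_prop
      · exact (measurable_cons j).comp (f := fun q : ((Pt n × (Fin j → ℝ)) × ℝ) × ℝ =>
          (q.1.2, q.1.1.2)) (by fun_prop)

end LX

namespace LX

lemma lintegral_cons (j : ℕ) (f : (Fin (j+1) → ℝ) → ℝ≥0∞) (hf : Measurable f) :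
    ∫⁻ x, f x = ∫⁻ w : Fin j → ℝ, ∫⁻ a : ℝ, f (Fin.cons a w) := by
  have h := (volume_preserving_piFinSuccAbove (fun _ : Fin (j+1) => ℝ) 0).symm
  rw [← h.lintegral_comp hf, Measure.volume_eq_prod, lintegral_prod_symm]
  · simp [MeasurableEquiv.piFinSuccAbove]
    rfl
  · exact (hf.comp (MeasurableEquiv.measurable _)).aemeasurable

lemma lintegral_head (n : ℕ) (f : Pt n → ℝ≥0∞) (hf : Measurable f) :
    ∫⁻ x : Fin (n+1) → ℝ, f (x 0, fun i => x i.succ) = ∫⁻ p, f p := by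
  have h := (volume_preserving_piFinSuccAbove (fun _ : Fin (n+1) => ℝ) 0)
  rw [← h.lintegral_comp hf]
  rfl

def NN (n : ℕ) : ℕ := ∑ i : Fin (n+1), (Finset.Ioi i).card

lemma NN_eq (n : ℕ) : (NN n : ℝ) = n * (n+1) / 2 := by
  unfold NN
  have : ∀ m : ℕ, (((∑ i : Fin (m+1), (Finset.Ioi i).card : ℕ)) : ℝ) = m * (m+1)/2 := by
    intro m
    have h1 : (∑ i : Fin (m+1), (Finset.Ioi i).card) = ∑ i ∈ Finset.range (m+1), i := by
      rw [← Finset.sum_range_reflect, ← Fin.sum_univ_eq_sum_range (fun j => m + 1 - 1 - j)]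
      apply Finset.sum_congr rfl
      intro i _
      simp [Fin.card_Ioi]
    rw [h1]
    have := Finset.sum_range_id_mul_two (m+1)
    have h2 : ((∑ i ∈ Finset.range (m+1), i : ℕ) : ℝ) * 2 = (m+1) * m := by
      exact_mod_cast this
    linarith
  exact this n

lemma vand {n : ℕ} {δ : ℝ} (hδ : 0 < δ) (E : Set (Pt n)) (hE : MeasurableSet E) (z : Pt n)
    (H : Fin (n+1) → ℝ) (hH : ∀ i j, i ≠ j → δ ≤ |H i - H j|) :
    ENNReal.ofReal δ ^ NN n *
      ∫⁻ w : Fin (n+1) → ℝ, E.indicator 1 (z + ∑ i, w i • vv n (H i)) ≤ volume E := by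
  set M : Matrix (Fin (n+1)) (Fin (n+1)) ℝ := (Matrix.vandermonde H).transpose with hM
  have hdet : δ ^ NN n ≤ |M.det| := by
    rw [hM, Matrix.det_transpose, Matrix.det_vandermonde, Finset.abs_prod]
    unfold NN
    rw [← Finset.prod_pow_eq_pow_sum]
    apply Finset.prod_le_prod
    · intros; positivity
    · intro i _
      rw [Finset.abs_prod, ← Finset.prod_const]
      apply Finset.prod_le_prod
      · intros; positivity
      · intro k hk
        apply hH
        have := Finset.mem_Ioi.1 hk
        exact this.ne'
  have hpos : 0 < |M.det| := lt_of_lt_of_le (by positivity) hdet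
  have hne : M.det ≠ 0 := abs_pos.1 hpos
  have hmap := Real.map_matrix_volume_pi_eq_smul_volume_pi hne
  set g : (Fin (n+1) → ℝ) → ℝ≥0∞ := fun x => E.indicator 1 (z + (x 0, fun i => x i.succ)) with hg
  have hind : Measurable (E.indicator (1 : Pt n → ℝ≥0∞)) := measurable_one.indicator hE
  have hgm : Measurable g := by
    apply hind.comp
    fun_prop
  have hLm : Measurable (Matrix.toLin' M) := (LinearMap.continuous_of_finiteDimensional _).measurable
  have e1 : ∀ w : Fin (n+1) → ℝ, E.indicator (1 : Pt n → ℝ≥0∞) (z + ∑ i, w i • vv n (H i)) = g (Matrix.toLin' M w) := by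
    intro w
    simp only [hg]
    congr 2
    ext k
    · simp [Prod.fst_sum, vv, Matrix.toLin'_apply, Matrix.mulVec, dotProduct, hM, Matrix.vandermonde]
    · simp [Prod.snd_sum, vv, Matrix.toLin'_apply, Matrix.mulVec, dotProduct, hM, Matrix.vandermonde, mom, mul_comm]
  simp_rw [e1]
  rw [← lintegral_map hgm hLm, hmap, lintegral_smul_measure]
  have : (volume : Measure (Pt n)).IsAddLeftInvariant := by
    rw [Measure.volume_eq_prod]; infer_instance
  have e2 : ∫⁻ x, g x = volume E := by
    rw [hg, lintegral_head n (fun p => E.indicator 1 (z + p))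
      (hind.comp (measurable_const_add z)), lintegral_add_left_eq_self (fun p => E.indicator 1 p) z]
    simp [lintegral_indicator hE]
  rw [e2, smul_eq_mul, ← mul_assoc, ← ENNReal.ofReal_pow hδ.le, ← ENNReal.ofReal_mul (by positivity)]
  calc _ ≤ 1 * volume E := by
        gcongr
        rw [ENNReal.ofReal_le_one, abs_inv]
        rw [← div_eq_mul_inv, div_le_one hpos]
        exact hdet
    _ = _ := one_mul _

lemma upper {n : ℕ} {δ : ℝ} (hδ : 0 < δ) {E F : Set (Pt n)} (hE : MeasurableSet E)
    (hF : MeasurableSet F) {T : Set ℝ} (hT : MeasurableSet T) (hFT : ∀ p ∈ F, p.1 ∈ T) {τ : ℝ≥0∞}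
    (hτ : volume T ≤ τ) (m : ℕ) : ∀ (j : ℕ) (z : Pt n) (H : Fin j → ℝ), j + m = n + 1 →
      (∀ i k, i ≠ k → δ ≤ |H i - H k|) →
      ENNReal.ofReal δ ^ NN n * ∫⁻ w : Fin j → ℝ, Psi E F δ m j (z + ∑ i, w i • vv n (H i)) H
        ≤ τ ^ m * volume E := by
  have hv := measurable_vv n
  induction m with
  | zero =>
    intro j z H hj hH
    simp only [add_zero] at hj
    subst hj
    simpa [Psi] using vand hδ E hE z H hH
  | succ m ih =>
    intro j z H hj hH
    have hP := measurable_Psi δ hE hF m (j+1)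
    have key : ∀ t : ℝ, (∀ i, δ ≤ |t - H i|) → ENNReal.ofReal δ ^ NN n *
        ∫⁻ w : Fin j → ℝ, ∫⁻ a : ℝ, Psi E F δ m (j+1)
          (z + ∑ i, w i • vv n (H i) + a • vv n t) (Fin.cons t H) ≤ τ ^ m * volume E := by
      intro t ht
      have := ih (j+1) z (Fin.cons t H) (by omega) (by
        intro i k
        refine Fin.cases ?_ (fun i => ?_) i <;> refine Fin.cases ?_ (fun k => ?_) k
        · simp
        · intro _; simpa using ht k
        · intro _; rw [abs_sub_comm]; simpa using ht i
        · intro h; simpa using hH i k (fun h' => h (by rw [h'])))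
      rw [lintegral_cons] at this
      · convert this using 6 with w a
        rw [Fin.sum_univ_succ]
        simp only [Fin.cons_zero, Fin.cons_succ]
        rw [add_assoc, add_comm (a • _)]
      · refine hP.comp (f := fun w : Fin (j+1) → ℝ => (z + ∑ i, w i • vv n ((Fin.cons t H : Fin (j+1) → ℝ) i), Fin.cons t H)) ?_
        fun_prop
    calc ENNReal.ofReal δ ^ NN n * ∫⁻ w : Fin j → ℝ, Psi E F δ (m+1) j (z + ∑ i, w i • vv n (H i)) H
        ≤ ENNReal.ofReal δ ^ NN n * ∫⁻ w : Fin j → ℝ, ∫⁻ t : ℝ,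
            (T ∩ {t | ∀ i, δ ≤ |t - H i|}).indicator 1 t * ∫⁻ a : ℝ, Psi E F δ m (j+1)
          (z + ∑ i, w i • vv n (H i) + a • vv n t) (Fin.cons t H) := by
          gcongr with w
          simp only [Psi]
          gcongr with t
          intro t ht
          exact ⟨hFT _ ht.1, ht.2⟩
      _ = ENNReal.ofReal δ ^ NN n * ∫⁻ t : ℝ, ∫⁻ w : Fin j → ℝ,
            (T ∩ {t | ∀ i, δ ≤ |t - H i|}).indicator 1 t * ∫⁻ a : ℝ, Psi E F δ m (j+1)
          (z + ∑ i, w i • vv n (H i) + a • vv n t) (Fin.cons t H) := by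
          rw [lintegral_lintegral_swap]
          apply Measurable.aemeasurable
          apply Measurable.mul
          · have hS : MeasurableSet (T ∩ {t | ∀ i, δ ≤ |t - H i|}) := by
              apply hT.inter
              simp only [Set.ofPred_forall]
              refine MeasurableSet.iInter fun i => measurableSet_le measurable_const ?_
              have : Measurable (fun q : ℝ => q - H i) := by fun_prop
              exact continuous_abs.measurable.comp this
            exact (measurable_one.indicator hS).comp measurable_snd
          · refine Measurable.lintegral_prod_right' (f := fun q : ((Fin j → ℝ) × ℝ) × ℝ =>
              Psi E F δ m (j+1) (z + ∑ i, q.1.1 i • vv n (H i) + q.2 • vv n q.1.2) (Fin.cons q.1.2 H)) ?_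
            refine hP.comp (f := fun q : ((Fin j → ℝ) × ℝ) × ℝ =>
              (z + ∑ i, q.1.1 i • vv n (H i) + q.2 • vv n q.1.2, Fin.cons q.1.2 H)) ?_
            apply Measurable.prodMk
            · fun_prop
            · exact (measurable_cons j).comp (f := fun q : ((Fin j → ℝ) × ℝ) × ℝ =>
                (q.1.2, H)) (by fun_prop)
      _ = ∫⁻ t : ℝ, (T ∩ {t | ∀ i, δ ≤ |t - H i|}).indicator 1 t * (ENNReal.ofReal δ ^ NN n *
           ∫⁻ w : Fin j → ℝ, ∫⁻ a : ℝ, Psi E F δ m (j+1)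
          (z + ∑ i, w i • vv n (H i) + a • vv n t) (Fin.cons t H)) := by
          rw [← lintegral_const_mul']
          · apply lintegral_congr; intro t
            rw [lintegral_const_mul']
            · ring
            · by_cases h : t ∈ (T ∩ {t | ∀ i, δ ≤ |t - H i|}) <;> simp [h]
          · exact ENNReal.pow_ne_top ENNReal.ofReal_ne_top
      _ ≤ ∫⁻ t : ℝ, T.indicator 1 t * (τ ^ m * volume E) := by
          refine lintegral_mono fun t => ?_
          by_cases h : t ∈ (T ∩ {t | ∀ i, δ ≤ |t - H i|})
          · simp only [indicator_of_mem h, indicator_of_mem h.1]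
            exact mul_le_mul_right (key t h.2) _
          · simp only [indicator_of_notMem h]; simp
      _ = volume T * (τ ^ m * volume E) := by
          rw [lintegral_mul_const _ (measurable_one.indicator hT)]
          simp [lintegral_indicator hT]
      _ ≤ τ * (τ ^ m * volume E) := by gcongr
      _ = _ := by ring

end LX

namespace LX

/-- measure of the set of lines in `F` through `z` -/
def uF {n : ℕ} (F : Set (Pt n)) (z : Pt n) : ℝ≥0∞ := volume {t : ℝ | inc z t ∈ F}

def ray {n : ℕ} (g : Pt n → ℝ≥0∞) (l : Pt n) : ℝ≥0∞ := ∫⁻ s : ℝ, g (s, l.2 + s • mom n l.1)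

lemma measurable_ray {n : ℕ} {g : Pt n → ℝ≥0∞} (hg : Measurable g) : Measurable (ray g) := by
  have := measurable_mom n
  refine Measurable.lintegral_prod_right' (f := fun q : Pt n × ℝ => g (q.2, q.1.2 + q.2 • mom n q.1.1)) ?_
  apply hg.comp; fun_prop

lemma measurable_inc_right {n : ℕ} (z : Pt n) : Measurable (inc z) :=
  (measurable_inc n).comp (measurable_const.prodMk measurable_id)

lemma meas_S {n : ℕ} {F : Set (Pt n)} (hF : MeasurableSet F) (z : Pt n) :
    MeasurableSet {t : ℝ | inc z t ∈ F} := (measurable_inc_right z) hF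

lemma uF_eq {n : ℕ} {F : Set (Pt n)} (hF : MeasurableSet F) (z : Pt n) :
    uF F z = ∫⁻ t : ℝ, F.indicator 1 (inc z t) := by
  unfold uF
  rw [← lintegral_indicator_one (meas_S hF z)]
  rfl

lemma measurable_uF {n : ℕ} {F : Set (Pt n)} (hF : MeasurableSet F) : Measurable (uF F) := by
  rw [show uF F = fun z => ∫⁻ t : ℝ, F.indicator 1 (inc z t) from funext (uF_eq hF)]
  refine Measurable.lintegral_prod_right' (f := fun q : Pt n × ℝ => F.indicator 1 (inc q.1 q.2)) ?_
  exact (measurable_one.indicator hF).comp (measurable_inc n)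

lemma dual' {n : ℕ} {h : Pt n → ℝ≥0∞} (hh : Measurable h) {F : Set (Pt n)} (hF : MeasurableSet F) :
    ∫⁻ l in F, ray h l = ∫⁻ z : Pt n, h z * uF F z := by
  simp_rw [uF_eq hF]
  rw [← dual h _ hh (measurable_one.indicator hF), ← lintegral_indicator hF]
  apply lintegral_congr
  intro l
  by_cases hl : l ∈ F <;> simp [hl, ray]

lemma ray_inc {n : ℕ} (g : Pt n → ℝ≥0∞) (z : Pt n) (t : ℝ) :
    ∫⁻ w : ℝ, g (z + w • vv n t) = ray g (inc z t) := by
  unfold ray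
  rw [← lintegral_add_left_eq_self (μ := (volume : Measure ℝ))
    (fun s => g (s, (inc z t).2 + s • mom n (inc z t).1)) (z.1)]
  apply lintegral_congr
  intro w
  congr 1
  ext i
  · simp [vv]
  · simp [vv, inc]; ring

def Es {n : ℕ} (E F : Set (Pt n)) (κ : ℝ≥0∞) : ℕ → Set (Pt n)
  | 0 => E
  | m+1 => {z | z ∈ Es E F κ m ∧ uF F z / 2 ≤
      uF {l | l ∈ F ∧ κ ≤ ray ((Es E F κ m).indicator 1) l} z}

def Fs {n : ℕ} (E F : Set (Pt n)) (κ : ℝ≥0∞) (m : ℕ) : Set (Pt n) :=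
  {l | l ∈ F ∧ κ ≤ ray ((Es E F κ m).indicator 1) l}

section
variable {n : ℕ} {E F : Set (Pt n)} {κ : ℝ≥0∞}

lemma meas_Es (hE : MeasurableSet E) (hF : MeasurableSet F) (m : ℕ) :
    MeasurableSet (Es E F κ m) ∧ MeasurableSet (Fs E F κ m) := by
  have aux : ∀ m, MeasurableSet (Es E F κ m) → MeasurableSet (Fs E F κ m) := by
    intro m hm
    exact hF.inter (measurableSet_le measurable_const
      (measurable_ray (measurable_one.indicator hm)))
  induction m with
  | zero => exact ⟨hE, aux 0 hE⟩
  | succ m ih =>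
    have : MeasurableSet (Es E F κ (m+1)) :=
      ih.1.inter (measurableSet_le ((measurable_uF hF).div_const _) (measurable_uF ih.2))
    exact ⟨this, aux _ this⟩

lemma Es_sub (m : ℕ) : Es E F κ m ⊆ E := by
  induction m with
  | zero => exact subset_rfl
  | succ m ih => exact fun z hz => ih hz.1

lemma Es_loss (hE : MeasurableSet E) (hF : MeasurableSet F) {β : ℝ≥0∞}
    (hβ : ∀ z ∈ E, β ≤ uF F z) (m : ℕ) :
    β / 2 * volume (Es E F κ m \ Es E F κ (m+1)) ≤ κ * volume F := by
  obtain ⟨h1, h2⟩ := meas_Es (κ := κ) hE hF m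
  obtain ⟨h3, -⟩ := meas_Es (κ := κ) hE hF (m+1)
  calc β / 2 * volume (Es E F κ m \ Es E F κ (m+1))
      = ∫⁻ z in (Es E F κ m \ Es E F κ (m+1)), β / 2 := by simp
    _ ≤ ∫⁻ z in (Es E F κ m \ Es E F κ (m+1)), uF (F \ Fs E F κ m) z := by
        refine setLIntegral_mono' (h1.diff h3) fun z hz => ?_
        have hlt : uF (Fs E F κ m) z < uF F z / 2 := by
          by_contra hcon
          exact hz.2 ⟨hz.1, not_lt.1 hcon⟩
        have hadd : uF F z ≤ uF (Fs E F κ m) z + uF (F \ Fs E F κ m) z := by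
          unfold uF
          refine (measure_mono ?_).trans (measure_union_le _ _)
          intro t ht
          by_cases h : inc z t ∈ Fs E F κ m
          · exact Or.inl h
          · exact Or.inr ⟨ht, h⟩
        have hb := hβ z (Es_sub m hz.1)
        by_contra hcon
        rw [not_le] at hcon
        have : uF F z < uF F z := by
          calc uF F z ≤ uF (Fs E F κ m) z + uF (F \ Fs E F κ m) z := hadd
            _ < uF F z / 2 + uF F z / 2 := by
                apply ENNReal.add_lt_add hlt (hcon.trans_le _)
                gcongr
            _ = uF F z := ENNReal.add_halves _
        exact lt_irrefl _ this
    _ ≤ ∫⁻ z in (Es E F κ m), uF (F \ Fs E F κ m) z := by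
        exact lintegral_mono_set sdiff_subset
    _ = ∫⁻ l in (F \ Fs E F κ m), ray ((Es E F κ m).indicator 1) l := by
        rw [dual' (measurable_one.indicator h1) (hF.diff h2), ← lintegral_indicator h1]
        apply lintegral_congr
        intro z
        by_cases hz : z ∈ Es E F κ m <;> simp [hz]
    _ ≤ ∫⁻ l in (F \ Fs E F κ m), κ := by
        refine setLIntegral_mono' (hF.diff h2) fun l hl => ?_
        by_contra hcon
        exact hl.2 ⟨hl.1, (not_le.1 hcon).le⟩
    _ = κ * volume (F \ Fs E F κ m) := by simp
    _ ≤ κ * volume F := by gcongr; exact sdiff_subset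

lemma Psi_lower {δ : ℝ} (hE : MeasurableSet E) (hF : MeasurableSet F) {β : ℝ≥0∞}
    (hβ : ∀ z ∈ E, β ≤ uF F z) (hfin : ∀ z, uF F z ≠ ∞)
    (hconc : ∀ z ∈ E, ∀ u : ℝ, volume ({t : ℝ | inc z t ∈ F} ∩ Metric.ball u δ) ≤
      uF F z / (4 * (n + 1))) (m : ℕ) :
    ∀ (j : ℕ) (z : Pt n) (H : Fin j → ℝ), j + m ≤ n + 1 → z ∈ Es E F κ m →
      (κ * (β / 4)) ^ m ≤ Psi E F δ m j z H := by
  induction m with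
  | zero =>
    intro j z H _ hz
    have : z ∈ E := hz
    simp [Psi, this]
  | succ m ih =>
    intro j z H hj hz
    obtain ⟨h1, h2⟩ := meas_Es (κ := κ) hE hF m
    have hzE := Es_sub _ hz
    set A : Set ℝ := {t | inc z t ∈ Fs E F κ m ∧ ∀ i, δ ≤ |t - H i|} with hA
    have hAm : MeasurableSet A := by
      rw [hA]
      simp only [Set.ofPred_and, Set.ofPred_forall]
      apply (meas_S h2 z).inter
      refine MeasurableSet.iInter fun i => measurableSet_le measurable_const ?_
      have : Measurable (fun q : ℝ => q - H i) := by fun_prop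
      exact continuous_abs.measurable.comp this
    have hAv : β / 4 ≤ volume A := by
      have hu := hz.2
      have hcov : uF (Fs E F κ m) z ≤ volume A + ∑ i : Fin j,
          volume ({t : ℝ | inc z t ∈ F} ∩ Metric.ball (H i) δ) := by
        have hsub : {t : ℝ | inc z t ∈ Fs E F κ m} ⊆ A ∪ ⋃ i ∈ (Finset.univ : Finset (Fin j)),
            ({t : ℝ | inc z t ∈ F} ∩ Metric.ball (H i) δ) := by
          intro t ht
          by_cases h : ∀ i, δ ≤ |t - H i|
          · exact Or.inl ⟨ht, h⟩
          · right
            push Not at h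
            obtain ⟨i, hi⟩ := h
            simp only [Finset.mem_univ, iUnion_true, mem_iUnion]
            refine ⟨i, ht.1, ?_⟩
            rwa [Metric.mem_ball, Real.dist_eq]
        refine (measure_mono hsub).trans ((measure_union_le _ _).trans ?_)
        gcongr
        exact measure_biUnion_finset_le _ _
      have hsum : ∑ i : Fin j, volume ({t : ℝ | inc z t ∈ F} ∩ Metric.ball (H i) δ) ≤
          uF F z / 4 := by
        calc _ ≤ ∑ i : Fin j, uF F z / (4 * (n + 1)) := Finset.sum_le_sum fun i _ => hconc z hzE _
          _ = j * (uF F z / (4 * (n + 1))) := by simp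
          _ ≤ (n + 1) * (uF F z / (4 * (n + 1))) := by
              gcongr; exact_mod_cast (by omega : j ≤ n + 1)
          _ = uF F z / 4 := by
              rw [mul_div_assoc', mul_comm (n + 1 : ℝ≥0∞) (uF F z)]
              exact ENNReal.mul_div_mul_right _ _ (by simp) (by finiteness)
      have h4 : uF F z / 4 + uF F z / 4 ≤ volume A + uF F z / 4 := by
        calc uF F z / 4 + uF F z / 4 = uF F z / 2 := by
              have h22 : (4 : ℝ≥0∞) = 2 * 2 := by norm_num
              rw [h22, ← ENNReal.add_halves (uF F z / 2), div_eq_mul_inv, div_eq_mul_inv, div_eq_mul_inv,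
                ENNReal.mul_inv (by simp) (by simp), mul_assoc]
          _ ≤ uF (Fs E F κ m) z := hu
          _ ≤ _ := hcov
          _ ≤ _ := by gcongr
      have h5 : uF F z / 4 ≤ volume A :=
        (ENNReal.add_le_add_iff_right (ENNReal.div_ne_top (hfin z) (by simp))).1 h4
      refine le_trans ?_ h5
      gcongr
      exact hβ z hzE
    calc (κ * (β / 4)) ^ (m+1) = (κ * (β / 4)) ^ m * κ * (β / 4) := by ring
      _ ≤ (κ * (β / 4)) ^ m * κ * volume A := by gcongr
      _ = ∫⁻ t in A, (κ * (β / 4)) ^ m * κ := by simp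
      _ ≤ ∫⁻ t in A, ∫⁻ w : ℝ, Psi E F δ m (j+1) (z + w • vv n t) (Fin.cons t H) := by
          refine setLIntegral_mono' hAm fun t ht => ?_
          have : κ ≤ ∫⁻ w : ℝ, (Es E F κ m).indicator 1 (z + w • vv n t) := by
            rw [ray_inc]; exact ht.1.2
          calc (κ * (β / 4)) ^ m * κ ≤ (κ * (β / 4)) ^ m * ∫⁻ w : ℝ, (Es E F κ m).indicator 1 (z + w • vv n t) := by
                gcongr
            _ = ∫⁻ w : ℝ, (κ * (β / 4)) ^ m * (Es E F κ m).indicator 1 (z + w • vv n t) := by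
                rw [lintegral_const_mul]
                exact (measurable_one.indicator h1).comp (by fun_prop)
            _ ≤ _ := by
                refine lintegral_mono fun w => ?_
                by_cases hw : z + w • vv n t ∈ Es E F κ m
                · simp only [hw, indicator_of_mem, Pi.one_apply, mul_one]
                  exact ih (j+1) _ _ (by omega) hw
                · simp [hw]
      _ ≤ Psi E F δ (m+1) j z H := by
          simp only [Psi]
          rw [← lintegral_indicator hAm]
          refine lintegral_mono fun t => ?_
          by_cases ht : t ∈ A
          · have h' : t ∈ {t | inc z t ∈ F ∧ ∀ i, δ ≤ |t - H i|} := ⟨ht.1.1, ht.2⟩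
            simp only [indicator_of_mem ht, indicator_of_mem h']
            simp
          · simp [ht]

end

lemma uF_le {n : ℕ} {F : Set (Pt n)} {T : Set ℝ} (hFT : ∀ p ∈ F, p.1 ∈ T) (z : Pt n) :
    uF F z ≤ volume T := measure_mono fun _ ht => hFT _ ht

lemma path_lemma {n : ℕ} (hn : 1 ≤ n) {δ : ℝ} (hδ : 0 < δ) {E F F' : Set (Pt n)}
    (hE : MeasurableSet E) (hF : MeasurableSet F) (hF' : MeasurableSet F')
    (hEf : volume E ≠ ∞) (hFf : volume F ≠ ∞)
    {T : Set ℝ} (hT : MeasurableSet T) (hFT : ∀ p ∈ F, p.1 ∈ T) {τ : ℝ≥0∞}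
    (hτ : volume T ≤ τ) (hτf : τ ≠ ∞) {β β' : ℝ≥0∞} (hβ0 : β ≠ 0)
    (hβ : ∀ z ∈ E, β ≤ uF F z) (hβ' : ∀ z ∈ E, β' ≤ uF F' z)
    (hconc : ∀ z ∈ E, ∀ u : ℝ, volume ({t : ℝ | inc z t ∈ F} ∩ Metric.ball u δ) ≤
      uF F z / (4 * (n + 1))) :
    ENNReal.ofReal δ ^ NN n * (β ^ (2 * n) * volume E ^ n * β') ≤
      2 * (16 * n) ^ n * (volume F' * volume F ^ n * τ ^ n) := by
  by_cases hE0 : volume E = 0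
  · rw [hE0, zero_pow (by omega)]; simp
  have hu : ∀ z, uF F z ≤ τ := fun z => (uF_le hFT z).trans hτ
  have hβE : β * volume E ≠ 0 := mul_ne_zero hβ0 hE0
  obtain ⟨z0, hz0⟩ : E.Nonempty := by
    by_contra h
    rw [not_nonempty_iff_eq_empty] at h
    simp [h] at hE0
  have hβf : β ≠ ∞ := ne_top_of_le_ne_top hτf ((hβ z0 hz0).trans (hu z0))
  have hind : Measurable (E.indicator (1 : Pt n → ℝ≥0∞)) := measurable_one.indicator hE
  have hF0 : volume F ≠ 0 := by
    intro h0
    apply hβE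
    have : β * volume E ≤ ∫⁻ l in F, ray (E.indicator 1) l := by
      rw [dual' hind hF]
      calc β * volume E = ∫⁻ z in E, β := by simp
        _ ≤ ∫⁻ z in E, uF F z := setLIntegral_mono' hE hβ
        _ = _ := by
          rw [← lintegral_indicator hE]
          apply lintegral_congr
          intro z
          by_cases hz : z ∈ E <;> simp [hz]
    rw [setLIntegral_measure_zero _ _ h0] at this
    exact le_antisymm this bot_le
  have hn0 : (n : ℝ≥0∞) ≠ 0 := by exact_mod_cast (by omega : n ≠ 0)
  set κ : ℝ≥0∞ := β * volume E / (4 * n * volume F) with hκ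
  have hκF : 4 * n * κ * volume F = β * volume E := by
    rw [hκ, mul_comm (4 * n : ℝ≥0∞), mul_assoc]
    apply ENNReal.div_mul_cancel
    · exact mul_ne_zero (mul_ne_zero (by simp) hn0) hF0
    · finiteness
  have hloss : ∀ m, 2 * n * volume (Es E F κ m \ Es E F κ (m+1)) ≤ volume E := by
    intro m
    have h := Es_loss (κ := κ) hE hF hβ m
    have : β * (2 * n * volume (Es E F κ m \ Es E F κ (m+1))) ≤ β * volume E := by
      rw [← hκF]
      calc β * (2 * n * volume (Es E F κ m \ Es E F κ (m+1)))
          = 4 * n * (β / 2 * volume (Es E F κ m \ Es E F κ (m+1))) := by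
            have h2 : (4 : ℝ≥0∞) * (β / 2) = 2 * β := by
              rw [show (4 : ℝ≥0∞) = 2 * 2 by norm_num, mul_assoc, ENNReal.mul_div_cancel (by simp) (by simp)]
            calc _ = (2 * β) * n * volume (Es E F κ m \ Es E F κ (m+1)) := by ring
              _ = _ := by rw [← h2]; ring
        _ ≤ 4 * n * (κ * volume F) := by gcongr
        _ = _ := by ring
    exact (ENNReal.mul_le_mul_iff_right hβ0 hβf).1 this
  have hacc : ∀ m, 2 * n * volume E ≤ 2 * n * volume (Es E F κ m) + m * volume E := by
    intro m
    induction m with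
    | zero => simp [Es]
    | succ m ih =>
      calc 2 * n * volume E ≤ 2 * n * volume (Es E F κ m) + m * volume E := ih
        _ ≤ 2 * n * (volume (Es E F κ (m+1)) + volume (Es E F κ m \ Es E F κ (m+1))) + m * volume E := by
            gcongr
            refine le_trans (measure_mono ?_) (measure_union_le _ _)
            intro z hz
            by_cases h : z ∈ Es E F κ (m+1)
            · exact Or.inl h
            · exact Or.inr ⟨hz, h⟩
        _ = 2 * n * volume (Es E F κ (m+1)) + 2 * n * volume (Es E F κ m \ Es E F κ (m+1)) + m * volume E := by ring
        _ ≤ 2 * n * volume (Es E F κ (m+1)) + volume E + m * volume E := by gcongr; exact hloss m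
        _ = _ := by push_cast; ring
  have hhalf : volume E ≤ 2 * volume (Es E F κ n) := by
    have h := hacc n
    have h' : n * volume E + n * volume E ≤ n * (2 * volume (Es E F κ n)) + n * volume E := by
      calc _ = 2 * n * volume E := by ring
        _ ≤ _ := h
        _ = _ := by ring
    have h'' := (ENNReal.add_le_add_iff_right (by finiteness)).1 h'
    exact (ENNReal.mul_le_mul_iff_right hn0 (by finiteness)).1 h''
  obtain ⟨hEn, -⟩ := meas_Es (κ := κ) hE hF n
  have hup : ∀ l : Pt n, ENNReal.ofReal δ ^ NN n * ((κ * (β / 4)) ^ n * ray ((Es E F κ n).indicator 1) l)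
      ≤ τ ^ n * volume E := by
    intro l
    have h1 := upper hδ hE hF hT hFT hτ n 1 (0, l.2) (fun _ => l.1) (by omega)
      (fun i k h => absurd (Subsingleton.elim i k) h)
    refine le_trans ?_ h1
    gcongr
    have hP := measurable_Psi δ hE hF n 1
    have hv := measurable_vv n
    have hm := measurable_mom n
    have e : ∫⁻ w : Fin 1 → ℝ, Psi E F δ n 1 ((0, l.2) + ∑ i, w i • vv n l.1) (fun _ => l.1) =
        ∫⁻ s : ℝ, Psi E F δ n 1 (s, l.2 + s • mom n l.1) (fun _ => l.1) := by
      have hmp := volume_preserving_funUnique (Fin 1) ℝ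
      rw [← hmp.lintegral_comp]
      · apply lintegral_congr; intro w
        congr 1
        ext i
        · simp [vv, MeasurableEquiv.funUnique]
        · simp [vv, MeasurableEquiv.funUnique]
      · refine hP.comp (f := fun s : ℝ => ((s, l.2 + s • mom n l.1), (fun _ => l.1))) ?_
        fun_prop
    rw [e]
    unfold ray
    rw [← lintegral_const_mul]
    · refine lintegral_mono fun s => ?_
      by_cases hs : (s, l.2 + s • mom n l.1) ∈ Es E F κ n
      · simp only [hs, indicator_of_mem, Pi.one_apply, mul_one]
        exact Psi_lower hE hF hβ (fun z => ne_top_of_le_ne_top hτf (hu z)) hconc n 1 _ _ (by omega) hs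
      · simp [hs]
    · exact (measurable_one.indicator hEn).comp (by fun_prop)
  have hmain : ENNReal.ofReal δ ^ NN n * ((κ * (β / 4)) ^ n * (β' * volume (Es E F κ n))) ≤
      volume F' * (τ ^ n * volume E) := by
    have hmr := measurable_ray (measurable_one.indicator hEn : Measurable ((Es E F κ n).indicator (1 : Pt n → ℝ≥0∞)))
    calc _ ≤ ENNReal.ofReal δ ^ NN n * ((κ * (β / 4)) ^ n * ∫⁻ l in F', ray ((Es E F κ n).indicator 1) l) := by
          gcongr
          rw [dual' (measurable_one.indicator hEn) hF']
          calc β' * volume (Es E F κ n) = ∫⁻ z in (Es E F κ n), β' := by simp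
            _ ≤ ∫⁻ z in (Es E F κ n), uF F' z := setLIntegral_mono' hEn fun z hz => hβ' z (Es_sub n hz)
            _ = _ := by
              rw [← lintegral_indicator hEn]
              apply lintegral_congr
              intro z
              by_cases hz : z ∈ Es E F κ n <;> simp [hz]
      _ = ∫⁻ l in F', ENNReal.ofReal δ ^ NN n * ((κ * (β / 4)) ^ n * ray ((Es E F κ n).indicator 1) l) := by
          rw [lintegral_const_mul _ (hmr.const_mul _), lintegral_const_mul _ hmr]
      _ ≤ ∫⁻ l in F', τ ^ n * volume E := lintegral_mono fun l => hup l
      _ = _ := by simp [mul_comm]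
  have hm2 : (ENNReal.ofReal δ ^ NN n * ((κ * (β / 4)) ^ n * β')) * volume E ≤
      (2 * volume F' * τ ^ n) * volume E := by
    calc _ ≤ (ENNReal.ofReal δ ^ NN n * ((κ * (β / 4)) ^ n * β')) * (2 * volume (Es E F κ n)) := by gcongr
      _ = 2 * (ENNReal.ofReal δ ^ NN n * ((κ * (β / 4)) ^ n * (β' * volume (Es E F κ n)))) := by ring
      _ ≤ 2 * (volume F' * (τ ^ n * volume E)) := by gcongr
      _ = _ := by ring
  have hm3 := (ENNReal.mul_le_mul_iff_left hE0 hEf).1 hm2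
  have hβ4 : β = 4 * (β / 4) := (ENNReal.mul_div_cancel (by simp) (by simp)).symm
  calc ENNReal.ofReal δ ^ NN n * (β ^ (2 * n) * volume E ^ n * β')
      = ENNReal.ofReal δ ^ NN n * ((β * volume E) ^ n * β ^ n * β') := by ring
    _ = ENNReal.ofReal δ ^ NN n * ((4 * n * κ * volume F) ^ n * (4 * (β / 4)) ^ n * β') := by rw [hκF, ← hβ4]
    _ = (16 * n) ^ n * volume F ^ n * (ENNReal.ofReal δ ^ NN n * ((κ * (β / 4)) ^ n * β')) := by
        have h16 : (16 : ℝ≥0∞) ^ n = 4 ^ n * 4 ^ n := by rw [← mul_pow]; norm_num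
        rw [mul_pow 16, h16]; ring
    _ ≤ (16 * n) ^ n * volume F ^ n * (2 * volume F' * τ ^ n) := by gcongr
    _ = _ := by ring

end LX

namespace LX

/-- distribution function of a set -/
def pos (T : Set ℝ) (t : ℝ) : ℝ := (volume (T ∩ Iic t)).toReal

section
variable {T : Set ℝ}

lemma pos_fin (hTf : volume T ≠ ∞) (t : ℝ) : volume (T ∩ Iic t) ≠ ∞ :=
  ne_top_of_le_ne_top hTf (measure_mono inter_subset_left)

lemma pos_mono (hTf : volume T ≠ ∞) : Monotone (pos T) := by
  intro s t h
  apply ENNReal.toReal_mono (pos_fin hTf t)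
  exact measure_mono (inter_subset_inter_right _ (Iic_subset_Iic.2 h))

lemma pos_lip (hTf : volume T ≠ ∞) {s t : ℝ} (h : s ≤ t) : pos T t ≤ pos T s + (t - s) := by
  have h1 : volume (T ∩ Iic t) ≤ volume (T ∩ Iic s) + ENNReal.ofReal (t - s) := by
    rw [← Real.volume_Ioc]
    refine le_trans (measure_mono ?_) (measure_union_le _ _)
    intro x hx
    by_cases hxs : x ≤ s
    · exact Or.inl ⟨hx.1, hxs⟩
    · exact Or.inr ⟨not_le.1 hxs, hx.2⟩
  have h2 := ENNReal.toReal_mono (ENNReal.add_ne_top.2 ⟨pos_fin hTf s, ENNReal.ofReal_ne_top⟩) h1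
  rw [ENNReal.toReal_add (pos_fin hTf s) (by finiteness), ENNReal.toReal_ofReal (by linarith)] at h2
  exact h2

lemma pos_abs (hTf : volume T ≠ ∞) (s t : ℝ) : |pos T t - pos T s| ≤ |t - s| := by
  rcases le_total s t with h | h
  · rw [abs_of_nonneg (sub_nonneg.2 (pos_mono hTf h)), abs_of_nonneg (sub_nonneg.2 h)]
    linarith [pos_lip hTf h]
  · rw [abs_of_nonpos (sub_nonpos.2 (pos_mono hTf h)), abs_of_nonpos (sub_nonpos.2 h)]
    linarith [pos_lip hTf h]

/-- a measurable subset of `T` on which `pos` varies by at most `h` has measure at most `h` -/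
lemma pos_meas (hTf : volume T ≠ ∞) {A : Set ℝ} (hA : MeasurableSet A) (hAT : A ⊆ T) {h : ℝ}
    (hh : ∀ s ∈ A, ∀ t ∈ A, pos T t - pos T s ≤ h) : volume A ≤ ENNReal.ofReal h := by
  rw [hA.measure_eq_iSup_isCompact]
  refine iSup_le fun K => iSup_le fun hKA => iSup_le fun hK => ?_
  rcases K.eq_empty_or_nonempty with rfl | hne
  · simp
  have hs := hKA (hK.sInf_mem hne)
  have ht := hKA (hK.sSup_mem hne)
  have hst : sInf K ≤ sSup K := Real.sInf_le_sSup K hK.bddBelow hK.bddAbove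
  have h1 := hh _ hs _ ht
  have h2 : volume (T ∩ Iic (sInf K)) + volume K ≤ volume (T ∩ Iic (sSup K)) := by
    have e : volume K ≤ volume (K \ {sInf K}) := by
      rw [measure_sdiff_null (by simp)]
    refine le_trans (add_le_add_right e _) ?_
    rw [← measure_union]
    · apply measure_mono
      rintro x (hx | hx)
      · exact ⟨hx.1, hx.2.trans hst⟩
      · exact ⟨hAT (hKA hx.1), le_csSup hK.bddAbove hx.1⟩
    · rw [Set.disjoint_left]
      intro x hx hx'
      apply hx'.2
      exact le_antisymm hx.2 (csInf_le hK.bddBelow hx'.1)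
    · exact hK.measurableSet.diff (measurableSet_singleton _)
  have hKf : volume K ≠ ∞ := hK.measure_lt_top.ne
  have h3 := ENNReal.toReal_mono (pos_fin hTf _) h2
  rw [ENNReal.toReal_add (pos_fin hTf _) hKf] at h3
  rw [← ENNReal.ofReal_toReal hKf]
  apply ENNReal.ofReal_le_ofReal
  unfold pos at h1
  linarith

end

/-- the pieces of generation with scale `h` -/
def pc (T : Set ℝ) (h : ℝ) (a : ℤ) : Set ℝ := {t | t ∈ T ∧ ⌊pos T t / h⌋ = a}

section
variable {T : Set ℝ}

lemma pc_sub (h : ℝ) (a : ℤ) : pc T h a ⊆ T := fun _ ht => ht.1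

lemma pc_meas (hTf : volume T ≠ ∞) (hT : MeasurableSet T) (h : ℝ) (a : ℤ) : MeasurableSet (pc T h a) := by
  have hm : Measurable (pos T) := (pos_mono hTf).measurable
  have : Measurable (fun t => ⌊pos T t / h⌋) := Int.measurable_floor.comp (hm.div_const h)
  exact hT.inter (this (measurableSet_singleton a))

lemma pc_vol (hTf : volume T ≠ ∞) (hT : MeasurableSet T) {h : ℝ} (hh : 0 < h) (a : ℤ) :
    volume (pc T h a) ≤ ENNReal.ofReal h := by
  refine pos_meas hTf (pc_meas hTf hT h a) (pc_sub h a) ?_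
  intro s hs t ht
  have h1 := Int.floor_le (pos T s / h)
  have h2 := Int.lt_floor_add_one (pos T t / h)
  rw [hs.2] at h1
  rw [ht.2] at h2
  rw [le_div_iff₀ hh] at h1
  rw [div_lt_iff₀ hh] at h2
  linarith

lemma pc_zero (hTf : volume T ≠ ∞) {h : ℝ} (hh : volume T < ENNReal.ofReal h) : pc T h 0 = T := by
  apply subset_antisymm (pc_sub _ _)
  intro t ht
  have h0 : 0 < h := by
    by_contra hc
    rw [ENNReal.ofReal_of_nonpos (not_lt.1 hc)] at hh
    simp at hh
  refine ⟨ht, ?_⟩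
  rw [Int.floor_eq_zero_iff]
  have h1 : pos T t < h := by
    unfold pos
    refine (ENNReal.lt_ofReal_iff_toReal_lt (pos_fin hTf t)).1 ?_
    exact (measure_mono inter_subset_left).trans_lt hh
  exact ⟨div_nonneg ENNReal.toReal_nonneg h0.le, (div_lt_one h0).2 h1⟩

lemma pc_ball (hTf : volume T ≠ ∞) {h : ℝ} (hh : 0 < h) (u : ℝ) :
    ∃ b : ℤ, T ∩ Metric.ball u h ⊆ pc T h (b-1) ∪ pc T h b ∪ pc T h (b+1) := by
  refine ⟨⌊pos T u / h⌋, ?_⟩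
  rintro t ⟨htT, htu⟩
  rw [Metric.mem_ball, Real.dist_eq] at htu
  have h1 := (pos_abs hTf u t).trans_lt htu
  have h2 : |pos T t / h - pos T u / h| < 1 := by
    rw [← sub_div, abs_div, abs_of_pos hh, div_lt_one hh]; exact h1
  rw [abs_lt] at h2
  set x := pos T u / h
  set y := pos T t / h with hy
  have a1 := Int.floor_le x
  have a2 := Int.lt_floor_add_one x
  have a3 := Int.floor_le y
  have a4 := Int.lt_floor_add_one y
  have c1 : ⌊y⌋ < ⌊x⌋ + 2 := by
    have : (⌊y⌋ : ℝ) < (⌊x⌋ : ℝ) + 2 := by linarith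
    exact_mod_cast this
  have c2 : ⌊x⌋ < ⌊y⌋ + 2 := by
    have : (⌊x⌋ : ℝ) < (⌊y⌋ : ℝ) + 2 := by linarith
    exact_mod_cast this
  have : ⌊y⌋ = ⌊x⌋ - 1 ∨ ⌊y⌋ = ⌊x⌋ ∨ ⌊y⌋ = ⌊x⌋ + 1 := by omega
  rcases this with h | h | h
  · exact Or.inl (Or.inl ⟨htT, h⟩)
  · exact Or.inl (Or.inr ⟨htT, h⟩)
  · exact Or.inr ⟨htT, h⟩

lemma pc_disj (h : ℝ) : Pairwise (Function.onFun Disjoint (pc T h)) := by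
  intro a b hab
  rw [Function.onFun, Set.disjoint_left]
  intro t ht ht'
  exact hab (ht.2.symm.trans ht'.2)

/-- descent: selecting a good piece -/
lemma descent (hTf : volume T ≠ ∞) (hT : MeasurableSet T) {τ : ℝ} (hτ : volume T < ENNReal.ofReal τ)
    {S : Set ℝ} (hS : S ⊆ T) {β : ℝ} (hβ : 0 < β) (hSβ : ENNReal.ofReal β ≤ volume S)
    {ϱ K : ℝ} (hϱ : 0 < ϱ) (hK : 0 < K) (hϱK : 1 < ϱ * K) :
    ∃ (j : ℕ) (a : ℤ), ENNReal.ofReal (ϱ ^ j * β) ≤ volume (S ∩ pc T (τ / K ^ j) a) ∧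
      ∀ b : ℤ, volume (S ∩ pc T (τ / K ^ j) a ∩ pc T (τ / K ^ (j+1)) b) ≤
        ENNReal.ofReal ϱ * volume (S ∩ pc T (τ / K ^ j) a) := by
  by_contra! hcon
  have h0 : 0 < τ := by
    by_contra hc
    rw [ENNReal.ofReal_of_nonpos (not_lt.1 hc)] at hτ
    simp at hτ
  have ind : ∀ j : ℕ, ∃ a : ℤ, ENNReal.ofReal (ϱ ^ j * β) ≤ volume (S ∩ pc T (τ / K ^ j) a) := by
    intro j
    induction j with
    | zero =>
      refine ⟨0, ?_⟩
      simp only [pow_zero, div_one, one_mul]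
      rw [pc_zero hTf hτ, inter_eq_left.2 hS]
      exact hSβ
    | succ j ih =>
      obtain ⟨a, ha⟩ := ih
      obtain ⟨b, hb⟩ := hcon j a ha
      refine ⟨b, ?_⟩
      calc ENNReal.ofReal (ϱ ^ (j+1) * β) = ENNReal.ofReal ϱ * ENNReal.ofReal (ϱ ^ j * β) := by
            rw [← ENNReal.ofReal_mul hϱ.le]; congr 1; ring
        _ ≤ ENNReal.ofReal ϱ * volume (S ∩ pc T (τ / K ^ j) a) := by gcongr
        _ ≤ _ := hb.le
        _ ≤ _ := measure_mono (by
            rintro x ⟨⟨h1, _⟩, h2⟩; exact ⟨h1, h2⟩)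
  obtain ⟨j, hj⟩ := pow_unbounded_of_one_lt (τ / β) hϱK
  obtain ⟨a, ha⟩ := ind j
  have h1 : ENNReal.ofReal (ϱ ^ j * β) ≤ ENNReal.ofReal (τ / K ^ j) :=
    ha.trans ((measure_mono inter_subset_right).trans (pc_vol hTf hT (by positivity) a))
  have h2 := (ENNReal.ofReal_le_ofReal_iff (by positivity)).1 h1
  rw [le_div_iff₀ (by positivity)] at h2
  rw [div_lt_iff₀ hβ, mul_pow] at hj
  nlinarith

end

end LX

namespace LX

lemma vol_slices {n : ℕ} {F : Set (Pt n)} (hF : MeasurableSet F) {T : Set ℝ} (hT : MeasurableSet T)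
    (hFT : ∀ p ∈ F, p.1 ∈ T) {μ : ℝ≥0∞} (hs : ∀ t, volume {y : Fin n → ℝ | (t, y) ∈ F} ≤ μ) :
    volume F ≤ μ * volume T := by
  rw [Measure.volume_eq_prod, Measure.prod_apply hF]
  calc ∫⁻ t, volume (Prod.mk t ⁻¹' F) ≤ ∫⁻ t, T.indicator (fun _ => μ) t := by
        refine lintegral_mono fun t => ?_
        by_cases ht : t ∈ T
        · simp only [ht, indicator_of_mem]; exact hs t
        · have : Prod.mk t ⁻¹' F = ∅ := by
            ext y; simp only [mem_preimage, mem_empty_iff_false, iff_false]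
            exact fun h => ht (hFT _ h)
          simp [this]
    _ = _ := by rw [lintegral_indicator hT]; simp

lemma rw_piece {n : ℕ} (hn : 2 ≤ n) {Q η : ℝ} (hη1 : η ≤ 1 / n) (hQ : 2 + 1 / n ≤ Q)
    {K : ℝ} (hK : 0 < K) :
    ∃ C : ℝ, 0 < C ∧ ∀ (E F : Set (Pt n)) (T : Set ℝ) (τ μ β : ℝ),
      MeasurableSet E → MeasurableSet F → MeasurableSet T → volume E ≠ ∞ → 
      (∀ p ∈ F, p.1 ∈ T) → 0 < τ → 0 < μ → 0 < β → volume T ≤ ENNReal.ofReal τ →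
      volume F ≤ ENNReal.ofReal (μ * τ) → (∀ z ∈ E, ENNReal.ofReal β ≤ uF F z) →
      (∀ z ∈ E, ∀ u : ℝ, volume ({t : ℝ | inc z t ∈ F} ∩ Metric.ball u (τ / K)) ≤
        uF F z / (4 * (n + 1))) →
      (volume E).toReal * β ^ Q ≤
        C * (volume F).toReal ^ (1 + η) * μ ^ (1 / n - η) * τ ^ (Q - 1 - (n + 1) / 2 - η) := by
  have hn0 : (0:ℝ) < n := by exact_mod_cast (by omega : 0 < n)
  set C0 : ℝ := 2 * (16 * n) ^ n with hC0
  have hC0p : 0 < C0 := by positivity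
  refine ⟨Real.exp ((1 / n) * (Real.log C0 + NN n * Real.log K)), Real.exp_pos _, ?_⟩
  intro E F T τ μ β hE hF hT hEf hFT hτ hμ hβ hTτ hFμ hu hconc
  have hFf : volume F ≠ ∞ := ne_top_of_le_ne_top (by finiteness) hFμ
  have hpl := path_lemma (by omega) (div_pos hτ hK) hE hF hF hEf hFf hT hFT hTτ (by finiteness)
    (by simpa using hβ) hu hu hconc
  set e := (volume E).toReal with he
  set φ := (volume F).toReal with hφ
  have hreal : (τ / K) ^ NN n * (β ^ (2 * n) * e ^ n * β) ≤ C0 * (φ * φ ^ n * τ ^ n) := by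
    have := ENNReal.toReal_mono (by finiteness) hpl
    simpa [ENNReal.toReal_mul, ENNReal.toReal_pow, ENNReal.toReal_ofReal, hβ.le, hτ.le, hK.le,
      (div_pos hτ hK).le, hC0] using this
  clear_value C0
  have he0 : 0 ≤ e := ENNReal.toReal_nonneg
  have hφ0 : 0 ≤ φ := ENNReal.toReal_nonneg
  rcases he0.eq_or_lt with he1 | hepos
  · rw [← he1]; simp only [zero_mul]; positivity
  have hφpos : 0 < φ := by
    rcases hφ0.eq_or_lt with h | h
    · rw [← h] at hreal
      have : 0 < (τ / K) ^ NN n * (β ^ (2 * n) * e ^ n * β) := by positivity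
      simp at hreal
      linarith
    · exact h
  have hφμ : φ ≤ μ * τ := by
    have := ENNReal.toReal_mono (by finiteness) hFμ
    rwa [ENNReal.toReal_ofReal (by positivity)] at this
  have hβτ : β ≤ τ := by
    obtain ⟨z, hz⟩ : E.Nonempty := by
      by_contra h
      rw [not_nonempty_iff_eq_empty] at h
      simp [he, h] at hepos
    have := (hu z hz).trans ((uF_le hFT z).trans hTτ)
    exact (ENNReal.ofReal_le_ofReal_iff hτ.le).1 this
  have l1 := Real.log_le_log (by positivity) hreal
  have l2 := Real.log_le_log hφpos hφμ
  have l3 := Real.log_le_log hβ hβτ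
  rw [Real.log_mul (by positivity) (by positivity), Real.log_mul (by positivity) (by positivity),
    Real.log_mul (by positivity) (by positivity), Real.log_mul (by positivity) (by positivity),
    Real.log_mul (by positivity) (by positivity), Real.log_mul (by positivity) (by positivity),
    Real.log_pow, Real.log_pow, Real.log_pow, Real.log_pow, Real.log_pow,
    Real.log_div (by positivity) (by positivity)] at l1
  rw [Real.log_mul (by positivity) (by positivity)] at l2
  rw [← Real.log_le_log_iff (by positivity) (by positivity),
    Real.log_mul (by positivity) (by positivity), Real.log_mul (by positivity) (by positivity),
    Real.log_mul (by positivity) (by positivity), Real.log_mul (by positivity) (by positivity),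
    Real.log_rpow hβ, Real.log_rpow hφpos, Real.log_rpow hμ, Real.log_rpow hτ, Real.log_exp]
  generalize Real.log e = le at *
  generalize Real.log β = lb at *
  generalize Real.log τ = lt at *
  generalize Real.log φ = lf at *
  generalize Real.log μ = lm at *
  generalize Real.log K = lk at *
  generalize Real.log C0 = lc at *
  have l2' := mul_le_mul_of_nonneg_left l2 (sub_nonneg.2 hη1)
  have l3' := mul_le_mul_of_nonneg_left l3 (sub_nonneg.2 hQ)
  have l1' := mul_le_mul_of_nonneg_left l1 (by positivity : (0:ℝ) ≤ 1 / n)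
  rw [NN_eq] at *
  push_cast at l1'
  have e1 : 1 / (n:ℝ) * (n * (n + 1) / 2 * (lt - lk) + (2 * n * lb + n * le + lb)) =
     (n + 1) / 2 * (lt - lk) + 2 * lb + le + 1 / n * lb := by field_simp; ring
  have e2 : 1 / (n:ℝ) * (lc + (lf + n * lf + n * lt)) = 1 / n * lc + 1 / n * lf + lf + lt := by
    field_simp; ring
  have e3 : 1 / (n:ℝ) * (lc + n * (n + 1) / 2 * lk) = 1 / n * lc + (n + 1) / 2 * lk := by
    field_simp
  rw [e1, e2] at l1'
  rw [e3]
  nlinarith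

/-- A block of lines. -/
structure Blk (n : ℕ) where
  F : Set (Pt n)
  T : Set ℝ
  τ : ℝ
  μ : ℝ
  hF : MeasurableSet F
  hT : MeasurableSet T
  hFT : ∀ p ∈ F, p.1 ∈ T
  τ_pos : 0 < τ
  μ_pos : 0 < μ
  hTτ : volume T < ENNReal.ofReal τ
  hsl : ∀ t, volume {y : Fin n → ℝ | (t, y) ∈ F} ≤ ENNReal.ofReal μ

namespace Blk
variable {n : ℕ} (B : Blk n)

lemma volF : volume B.F ≤ ENNReal.ofReal (B.μ * B.τ) := by
  rw [ENNReal.ofReal_mul B.μ_pos.le]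
  refine (vol_slices B.hF B.hT B.hFT B.hsl).trans ?_
  gcongr
  exact B.hTτ.le

lemma volF_ne : volume B.F ≠ ∞ := ne_top_of_le_ne_top (by finiteness) B.volF

lemma volT_ne : volume B.T ≠ ∞ := ne_top_of_le_ne_top (by finiteness) B.hTτ.le

end Blk

theorem RW {n : ℕ} (hn : 2 ≤ n) {Q η : ℝ} (hη0 : 0 ≤ η) (hη1 : η ≤ 1 / n)
    (hQ : (n + 3) / 2 + η < Q) : ∃ C : ℝ, 0 < C ∧ ∀ (B : Blk n) (β : ℝ) (E : Set (Pt n)),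
      0 < β → MeasurableSet E → volume E ≠ ∞ → (∀ z ∈ E, ENNReal.ofReal β ≤ uF B.F z) →
      (volume E).toReal * β ^ Q ≤ C * ((volume B.F).toReal ^ (1 + η) *
        B.μ ^ (1 / n - η) * B.τ ^ (Q - 1 - (n + 1) / 2 - η)) := by
  have hn2 : (2:ℝ) ≤ n := by exact_mod_cast hn
  set Q' := Q - 1 - (n + 1) / 2 - η with hQ'
  have hQ'p : 0 < Q' := by rw [hQ']; linarith
  have hQ2 : 2 + 1 / (n:ℝ) ≤ Q := by
    have : 2 + 1 / (n:ℝ) ≤ (n + 3) / 2 := by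
      rw [← sub_nonneg]
      have : ((n:ℝ) + 3) / 2 - (2 + 1 / n) = (n - 2) * (n + 1) / (2 * n) := by
        field_simp; ring
      rw [this]
      apply div_nonneg _ (by linarith)
      apply mul_nonneg <;> linarith
    linarith
  set ϱ : ℝ := 1 / (12 * (n + 1)) with hϱ
  have hϱp : 0 < ϱ := by positivity
  set K : ℝ := max (2 / ϱ) ((2 * ϱ ^ (-Q)) ^ (1 / Q')) with hK
  have hKp : 0 < K := lt_of_lt_of_le (by positivity) (le_max_left _ _)
  have hϱK : 1 < ϱ * K := by
    have : 2 / ϱ ≤ K := le_max_left _ _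
    rw [div_le_iff₀ hϱp] at this
    linarith
  have hratio : 2 * ϱ ^ (-Q) ≤ K ^ Q' := by
    calc 2 * ϱ ^ (-Q) = ((2 * ϱ ^ (-Q)) ^ (1 / Q')) ^ Q' := by
          rw [← Real.rpow_mul (by positivity)]; simp [hQ'p.ne']
      _ ≤ K ^ Q' := by
          apply Real.rpow_le_rpow (by positivity) (le_max_right _ _) hQ'p.le
  obtain ⟨C1, hC1, hpiece⟩ := rw_piece hn hη1 hQ2 hKp
  refine ⟨2 * C1, by positivity, ?_⟩
  intro B β E hβ hE hEf hu
  have hTf := B.volT_ne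
  set φ := (volume B.F).toReal with hφ
  have hφ0 : 0 ≤ φ := ENNReal.toReal_nonneg
  have hτ := B.τ_pos
  have hμ := B.μ_pos
  let P : ℕ → ℤ → Set ℝ := fun j a => pc B.T (B.τ / K ^ j) a
  have hPm : ∀ j a, MeasurableSet (P j a) := fun j a => pc_meas hTf B.hT _ _
  let Fj : ℕ → ℤ → Set (Pt n) := fun j a => {p | p ∈ B.F ∧ p.1 ∈ P j a}
  have hFjm : ∀ j a, MeasurableSet (Fj j a) := fun j a => B.hF.inter (measurable_fst (hPm j a))
  let Fb : ℕ → ℤ → ℤ → Set (Pt n) := fun j a b => {p | p ∈ Fj j a ∧ p.1 ∈ P (j+1) b}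
  have hFbm : ∀ j a b, MeasurableSet (Fb j a b) :=
    fun j a b => (hFjm j a).inter (measurable_fst (hPm (j+1) b))
  let Ej : ℕ → ℤ → Set (Pt n) := fun j a => E ∩ ({z | ENNReal.ofReal (ϱ ^ j * β) ≤ uF (Fj j a) z} ∩
    ⋂ b : ℤ, {z | uF (Fb j a b) z ≤ ENNReal.ofReal ϱ * uF (Fj j a) z})
  have hEjm : ∀ j a, MeasurableSet (Ej j a) := by
    intro j a
    refine hE.inter ((measurableSet_le measurable_const (measurable_uF (hFjm j a))).inter ?_)
    exact MeasurableSet.iInter fun b => measurableSet_le (measurable_uF (hFbm j a b))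
      ((measurable_uF (hFjm j a)).const_mul _)
  have hcover : E ⊆ ⋃ j : ℕ, ⋃ a : ℤ, Ej j a := by
    intro z hz
    have hS : {t | inc z t ∈ B.F} ⊆ B.T := fun t ht => B.hFT _ ht
    obtain ⟨j, a, h1, h2⟩ := descent hTf B.hT B.hTτ hS hβ (hu z hz) hϱp hKp hϱK
    simp only [mem_iUnion]
    refine ⟨j, a, hz, ?_, ?_⟩
    · exact h1
    · rw [mem_iInter]; exact h2
  set D : ℝ := C1 * β ^ (-Q) * φ ^ η * B.μ ^ (1 / n - η) * B.τ ^ Q' with hD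
  have hD0 : 0 ≤ D := by positivity
  have hpc : ∀ j a, volume (Ej j a) ≤ ENNReal.ofReal (D * (1/2) ^ j) * volume (Fj j a) := by
    intro j a
    have hτj : 0 < B.τ / K ^ j := by positivity
    have hFle : volume (Fj j a) ≤ volume B.F := measure_mono fun p hp => hp.1
    have hFjf : volume (Fj j a) ≠ ∞ := ne_top_of_le_ne_top B.volF_ne hFle
    have hEjf : volume (Ej j a) ≠ ∞ := ne_top_of_le_ne_top hEf (measure_mono inter_subset_left)
    have h := hpiece (Ej j a) (Fj j a) (P j a) (B.τ / K ^ j) B.μ (ϱ ^ j * β) (hEjm j a) (hFjm j a)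
      (hPm j a) hEjf (fun p hp => hp.2) hτj hμ (by positivity)
      (pc_vol hTf B.hT hτj a)
      (by
        rw [ENNReal.ofReal_mul hμ.le]
        refine (vol_slices (hFjm j a) (hPm j a) (fun p hp => hp.2) (μ := ENNReal.ofReal B.μ) ?_).trans ?_
        · intro t
          exact (measure_mono fun y hy => hy.1).trans (B.hsl t)
        · gcongr
          exact pc_vol hTf B.hT hτj a)
      (fun z hz => hz.2.1)
      (by
        intro z hz u
        have e1 : B.τ / K ^ j / K = B.τ / K ^ (j+1) := by rw [pow_succ]; field_simp
        rw [e1]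
        obtain ⟨b, hb⟩ := pc_ball hTf (by positivity : 0 < B.τ / K ^ (j+1)) u
        have hz2 : ∀ b, uF (Fb j a b) z ≤ ENNReal.ofReal ϱ * uF (Fj j a) z := by
          have := hz.2.2
          rw [mem_iInter] at this
          exact this
        calc volume ({t | inc z t ∈ Fj j a} ∩ Metric.ball u (B.τ / K ^ (j + 1)))
            ≤ volume ({t | inc z t ∈ Fb j a (b-1)} ∪ {t | inc z t ∈ Fb j a b} ∪ {t | inc z t ∈ Fb j a (b+1)}) := by
              apply measure_mono
              rintro t ⟨ht1, ht2⟩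
              rcases hb ⟨B.hFT _ ht1.1, ht2⟩ with (h | h) | h
              · exact Or.inl (Or.inl ⟨ht1, h⟩)
              · exact Or.inl (Or.inr ⟨ht1, h⟩)
              · exact Or.inr ⟨ht1, h⟩
          _ ≤ uF (Fb j a (b-1)) z + uF (Fb j a b) z + uF (Fb j a (b+1)) z := by
              refine (measure_union_le _ _).trans ?_
              gcongr
              · exact measure_union_le _ _
              · exact le_rfl
          _ ≤ ENNReal.ofReal ϱ * uF (Fj j a) z + ENNReal.ofReal ϱ * uF (Fj j a) z + ENNReal.ofReal ϱ * uF (Fj j a) z :=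
              add_le_add (add_le_add (hz2 _) (hz2 _)) (hz2 _)
          _ = uF (Fj j a) z * ENNReal.ofReal (3 * ϱ) := by
              rw [ENNReal.ofReal_mul (by norm_num)]
              rw [show ENNReal.ofReal 3 = 3 by simp]; ring
          _ = uF (Fj j a) z / (4 * (n + 1)) := by
              rw [div_eq_mul_inv]
              congr 1
              rw [hϱ]
              have : 3 * (1 / (12 * ((n:ℝ) + 1))) = (4 * ((n:ℝ) + 1))⁻¹ := by field_simp; norm_num
              rw [this, ENNReal.ofReal_inv_of_pos (by positivity), ENNReal.ofReal_mul (by norm_num),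
                ENNReal.ofReal_add (by positivity) (by norm_num)]
              simp)
    set e := (volume (Ej j a)).toReal with he
    set ψ := (volume (Fj j a)).toReal with hψ
    have hψ0 : 0 ≤ ψ := ENNReal.toReal_nonneg
    have hψφ : ψ ≤ φ := ENNReal.toReal_mono B.volF_ne hFle
    rw [← ENNReal.ofReal_toReal hEjf, ← ENNReal.ofReal_toReal hFjf, ← ENNReal.ofReal_mul (by positivity)]
    apply ENNReal.ofReal_le_ofReal
    change e ≤ D * (1/2) ^ j * ψ
    have hstep : e * (ϱ ^ j * β) ^ Q ≤ C1 * (ψ * φ ^ η) * B.μ ^ (1 / n - η) * (B.τ / K ^ j) ^ Q' := by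
      refine h.trans ?_
      gcongr
      rw [Real.rpow_add' hψ0 (by linarith), Real.rpow_one]
      gcongr
    have hq : (ϱ ^ j * β) ^ Q = (ϱ ^ (-Q))⁻¹ ^ j * (β ^ (-Q))⁻¹ := by
      rw [Real.mul_rpow (by positivity) hβ.le, Real.rpow_neg hϱp.le, Real.rpow_neg hβ.le, inv_inv, inv_inv,
        ← Real.rpow_natCast, ← Real.rpow_mul hϱp.le, mul_comm (j:ℝ), Real.rpow_mul hϱp.le, Real.rpow_natCast]
    have hq2 : (B.τ / K ^ j) ^ Q' = B.τ ^ Q' * ((K ^ Q')⁻¹) ^ j := by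
      rw [Real.div_rpow hτ.le (by positivity), div_eq_mul_inv, inv_pow,
        ← Real.rpow_natCast, ← Real.rpow_mul hKp.le, mul_comm (j:ℝ), Real.rpow_mul hKp.le, Real.rpow_natCast]
    have hqp : 0 < (ϱ ^ j * β) ^ Q := by positivity
    rw [hq2] at hstep
    have hr : ϱ ^ (-Q) * (K ^ Q')⁻¹ ≤ 1 / 2 := by
      rw [← div_eq_mul_inv, div_le_iff₀ (by positivity)]; linarith
    calc e = e * (ϱ ^ j * β) ^ Q * ((ϱ ^ (-Q)) ^ j * β ^ (-Q)) := by
          rw [mul_assoc, hq, inv_pow]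
          have : 0 < ϱ ^ (-Q) := by positivity
          have : 0 < β ^ (-Q) := by positivity
          field_simp
      _ ≤ (C1 * (ψ * φ ^ η) * B.μ ^ (1 / n - η) * (B.τ ^ Q' * ((K ^ Q')⁻¹) ^ j)) * ((ϱ ^ (-Q)) ^ j * β ^ (-Q)) := by
          gcongr
      _ = D * (ϱ ^ (-Q) * (K ^ Q')⁻¹) ^ j * ψ := by rw [hD, mul_pow]; ring
      _ ≤ D * (1/2) ^ j * ψ := by gcongr
  have htot : volume E ≤ ENNReal.ofReal (2 * D) * volume B.F := by
    calc volume E ≤ volume (⋃ j : ℕ, ⋃ a : ℤ, Ej j a) := measure_mono hcover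
      _ ≤ ∑' j : ℕ, ∑' a : ℤ, volume (Ej j a) := by
          refine (measure_iUnion_le _).trans ?_
          exact ENNReal.tsum_le_tsum fun j => measure_iUnion_le _
      _ ≤ ∑' j : ℕ, ENNReal.ofReal (D * (1/2) ^ j) * volume B.F := by
          refine ENNReal.tsum_le_tsum fun j => ?_
          calc ∑' a : ℤ, volume (Ej j a) ≤ ∑' a : ℤ, ENNReal.ofReal (D * (1/2) ^ j) * volume (Fj j a) :=
                ENNReal.tsum_le_tsum fun a => hpc j a
            _ = ENNReal.ofReal (D * (1/2) ^ j) * ∑' a : ℤ, volume (Fj j a) := ENNReal.tsum_mul_left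
            _ ≤ _ := by
                gcongr
                refine (tsum_meas_le_meas_iUnion_of_disjoint volume (hFjm j) ?_).trans (measure_mono ?_)
                · intro a b hab
                  rw [Function.onFun, Set.disjoint_left]
                  intro p hp hp'
                  exact Set.disjoint_left.1 (pc_disj _ hab) hp.2 hp'.2
                · exact iUnion_subset fun a p hp => hp.1
      _ = ENNReal.ofReal (2 * D) * volume B.F := by
          rw [ENNReal.tsum_mul_right]
          congr 1
          rw [← ENNReal.ofReal_tsum_of_nonneg (fun j => by positivity)
            (summable_geometric_two.mul_left D), tsum_mul_left, tsum_geometric_two]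
          congr 1; ring
  have h3 := ENNReal.toReal_mono (ENNReal.mul_ne_top (by finiteness) B.volF_ne) htot
  rw [ENNReal.toReal_mul, ENNReal.toReal_ofReal (by positivity)] at h3
  calc (volume E).toReal * β ^ Q ≤ 2 * D * φ * β ^ Q := by gcongr
    _ = 2 * C1 * (φ ^ (1 + η) * B.μ ^ (1 / n - η) * B.τ ^ Q') * (β ^ (-Q) * β ^ Q) := by
        rw [hD, Real.rpow_add' hφ0 (by linarith), Real.rpow_one]; ring
    _ = _ := by
        rw [← Real.rpow_add hβ]; simp

end LX

namespace LX

lemma exhaust {n : ℕ} {S : Set (Pt n)} (hS : MeasurableSet S) {k c : ℝ≥0∞} (hk : k ≠ 0) (hk' : k ≠ ∞)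
    (h : ∀ E ⊆ S, MeasurableSet E → volume E ≠ ∞ → k * volume E ≤ c) : k * volume S ≤ c := by
  by_contra hc
  push Not at hc
  have h1 : c / k < volume S := by
    rw [ENNReal.div_lt_iff (Or.inl hk) (Or.inl hk'), mul_comm]; exact hc
  obtain ⟨E, hE, hES, h2, h3⟩ := Measure.exists_subset_measure_lt_top hS h1
  have := h E hES hE h3.ne
  rw [ENNReal.div_lt_iff (Or.inl hk) (Or.inl hk'), mul_comm] at h2
  exact absurd this (not_le.mpr h2)

lemma dyadic {n : ℕ} {Q0 Q : ℝ} (h0 : 0 < Q0) (hQ : Q0 < Q) : ∃ C : ℝ, 0 < C ∧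
    ∀ (g : Pt n → ℝ≥0∞), Measurable g → (∀ z, g z ≤ 1) → ∀ c : ℝ≥0∞,
      (∀ l : ℝ, 0 < l → ENNReal.ofReal (l ^ Q0) * volume {z | ENNReal.ofReal l ≤ g z} ≤ c) →
      ∫⁻ z, g z ^ Q ≤ ENNReal.ofReal C * c := by
  have hq : 0 < Q := h0.trans hQ
  set ρ : ℝ := (1/2 : ℝ) ^ (Q - Q0) with hρ
  have hρ0 : 0 < ρ := by positivity
  have hρ1 : ρ < 1 := Real.rpow_lt_one (by norm_num) (by norm_num) (by linarith)
  refine ⟨2 ^ Q0 * (1 - ρ)⁻¹, by have : 0 < 1 - ρ := by linarith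
                                 positivity, ?_⟩
  intro g hg hg1 c hc
  let w : ℕ → ℝ := fun j => (1/2 : ℝ) ^ j
  have hw : ∀ j, 0 < w j := fun j => by positivity
  let A : ℕ → Set (Pt n) := fun j => {z | ENNReal.ofReal (w (j+1)) ≤ g z}
  have hA : ∀ j, MeasurableSet (A j) := fun j => measurableSet_le measurable_const hg
  have hpt : ∀ z, g z ^ Q ≤ ∑' j, ENNReal.ofReal (w j ^ Q) * (A j).indicator 1 z := by
    intro z
    by_cases hz : g z = 0
    · rw [hz, ENNReal.zero_rpow_of_pos hq]; exact zero_le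
    · have hf : g z ≠ ∞ := ne_top_of_le_ne_top one_ne_top (hg1 z)
      obtain ⟨x, hx0, hx⟩ : ∃ x : ℝ, 0 < x ∧ g z = ENNReal.ofReal x :=
        ⟨(g z).toReal, ENNReal.toReal_pos hz hf, (ENNReal.ofReal_toReal hf).symm⟩
      have hx1 : x ≤ 1 := by
        have := hg1 z
        rw [hx] at this
        simpa using this
      obtain ⟨j, hj1, hj2⟩ := exists_nat_pow_near_of_lt_one hx0 hx1 (by norm_num : (0:ℝ) < 1/2) (by norm_num)
      refine le_trans ?_ (ENNReal.le_tsum j)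
      have : z ∈ A j := by
        change ENNReal.ofReal _ ≤ g z
        rw [hx]; exact ENNReal.ofReal_le_ofReal hj1.le
      rw [indicator_of_mem this, hx, ENNReal.ofReal_rpow_of_pos hx0]
      simp only [Pi.one_apply, mul_one]
      apply ENNReal.ofReal_le_ofReal
      exact Real.rpow_le_rpow hx0.le hj2 hq.le
  calc ∫⁻ z, g z ^ Q ≤ ∫⁻ z, ∑' j, ENNReal.ofReal (w j ^ Q) * (A j).indicator 1 z := lintegral_mono hpt
    _ = ∑' j, ENNReal.ofReal (w j ^ Q) * volume (A j) := by
        rw [lintegral_tsum]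
        · congr 1; ext j
          rw [lintegral_const_mul _ (measurable_one.indicator (hA j)), lintegral_indicator_one (hA j)]
        · intro j; exact ((measurable_one.indicator (hA j)).const_mul _).aemeasurable
    _ ≤ ∑' j : ℕ, ENNReal.ofReal (2 ^ Q0) * c * ENNReal.ofReal ρ ^ j := by
        apply ENNReal.tsum_le_tsum
        intro j
        have h1 := hc (w (j+1)) (hw _)
        have e : w j ^ Q = (2 ^ Q0 * ρ ^ j) * (w (j+1)) ^ Q0 := by
          have e1 : (2:ℝ) ^ Q0 * w (j+1) ^ Q0 = w j ^ Q0 := by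
            rw [← Real.mul_rpow (by norm_num) (hw _).le]
            congr 1
            change 2 * (1/2:ℝ)^(j+1) = (1/2)^j
            rw [pow_succ]; ring
          have e2 : ρ ^ j = w j ^ (Q - Q0) := by
            rw [hρ]
            change ((1/2:ℝ) ^ (Q - Q0)) ^ j = ((1/2:ℝ)^j) ^ (Q-Q0)
            rw [← Real.rpow_natCast, ← Real.rpow_natCast, ← Real.rpow_mul (by norm_num), ← Real.rpow_mul (by norm_num), mul_comm]
          rw [e2, mul_right_comm, e1, ← Real.rpow_add (hw j)]
          congr 1; ring
        rw [e, ENNReal.ofReal_mul (by positivity), ENNReal.ofReal_mul (by positivity), mul_assoc, ENNReal.ofReal_pow hρ0.le]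
        calc _ ≤ ENNReal.ofReal (2 ^ Q0) * ENNReal.ofReal ρ ^ j * c := by gcongr
          _ = _ := by ring
    _ = ENNReal.ofReal (2 ^ Q0) * c * (1 - ENNReal.ofReal ρ)⁻¹ := by
        rw [ENNReal.tsum_mul_left, ENNReal.tsum_geometric]
    _ = _ := by
        have : 1 - ENNReal.ofReal ρ = ENNReal.ofReal (1 - ρ) := by
          rw [ENNReal.ofReal_sub _ hρ0.le]; simp
        rw [this, ENNReal.ofReal_mul (by positivity), ENNReal.ofReal_inv_of_pos (by linarith)]
        ring

namespace Blk
variable {n : ℕ} (B : Blk n)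
def vf (z : Pt n) : ℝ≥0∞ := uF B.F z / ENNReal.ofReal B.τ
def V : ℝ := B.τ ^ (-((n:ℝ)+1)/2) * B.μ ^ (((n:ℝ)+1)/n)
def ω : ℝ := (volume B.F).toReal / (B.τ * B.μ)

lemma measurable_vf : Measurable B.vf := (measurable_uF B.hF).div_const _
lemma ofτ_ne : ENNReal.ofReal B.τ ≠ 0 := by simpa using B.τ_pos
lemma vf_le (z) : B.vf z ≤ 1 := by
  unfold vf
  rw [ENNReal.div_le_iff B.ofτ_ne (by finiteness), one_mul]
  exact (uF_le B.hFT z).trans B.hTτ.le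
lemma V_pos : 0 < B.V := by
  have := B.τ_pos
  have := B.μ_pos
  unfold V; positivity
lemma ω_nonneg : 0 ≤ B.ω := by
  have := B.τ_pos
  have := B.μ_pos
  unfold ω; positivity
lemma ω_le : B.ω ≤ 1 := by
  have := B.τ_pos
  have := B.μ_pos
  unfold ω
  rw [div_le_one (by positivity), mul_comm]
  exact ENNReal.toReal_le_of_le_ofReal (by positivity) B.volF
lemma φ_eq : (volume B.F).toReal = B.ω * (B.τ * B.μ) := by
  have := B.τ_pos
  have := B.μ_pos
  unfold ω; field_simp
lemma le_vf {l : ℝ} (hl : 0 < l) {z} : ENNReal.ofReal l ≤ B.vf z ↔ ENNReal.ofReal (l * B.τ) ≤ uF B.F z := by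
  unfold vf
  rw [ENNReal.le_div_iff_mul_le (Or.inl B.ofτ_ne) (Or.inl (by finiteness)), ENNReal.ofReal_mul hl.le]
end Blk

lemma strong {n : ℕ} (hn : 2 ≤ n) {Q η : ℝ} (hη0 : 0 ≤ η) (hη1 : η ≤ 1 / n)
    (hQ : (n + 3) / 2 + η < Q) : ∃ C : ℝ, 0 < C ∧ ∀ (B : Blk n),
      ∫⁻ z, B.vf z ^ Q ≤ ENNReal.ofReal (C * (B.V * B.ω ^ (1 + η))) := by
  obtain ⟨Q0, hQ0, hQ1⟩ := exists_between hQ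
  obtain ⟨C1, hC1, h1⟩ := RW hn hη0 hη1 hQ0
  have hQp : 0 < Q0 := lt_trans (by positivity) hQ0
  obtain ⟨C2, hC2, h2⟩ := dyadic (n := n) hQp hQ1
  refine ⟨C2 * C1, by positivity, fun B => ?_⟩
  have hτ := B.τ_pos
  have hμ := B.μ_pos
  have hV := B.V_pos
  have hω := B.ω_nonneg
  rw [mul_assoc, ENNReal.ofReal_mul hC2.le]
  refine h2 _ B.measurable_vf B.vf_le _ ?_
  intro l hl
  refine exhaust (measurableSet_le measurable_const B.measurable_vf) (by simp; positivity) (by finiteness) ?_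
  intro E hES hE hEf
  have h := h1 B (l * B.τ) E (by positivity) hE hEf (fun z hz => (B.le_vf hl).1 (hES hz))
  rw [← ENNReal.ofReal_toReal hEf, ← ENNReal.ofReal_mul (by positivity)]
  apply ENNReal.ofReal_le_ofReal
  have hn0 : (0:ℝ) < n := by positivity
  have e : (volume B.F).toReal ^ (1 + η) * B.μ ^ (1 / n - η) * B.τ ^ (Q0 - 1 - (n + 1) / 2 - η)
      = (B.V * B.ω ^ (1 + η)) * B.τ ^ Q0 := by
    rw [B.φ_eq, Real.mul_rpow hω (by positivity), Real.mul_rpow hτ.le hμ.le]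
    unfold Blk.V
    have e1 : B.τ ^ (1+η) * B.τ ^ (Q0 - 1 - ((n:ℝ) + 1) / 2 - η) = B.τ ^ (-((n:ℝ)+1)/2) * B.τ ^ Q0 := by
      rw [← Real.rpow_add hτ, ← Real.rpow_add hτ]; congr 1; ring
    have e2 : B.μ ^ (1+η) * B.μ ^ (1 / (n:ℝ) - η) = B.μ ^ (((n:ℝ)+1)/n) := by
      rw [← Real.rpow_add hμ]; congr 1; field_simp; ring
    rw [← e2]
    linear_combination (B.ω ^ (1+η) * B.μ ^ (1+η) * B.μ ^ (1 / (n:ℝ) - η)) * e1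
  rw [e, Real.mul_rpow hl.le hτ.le] at h
  have : 0 < B.τ ^ Q0 := by positivity
  refine le_of_mul_le_mul_right ?_ this
  calc _ = (volume E).toReal * (l ^ Q0 * B.τ ^ Q0) := by ring
    _ ≤ _ := h
    _ = _ := by ring

lemma tril {n : ℕ} (hn : 2 ≤ n) : ∃ C : ℝ, 0 < C ∧ ∀ (B B' : Blk n),
      ∫⁻ z, (B.vf z * B'.vf z) ^ ((n:ℝ) + 4) ≤ ENNReal.ofReal (C * (B.V ^ (1/((n:ℝ)+1)) *
        B'.V ^ (n/((n:ℝ)+1)) * (B.τ / B'.τ) ^ (1/2:ℝ))) := by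
  have hn2 : (2:ℝ) ≤ n := by exact_mod_cast hn
  have hn0 : (0:ℝ) < n := by positivity
  set Q0 : ℝ := 1 / n + (n+1)/2 + 2 with hQ0
  have hQp : 0 < Q0 := by positivity
  have hQ1 : Q0 < n + 4 := by
    have : 1 / (n:ℝ) ≤ 1 := by rw [div_le_one hn0]; linarith
    rw [hQ0]; linarith
  obtain ⟨C2, hC2, h2⟩ := dyadic (n := n) hQp hQ1
  set C0 : ℝ := 2 * (16 * n) ^ n * (8 * (n+1)) ^ NN n with hC0
  have hC0p : 0 < C0 := by positivity
  refine ⟨C2 * C0 ^ (1/(n:ℝ)), by positivity, fun B B' => ?_⟩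
  have hτ := B.τ_pos
  have hμ := B.μ_pos
  have hV := B.V_pos
  have hτ' := B'.τ_pos
  have hμ' := B'.μ_pos
  have hV' := B'.V_pos
  rw [mul_assoc, ENNReal.ofReal_mul hC2.le]
  refine h2 _ (B.measurable_vf.mul B'.measurable_vf) ?_ _ ?_
  · intro z
    exact mul_le_one' (B.vf_le z) (B'.vf_le z)
  intro l hl
  refine exhaust (measurableSet_le measurable_const (B.measurable_vf.mul B'.measurable_vf)) (by simp; positivity) (by finiteness) ?_
  intro E hES hE hEf
  have hz1 : ∀ z ∈ E, ENNReal.ofReal (l * B.τ) ≤ uF B.F z := by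
    intro z hz
    rw [← B.le_vf hl]
    refine (hES hz).trans ?_
    exact mul_le_of_le_one_right' (B'.vf_le z)
  have hz2 : ∀ z ∈ E, ENNReal.ofReal (l * B'.τ) ≤ uF B'.F z := by
    intro z hz
    rw [← B'.le_vf hl]
    refine (hES hz).trans ?_
    exact mul_le_of_le_one_left' (B.vf_le z)
  have hδ : 0 < l * B'.τ / (8 * (n+1)) := by positivity
  have h := path_lemma (by omega) hδ hE B'.hF B.hF hEf B'.volF_ne B'.hT B'.hFT B'.hTτ.le (by finiteness)
    (by simp; positivity) hz2 hz1 (by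
      intro z hz u
      refine (measure_mono inter_subset_right).trans ?_
      rw [Real.volume_ball]
      rw [ENNReal.le_div_iff_mul_le (Or.inl (by positivity)) (Or.inl (by finiteness))]
      refine le_trans (le_of_eq ?_) (hz2 z hz)
      have : (4 * ((n:ℝ≥0∞)+1)) = ENNReal.ofReal (4 * (n+1)) := by
        rw [ENNReal.ofReal_mul (by norm_num), ENNReal.ofReal_add (by positivity) (by norm_num)]
        simp
      rw [this, ← ENNReal.ofReal_mul (by positivity)]
      congr 1
      field_simp
      norm_num)
  rw [← ENNReal.ofReal_toReal hEf, ← ENNReal.ofReal_mul (by positivity)]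
  apply ENNReal.ofReal_le_ofReal
  set e := (volume E).toReal with he
  have he0 : 0 ≤ e := ENNReal.toReal_nonneg
  have h' : (l * B'.τ / (8 * (n+1))) ^ NN n * ((l * B'.τ) ^ (2*n) * e ^ n * (l * B.τ)) ≤
      2 * (16 * n) ^ n * ((B.μ * B.τ) * (B'.μ * B'.τ) ^ n * B'.τ ^ n) := by
    have h3 := h.trans (mul_le_mul_right (mul_le_mul_left (mul_le_mul' B.volF (pow_le_pow_left' B'.volF n)) _) _)
    rw [← ENNReal.ofReal_toReal hEf, ← he] at h3
    have e1 : (2 * (16 * (n:ℝ≥0∞)) ^ n) = ENNReal.ofReal (2 * (16 * n) ^ n) := by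
      rw [ENNReal.ofReal_mul (by norm_num), ENNReal.ofReal_pow (by positivity), ENNReal.ofReal_mul (by norm_num)]
      simp
    rw [e1, ← ENNReal.ofReal_pow (by positivity), ← ENNReal.ofReal_pow (by positivity),
      ← ENNReal.ofReal_pow (by positivity), ← ENNReal.ofReal_pow (by positivity), ← ENNReal.ofReal_pow (by positivity),
      ← ENNReal.ofReal_mul (by positivity), ← ENNReal.ofReal_mul (by positivity), ← ENNReal.ofReal_mul (by positivity),
      ← ENNReal.ofReal_mul (by positivity), ← ENNReal.ofReal_mul (by positivity), ← ENNReal.ofReal_mul (by positivity)] at h3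
    exact (ENNReal.ofReal_le_ofReal_iff (by positivity)).1 h3
  rcases he0.eq_or_lt with he00 | hep
  · rw [← he00]; simp only [mul_zero]; positivity
  have hNN := NN_eq n
  set a8 : ℝ := 8 * (n+1) with ha8
  have ha8p : 0 < a8 := by positivity
  set C16 : ℝ := 2 * (16 * n)^n with hC16
  have hC16p : 0 < C16 := by positivity
  clear_value a8 C16
  have hlog := Real.log_le_log (by positivity) h'
  rw [Real.log_mul (by positivity) (by positivity), Real.log_mul (by positivity) (by positivity),
    Real.log_mul (by positivity) (by positivity), Real.log_mul (by positivity) (by positivity),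
    Real.log_mul (by positivity) (by positivity), Real.log_mul (by positivity) (by positivity),
    Real.log_pow, Real.log_pow, Real.log_pow, Real.log_pow, Real.log_mul (x := B.μ * B.τ) (by positivity) (by positivity), Real.log_pow,
    Real.log_div (by positivity) (by positivity),
    Real.log_mul hl.ne' hτ'.ne', Real.log_mul hμ.ne' hτ.ne', Real.log_mul hμ'.ne' hτ'.ne', hNN] at hlog
  rw [← Real.log_le_log_iff (by positivity) (by positivity), Real.log_mul (by positivity) (by positivity),
    Real.log_mul (by positivity) (by positivity), Real.log_mul (by positivity) (by positivity),
    Real.log_mul (by positivity) (by positivity), Real.log_rpow hl, Real.log_rpow hC0p, Real.log_rpow hV, Real.log_rpow hV',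
    Real.log_rpow (by positivity), Real.log_div (by positivity) (by positivity), hC0, Real.log_mul (by positivity) (by positivity),
    Real.log_pow, hNN, hQ0]
  unfold Blk.V
  rw [Real.log_mul (by positivity) (by positivity), Real.log_mul (by positivity) (by positivity), Real.log_rpow hτ,
    Real.log_rpow hμ, Real.log_rpow hτ', Real.log_rpow hμ']
  push_cast at hlog
  generalize Real.log l = L at *
  generalize Real.log B.τ = x1 at *
  generalize Real.log B'.τ = x2 at *
  generalize Real.log B.μ = x3 at *
  generalize Real.log B'.μ = x4 at *
  generalize Real.log e = x5 at *
  generalize Real.log a8 = x6 at *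
  generalize Real.log C16 = x7 at *
  refine le_of_mul_le_mul_left ?_ hn0
  rw [← sub_nonneg] at hlog ⊢
  refine le_of_le_of_eq hlog ?_
  field_simp
  ring

end LX

namespace LX

lemma holder3 {n : ℕ} {f1 f2 f3 : Pt n → ℝ≥0∞} (h1 : Measurable f1) (h2 : Measurable f2) (h3 : Measurable f3)
    {x y ζ : ℝ} (hx : 0 ≤ x) (hy : 0 ≤ y) (hζ : 0 ≤ ζ) (hs : x + y + ζ = 1) :
    ∫⁻ z, f1 z ^ x * f2 z ^ y * f3 z ^ ζ ≤ (∫⁻ z, f1 z) ^ x * (∫⁻ z, f2 z) ^ y * (∫⁻ z, f3 z) ^ ζ := by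
  have := ENNReal.lintegral_prod_norm_pow_le (μ := (volume : Measure (Pt n))) (Finset.univ : Finset (Fin 3))
    (f := ![f1, f2, f3]) (p := ![x, y, ζ]) (by
      intro i _
      fin_cases i
      · exact h1.aemeasurable
      · exact h2.aemeasurable
      · exact h3.aemeasurable)
    (by simpa [Fin.sum_univ_three] using hs)
    (by
      intro i _
      fin_cases i
      · exact hx
      · exact hy
      · exact hζ)
  simpa [Fin.prod_univ_three] using this

lemma small_ev {a : ℝ} (ha : 0 < a) (b : ℝ) : ∀ᶠ ε in nhdsWithin (0:ℝ) (Ioi 0), b * ε ≤ a := by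
  have : Tendsto (fun ε : ℝ => b * ε) (nhdsWithin (0:ℝ) (Ioi 0)) (nhds (b * 0)) :=
    ((continuous_const.mul continuous_id).tendsto 0).mono_left nhdsWithin_le_nhds
  rw [mul_zero] at this
  filter_upwards [this.eventually (gt_mem_nhds ha)] with e he using he.le

set_option maxHeartbeats 1000000 in
lemma orth_aux {n : ℕ} {P Q0 η A K ε : ℝ} (hη : 0 ≤ η)
    (hK : 1 ≤ K) (hε : 0 < ε) (c0 : 2 * ε ≤ 1 / P) (c0' : 2 * ε ≤ 1 - 1 / P) (hQ0 : 0 ≤ Q0)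
    (hA : 0 ≤ A)
    (c1 : Q0 * (1 / P + 2 * ε) + A * ε ≤ 1) (c2 : Q0 * (1 - 1 / P + 2 * ε) + A * ε ≤ P - 1)
    (c3 : 1 / P ≤ (1 + η) * (1 / P - 2 * ε)) (c4 : 1 - 1 / P ≤ (1 + η) * (1 - 1 / P - 2 * ε))
    (hP : 1 < P)
    (B B' : Blk n) {e e' : ℝ} (he : 0 ≤ e) (he' : 0 ≤ e') (hee : e + e' = 1)
    (hS : ∫⁻ z, B.vf z ^ Q0 ≤ ENNReal.ofReal (K * (B.V * B.ω ^ (1 + η))))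
    (hS' : ∫⁻ z, B'.vf z ^ Q0 ≤ ENNReal.ofReal (K * (B'.V * B'.ω ^ (1 + η))))
    (hT : ∫⁻ z, (B.vf z * B'.vf z) ^ A ≤ ENNReal.ofReal (K * (B.V ^ e * B'.V ^ e' *
       Real.exp (-(1/2) * |Real.log B.τ - Real.log B'.τ|)))) :
    ∫⁻ z, B.vf z * B'.vf z ^ (P - 1) ≤ ENNReal.ofReal (K * ((B.V * B.ω) ^ (1 / P) * (B'.V * B'.ω) ^ (1 - 1 / P) *
      Real.exp (-(ε / 2) * (|Real.log B.τ - Real.log B'.τ| + |Real.log B.V - Real.log B'.V|)))) := by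
  have hV := B.V_pos
  have hV' := B'.V_pos
  have hω := B.ω_nonneg
  have hω' := B'.ω_nonneg
  obtain ⟨σ, hσ1, hσ2, hσ⟩ : ∃ σ : ℝ, -1 ≤ σ ∧ σ ≤ 1 ∧
      σ * (Real.log B.V - Real.log B'.V) = - |Real.log B.V - Real.log B'.V| := by
    rcases le_total 0 (Real.log B.V - Real.log B'.V) with h | h
    · exact ⟨-1, by norm_num, by norm_num, by rw [abs_of_nonneg h]; ring⟩
    · exact ⟨1, by norm_num, by norm_num, by rw [abs_of_nonpos h]; ring⟩
  set x := 1 / P + ε * (σ - e) with hx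
  set y := 1 - 1 / P - ε * (σ + e') with hy
  have x1 : 1 / P - 2 * ε ≤ x := by rw [hx]; nlinarith
  have x2 : x ≤ 1 / P + 2 * ε := by rw [hx]; nlinarith
  have y1 : 1 - 1 / P - 2 * ε ≤ y := by rw [hy]; nlinarith
  have y2 : y ≤ 1 - 1 / P + 2 * ε := by rw [hy]; nlinarith
  have hx0 : 0 ≤ x := by linarith
  have hy0 : 0 ≤ y := by linarith
  have hsum : x + y + ε = 1 := by rw [hx, hy]; linear_combination (-ε) * hee
  have hpw : ∀ z, B.vf z * B'.vf z ^ (P - 1) ≤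
      (B.vf z ^ Q0) ^ x * (B'.vf z ^ Q0) ^ y * ((B.vf z * B'.vf z) ^ A) ^ ε := by
    intro z
    rw [ENNReal.mul_rpow_of_nonneg _ _ hA, ENNReal.mul_rpow_of_nonneg _ _ hε.le, ← ENNReal.rpow_mul, ← ENNReal.rpow_mul,
      ← ENNReal.rpow_mul, ← ENNReal.rpow_mul]
    calc B.vf z * B'.vf z ^ (P - 1) ≤ B.vf z ^ (Q0 * x + A * ε) * B'.vf z ^ (Q0 * y + A * ε) := by
          refine mul_le_mul' ?_ ?_
          · nth_rewrite 1 [← ENNReal.rpow_one (B.vf z)]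
            apply ENNReal.rpow_le_rpow_of_exponent_ge (B.vf_le z)
            nlinarith
          · apply ENNReal.rpow_le_rpow_of_exponent_ge (B'.vf_le z)
            nlinarith
      _ = _ := by
          rw [ENNReal.rpow_add_of_nonneg _ _ (by positivity) (by positivity),
            ENNReal.rpow_add_of_nonneg _ _ (by positivity) (by positivity)]
          ring
  have hm := B.measurable_vf
  have hm' := B'.measurable_vf
  refine (lintegral_mono hpw).trans ((holder3 (hm.pow_const _) (hm'.pow_const _) ((hm.mul hm').pow_const _)
    hx0 hy0 hε.le hsum).trans ?_)
  have hKp : 0 < K := by linarith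
  calc _ ≤ ENNReal.ofReal (K * (B.V * B.ω ^ (1 + η))) ^ x * ENNReal.ofReal (K * (B'.V * B'.ω ^ (1 + η))) ^ y *
      ENNReal.ofReal (K * (B.V ^ e * B'.V ^ e' *
       Real.exp (-(1/2) * |Real.log B.τ - Real.log B'.τ|))) ^ ε := by gcongr; exact hT
    _ ≤ _ := by
      rw [ENNReal.ofReal_rpow_of_nonneg (by positivity) hx0, ENNReal.ofReal_rpow_of_nonneg (by positivity) hy0,
        ENNReal.ofReal_rpow_of_nonneg (by positivity) hε.le, ← ENNReal.ofReal_mul (by positivity),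
        ← ENNReal.ofReal_mul (by positivity)]
      apply ENNReal.ofReal_le_ofReal
      have w1 : (B.ω ^ (1 + η)) ^ x ≤ B.ω ^ (1 / P) := by
        rw [← Real.rpow_mul hω]
        apply Real.rpow_le_rpow_of_exponent_ge' hω B.ω_le (by positivity)
        nlinarith
      have w2 : (B'.ω ^ (1 + η)) ^ y ≤ B'.ω ^ (1 - 1 / P) := by
        rw [← Real.rpow_mul hω']
        apply Real.rpow_le_rpow_of_exponent_ge' hω' B'.ω_le (by linarith)
        nlinarith
      clear_value x y
      generalize hLτ : |Real.log B.τ - Real.log B'.τ| = a at *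
      have ha : 0 ≤ a := by rw [← hLτ]; positivity
      generalize hLb : |Real.log B.V - Real.log B'.V| = b at *
      have hb : 0 ≤ b := by rw [← hLb]; positivity
      have core : K ^ x * K ^ y * K ^ ε * (B.V ^ x * B'.V ^ y * ((B.V ^ e) ^ ε * (B'.V ^ e') ^ ε * Real.exp (-(1/2) * a) ^ ε))
          ≤ K * (B.V ^ (1/P) * B'.V ^ (1 - 1/P) * Real.exp (-(ε/2) * (a + b))) := by
        rw [← Real.rpow_add hKp, ← Real.rpow_add hKp, hsum, Real.rpow_one]
        refine mul_le_mul_of_nonneg_left ?_ hKp.le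
        rw [← Real.log_le_log_iff (by positivity) (by positivity)]
        rw [Real.log_mul (by positivity) (by positivity), Real.log_mul (by positivity) (by positivity),
          Real.log_mul (by positivity) (by positivity), Real.log_mul (by positivity) (by positivity),
          Real.log_mul (by positivity) (by positivity), Real.log_mul (by positivity) (by positivity),
          Real.log_rpow (x := B.V ^ e) (by positivity), Real.log_rpow (x := B'.V ^ e') (by positivity),
          Real.log_rpow (Real.exp_pos _), Real.log_rpow hV, Real.log_rpow hV', Real.log_rpow hV, Real.log_rpow hV',
          Real.log_rpow hV, Real.log_rpow hV',
          Real.log_exp, Real.log_exp, hx, hy]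
        have hb2 := mul_nonneg hε.le hb
        linear_combination (1/2) * hb2 + ε * hσ
      rw [Real.mul_rpow hKp.le (by positivity), Real.mul_rpow hKp.le (by positivity), Real.mul_rpow hKp.le (by positivity),
        Real.mul_rpow hV.le (by positivity), Real.mul_rpow hV'.le (by positivity), Real.mul_rpow (by positivity) (by positivity),
        Real.mul_rpow (by positivity) (by positivity), Real.mul_rpow hV.le hω, Real.mul_rpow hV'.le hω']
      calc _ = (K ^ x * K ^ y * K ^ ε * (B.V ^ x * B'.V ^ y * ((B.V ^ e) ^ ε * (B'.V ^ e') ^ ε * Real.exp (-(1/2) * a) ^ ε)))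
            * ((B.ω ^ (1 + η)) ^ x * (B'.ω ^ (1 + η)) ^ y) := by ring
        _ ≤ (K * (B.V ^ (1/P) * B'.V ^ (1 - 1/P) * Real.exp (-(ε/2) * (a + b)))) * (B.ω ^ (1 / P) * B'.ω ^ (1 - 1 / P)) := by
            gcongr
        _ = _ := by ring

theorem orth {n : ℕ} (hn : 2 ≤ n) {P : ℝ} (hP : ((n:ℝ) + 3) / 2 < P) : ∃ ε : ℝ, 0 < ε ∧ ∃ C : ℝ, 0 < C ∧
    ∀ B B' : Blk n, ∫⁻ z, B.vf z * B'.vf z ^ (P - 1) ≤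
      ENNReal.ofReal (C * ((B.V * B.ω) ^ (1 / P) * (B'.V * B'.ω) ^ (1 - 1 / P) *
      Real.exp (-ε * (|Real.log B.τ - Real.log B'.τ| + |Real.log B.V - Real.log B'.V|)))) := by
  have hn2 : (2:ℝ) ≤ n := by exact_mod_cast hn
  have hP1 : 1 < P := by linarith
  have hP0 : 0 < P := by linarith
  set η : ℝ := min (1 / n) ((P - (n+3)/2) / 2) with hη
  have hη0 : 0 < η := lt_min (by positivity) (by linarith)
  have hη1 : η ≤ 1 / n := min_le_left _ _
  have hη2 : (n+3)/2 + η < P := by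
    have : η ≤ _ := min_le_right _ _
    linarith
  obtain ⟨Q0, hQ0, hQ0P⟩ := exists_between hη2
  have hQ0p : 0 < Q0 := lt_trans (by positivity) hQ0
  obtain ⟨C1, hC1, h1⟩ := strong hn hη0.le hη1 hQ0
  obtain ⟨C2, hC2, h2⟩ := tril hn
  set K := max 1 (max C1 C2) with hK
  have hK1 : 1 ≤ K := le_max_left _ _
  have hKC1 : C1 ≤ K := (le_max_left _ _).trans (le_max_right _ _)
  have hKC2 : C2 ≤ K := (le_max_right _ _).trans (le_max_right _ _)
  have hKp : 0 < K := by linarith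
  have i1 : 0 < 1 / P := by positivity
  have i2 : 0 < 1 - 1 / P := by rw [sub_pos, div_lt_one hP0]; exact hP1
  have i3 : 0 < 1 - Q0 * (1 / P) := by rw [sub_pos, mul_one_div, div_lt_one hP0]; exact hQ0P
  have i4 : 0 < P - 1 - Q0 * (1 - 1 / P) := by
    have : P - 1 - Q0 * (1 - 1/P) = (P - 1) * (1 - Q0 * (1 / P)) := by field_simp
    rw [this]; apply mul_pos _ i3; linarith
  have ev := ((((((small_ev i1 2).and (small_ev i2 2)).and (small_ev i3 (2 * Q0 + (n+4)))).and
    (small_ev i4 (2 * Q0 + (n+4)))).and (small_ev (mul_pos hη0 i1) (2 * (1 + η)))).and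
    (small_ev (mul_pos hη0 i2) (2 * (1+η)))).and (self_mem_nhdsWithin)
  obtain ⟨ε, ⟨⟨⟨⟨⟨⟨c0, c0'⟩, c1⟩, c2⟩, c3⟩, c4⟩, hε⟩⟩ := ev.exists
  have hε : 0 < ε := hε
  refine ⟨ε / 2, by positivity, K, hKp, fun B B' => ?_⟩
  have hV := B.V_pos
  have hV' := B'.V_pos
  have hω := B.ω_nonneg
  have hω' := B'.ω_nonneg
  have hτ := B.τ_pos
  have hτ' := B'.τ_pos
  have hSB : ∀ B : Blk n, ∫⁻ z, B.vf z ^ Q0 ≤ ENNReal.ofReal (K * (B.V * B.ω ^ (1 + η))) := by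
    intro B
    refine (h1 B).trans (ENNReal.ofReal_le_ofReal ?_)
    have := B.V_pos
    have := B.ω_nonneg
    gcongr
  have key : ∀ e e' : ℝ, 0 ≤ e → 0 ≤ e' → e + e' = 1 → _ → _ := fun e e' he he' hee hT =>
    orth_aux (P := P) (A := (n:ℝ) + 4) hη0.le hK1 hε c0 c0' hQ0p.le (by positivity) (by linarith) (by linarith) (by linarith)
     (by linarith) hP1 B B' he he' hee (hSB B) (hSB B') hT
  have hratio : ∀ a b : ℝ, 0 < a → 0 < b → a ≤ b → (a / b) ^ (1/2:ℝ) = Real.exp (-(1/2) * |Real.log a - Real.log b|) := by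
    intro a b ha hb hab
    rw [Real.rpow_def_of_pos (by positivity), Real.log_div ha.ne' hb.ne', abs_of_nonpos (by linarith [Real.log_le_log ha hab])]
    congr 1; ring
  rcases le_total B.τ B'.τ with h | h
  · refine key (1/((n:ℝ)+1)) (n/((n:ℝ)+1)) (by positivity) (by positivity) (by field_simp; ring) ?_
    refine (h2 B B').trans (ENNReal.ofReal_le_ofReal ?_)
    rw [hratio _ _ hτ hτ' h]
    gcongr
  · refine key (n/((n:ℝ)+1)) (1/((n:ℝ)+1)) (by positivity) (by positivity) (by field_simp) ?_
    have := h2 B' B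
    simp_rw [mul_comm (B'.vf _)] at this
    refine this.trans (ENNReal.ofReal_le_ofReal ?_)
    rw [hratio _ _ hτ' hτ h, abs_sub_comm, mul_comm (B'.V ^ _)]
    gcongr

end LX

namespace LX

lemma jensen_w {ι : Type*} (I : Finset ι) {P : ℝ} (hP : 2 < P) (R : ι → ℝ≥0∞) (hR0 : ∀ i, R i ≠ 0)
    (hRt : ∀ i, R i ≠ ∞) (X : ι → ℝ≥0∞) :
    (∑ i ∈ I, X i) ^ (P - 1) ≤ (∑ i ∈ I, R i) ^ (P - 2) * ∑ i ∈ I, R i ^ (2 - P) * X i ^ (P - 1) := by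
  have h := ENNReal.inner_le_weight_mul_Lp_of_nonneg I (by linarith : 1 ≤ P - 1) R (fun i => (R i)⁻¹ * X i)
  have e1 : ∀ i, R i * ((R i)⁻¹ * X i) = X i := by
    intro i
    rw [← mul_assoc, ENNReal.mul_inv_cancel (hR0 i) (hRt i), one_mul]
  simp_rw [e1] at h
  have hP1 : 0 < P - 1 := by linarith
  have h2 := ENNReal.rpow_le_rpow h hP1.le
  rw [ENNReal.mul_rpow_of_nonneg _ _ hP1.le, ← ENNReal.rpow_mul, ← ENNReal.rpow_mul] at h2
  refine h2.trans (le_of_eq ?_)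
  have e2 : (1 - (P-1)⁻¹) * (P - 1) = P - 2 := by field_simp; ring
  rw [e2, inv_mul_cancel₀ hP1.ne', ENNReal.rpow_one]
  congr 1
  apply Finset.sum_congr rfl
  intro i _
  rw [ENNReal.mul_rpow_of_nonneg _ _ hP1.le, ← mul_assoc]
  congr 1
  rw [ENNReal.inv_rpow, ← ENNReal.rpow_neg]
  nth_rewrite 1 [← ENNReal.rpow_one (R i)]
  rw [← ENNReal.rpow_add _ _ (hR0 i) (hRt i)]
  congr 1; ring

lemma mul_pow_le (a b : ℝ≥0∞) {P : ℝ} (hP : 1 < P) : a * b ^ (P - 1) ≤ a ^ P + b ^ P := by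
  have key : ∀ c : ℝ≥0∞, c * c ^ (P - 1) = c ^ P := by
    intro c
    nth_rewrite 1 [← ENNReal.rpow_one c]
    rw [← ENNReal.rpow_add_of_nonneg _ _ (by norm_num) (by linarith)]
    congr 1; ring
  rcases le_total a b with h | h
  · calc a * b ^ (P-1) ≤ b * b ^ (P-1) := by gcongr
      _ = b ^ P := key b
      _ ≤ _ := le_add_self
  · calc a * b ^ (P-1) ≤ a * a ^ (P-1) := by
          gcongr
      _ = a ^ P := key a
      _ ≤ _ := le_self_add

lemma schur {n : ℕ} {ι : Type*} (I : Finset ι) {P : ℝ} (hP : 2 < P) (R : ι → ι → ℝ≥0∞)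
    (hR0 : ∀ i j, R i j ≠ 0) (hRt : ∀ i j, R i j ≠ ∞) (X : ι → Pt n → ℝ≥0∞) (hX : ∀ i, Measurable (X i))
    (x : ι → ℝ≥0∞) {C S : ℝ≥0∞}
    (h : ∀ i j, ∫⁻ z, X i z * X j z ^ (P - 1) ≤ R i j ^ (P - 1) * (C * (x i * x j ^ (P - 1))))
    (hS1 : ∀ i, ∑ j ∈ I, R i j ≤ S) (hS2 : ∀ j, ∑ i ∈ I, R i j ≤ S) :
    ∫⁻ z, (∑ i ∈ I, X i z) ^ P ≤ C * S ^ (P - 2) * (2 * S) * ∑ i ∈ I, x i ^ P := by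
  have hP1 : 0 < P - 1 := by linarith
  calc ∫⁻ z, (∑ i ∈ I, X i z) ^ P
      ≤ ∫⁻ z, ∑ i ∈ I, S ^ (P - 2) * ∑ j ∈ I, R i j ^ (2 - P) * (X i z * X j z ^ (P - 1)) := by
        apply lintegral_mono
        intro z
        have e : (∑ i ∈ I, X i z) ^ P = ∑ i ∈ I, X i z * (∑ i ∈ I, X i z) ^ (P - 1) := by
          rw [← Finset.sum_mul]
          nth_rewrite 2 [← ENNReal.rpow_one (∑ i ∈ I, X i z)]
          rw [← ENNReal.rpow_add_of_nonneg _ _ (by norm_num) hP1.le]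
          congr 1; ring
        dsimp only
        rw [e]
        apply Finset.sum_le_sum
        intro i _
        calc X i z * (∑ i ∈ I, X i z) ^ (P - 1) ≤ X i z * ((∑ j ∈ I, R i j) ^ (P - 2) * ∑ j ∈ I, R i j ^ (2 - P) * X j z ^ (P - 1)) := by
              gcongr
              exact jensen_w I hP (R i) (hR0 i) (hRt i) _
          _ ≤ X i z * (S ^ (P - 2) * ∑ j ∈ I, R i j ^ (2 - P) * X j z ^ (P - 1)) := by
              gcongr
              exact hS1 i
          _ = _ := by
              rw [mul_left_comm, Finset.mul_sum]
              congr 1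
              apply Finset.sum_congr rfl
              intro j _; ring
    _ = ∑ i ∈ I, S ^ (P - 2) * ∑ j ∈ I, R i j ^ (2 - P) * ∫⁻ z, X i z * X j z ^ (P - 1) := by
        have hm : ∀ i j, Measurable (fun z => X i z * X j z ^ (P - 1)) := fun i j => (hX i).mul ((hX j).pow_const _)
        rw [lintegral_finsetSum _ (fun i _ => (Finset.measurable_fun_sum _ (fun j _ => (hm i j).const_mul _)).const_mul _)]
        apply Finset.sum_congr rfl
        intro i _
        rw [lintegral_const_mul _ (Finset.measurable_fun_sum _ (fun j _ => (hm i j).const_mul _)),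
          lintegral_finsetSum _ (fun j _ => (hm i j).const_mul _)]
        congr 1
        apply Finset.sum_congr rfl
        intro j _
        rw [lintegral_const_mul _ (hm i j)]
    _ ≤ ∑ i ∈ I, S ^ (P - 2) * ∑ j ∈ I, R i j * (C * (x i ^ P + x j ^ P)) := by
        refine Finset.sum_le_sum fun i _ => mul_le_mul_right (Finset.sum_le_sum fun j _ => ?_) _
        calc R i j ^ (2 - P) * ∫⁻ z, X i z * X j z ^ (P - 1) ≤ R i j ^ (2 - P) * (R i j ^ (P - 1) * (C * (x i * x j ^ (P - 1)))) := by
              gcongr; exact h i j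
          _ = R i j * (C * (x i * x j ^ (P - 1))) := by
              rw [← mul_assoc, ← ENNReal.rpow_add _ _ (hR0 i j) (hRt i j), show 2 - P + (P - 1) = 1 by ring, ENNReal.rpow_one]
          _ ≤ _ := by
              gcongr
              exact mul_pow_le _ _ (by linarith)
    _ = C * S ^ (P - 2) * (∑ i ∈ I, (∑ j ∈ I, R i j) * x i ^ P + ∑ j ∈ I, (∑ i ∈ I, R i j) * x j ^ P) := by
        simp_rw [Finset.sum_mul]
        rw [Finset.sum_comm (s := I) (t := I) (f := fun j i => R i j * x j ^ P), ← Finset.sum_add_distrib, Finset.mul_sum]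
        apply Finset.sum_congr rfl
        intro i _
        rw [← Finset.sum_add_distrib, mul_comm C, mul_assoc, Finset.mul_sum (a := C)]
        congr 1
        apply Finset.sum_congr rfl
        intro j _; ring
    _ ≤ C * S ^ (P - 2) * (∑ i ∈ I, S * x i ^ P + ∑ j ∈ I, S * x j ^ P) := by
        gcongr with i _ i _
        · exact hS1 i
        · exact hS2 i
    _ = _ := by
        rw [← Finset.mul_sum]; ring

lemma int_sum {a : ℝ} (ha : 0 < a) : ∑' k : ℤ, ENNReal.ofReal (Real.exp (-a * |(k:ℝ)|)) ≠ ∞ := by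
  have h0 : Summable (fun k : ℕ => Real.exp (-a * (k:ℝ))) := by
    have := Real.summable_exp_nat_mul_iff.2 (by linarith : -a < 0)
    refine this.congr fun k => by rw [mul_comm]
  have h : Summable (fun k : ℤ => Real.exp (-a * |(k:ℝ)|)) := by
    rw [summable_int_iff_summable_nat_and_neg]
    constructor
    · simpa using h0
    · simpa using h0
  rw [← ENNReal.ofReal_tsum_of_nonneg (fun _ => (Real.exp_pos _).le) h]
  finiteness

lemma int_sum_shift {a c : ℝ} (ha : 0 < a) (hc : 0 < c) : ∃ G : ℝ≥0∞, G ≠ ∞ ∧ ∀ x : ℝ,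
    ∑' k : ℤ, ENNReal.ofReal (Real.exp (-a * |x + c * k|)) ≤ G := by
  refine ⟨ENNReal.ofReal (Real.exp (a * c)) * ∑' k : ℤ, ENNReal.ofReal (Real.exp (-(a*c) * |(k:ℝ)|)),
    ENNReal.mul_ne_top (by finiteness) (int_sum (by positivity)), fun x => ?_⟩
  rw [← ENNReal.tsum_mul_left, ← (Equiv.addRight (⌊x / c⌋)).tsum_eq
    (fun k : ℤ => ENNReal.ofReal (Real.exp (a * c)) * ENNReal.ofReal (Real.exp (-(a*c) * |(k:ℝ)|)))]
  apply ENNReal.tsum_le_tsum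
  intro k
  rw [← ENNReal.ofReal_mul (by positivity), ← Real.exp_add]
  apply ENNReal.ofReal_le_ofReal
  apply Real.exp_le_exp.2
  simp only [Equiv.coe_addRight, Int.cast_add]
  have h1 := Int.floor_le (x / c)
  have h2 := Int.lt_floor_add_one (x / c)
  set y : ℝ := ((⌊x / c⌋ : ℤ) : ℝ)
  have h3 : c * |(k:ℝ) + y| ≤ |x + c * k| + c := by
    rw [le_div_iff₀ hc] at h1
    rw [div_lt_iff₀ hc] at h2
    have : c * |(k:ℝ) + y| = |c * (k + y)| := by rw [abs_mul, abs_of_pos hc]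
    rw [this, abs_le]
    constructor
    · nlinarith [neg_abs_le (x + c * k)]
    · nlinarith [le_abs_self (x + c * k)]
  nlinarith


/-- the orthogonality theorem for block families -/
theorem thmO {n : ℕ} (hn : 2 ≤ n) {P r : ℝ} (hP : ((n:ℝ) + 3) / 2 < P) (hr : 0 < r) : ∃ C : ℝ≥0∞, C ≠ ∞ ∧
    ∀ (M : ℤ → ℝ) (B : ℤ × ℤ → Blk n), (∀ i, (B i).τ = 2 ^ (i.1 : ℝ)) → (∀ i, (B i).μ = 2 ^ (M i.1 - r * i.2)) →
      ∀ (c : ℤ × ℤ → ℝ≥0∞) (I : Finset (ℤ × ℤ)),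
      ∫⁻ z, (∑ i ∈ I, c i * uF (B i).F z) ^ P ≤
        C * ∑ i ∈ I, c i ^ P * ENNReal.ofReal ((B i).τ ^ P * ((B i).V * (B i).ω)) := by
  have hn2 : (2:ℝ) ≤ n := by exact_mod_cast hn
  have hP2 : 2 < P := by linarith
  have hP0 : 0 < P := by linarith
  have hP1 : 0 < P - 1 := by linarith
  obtain ⟨ε, hε, C, hC, h⟩ := orth hn hP
  have hl2 : 0 < Real.log 2 := Real.log_pos (by norm_num)
  set a := ε / (P - 1) * Real.log 2 with ha
  have hap : 0 < a := by positivity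
  have hn0 : (0:ℝ) < n := by linarith
  obtain ⟨G, hG, hG'⟩ := int_sum_shift hap (c := r * ((n+1)/n)) (by positivity)
  obtain ⟨G1, hG1, hG1'⟩ := int_sum_shift hap (c := 1) (by positivity)
  refine ⟨ENNReal.ofReal C * (G1 * G) ^ (P - 2) * (2 * (G1 * G)), ?_, ?_⟩
  · have : (G1 * G) ^ (P - 2) ≠ ∞ := ENNReal.rpow_ne_top_of_nonneg (by linarith) (by finiteness)
    finiteness
  intro M B hτ hμ c I
  let L : ℤ × ℤ → ℝ := fun i => -((n:ℝ)+1)/2 * i.1 + ((n:ℝ)+1)/n * (M i.1 - r * i.2)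
  have hLτ : ∀ i, Real.log (B i).τ = Real.log 2 * i.1 := by
    intro i; rw [hτ, Real.log_rpow (by norm_num)]; ring
  have hLV : ∀ i, Real.log (B i).V = Real.log 2 * L i := by
    intro i
    have h1 := (B i).τ_pos
    have h2 := (B i).μ_pos
    unfold Blk.V
    rw [Real.log_mul (by positivity) (by positivity), Real.log_rpow h1, Real.log_rpow h2, hLτ, hμ,
      Real.log_rpow (by norm_num)]
    simp only [L]; ring
  let R : ℤ × ℤ → ℤ × ℤ → ℝ := fun i j => Real.exp (-a * |(i.1:ℝ) - j.1|) * Real.exp (-a * |L i - L j|)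
  have hRp : ∀ i j, 0 < R i j := fun i j => by positivity
  have hRs : ∀ i j, R i j = R j i := fun i j => by simp only [R]; rw [abs_sub_comm, abs_sub_comm (L i)]
  have hRe : ∀ i j, Real.exp (-ε * (|Real.log (B i).τ - Real.log (B j).τ| + |Real.log (B i).V - Real.log (B j).V|)) =
      R i j ^ (P - 1) := by
    intro i j
    simp only [R]
    rw [← Real.exp_add, ← Real.exp_mul, hLτ, hLτ, hLV, hLV, ← mul_sub, ← mul_sub, abs_mul, abs_mul, abs_of_pos hl2]
    congr 1
    rw [ha]; field_simp; ring
  have hS1 : ∀ i, ∑ j ∈ I, ENNReal.ofReal (R i j) ≤ G1 * G := by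
    intro i
    calc ∑ j ∈ I, ENNReal.ofReal (R i j) ≤ ∑' j : ℤ × ℤ, ENNReal.ofReal (R i j) := ENNReal.sum_le_tsum _
      _ = ∑' m : ℤ, ∑' k : ℤ, ENNReal.ofReal (R i (m, k)) := ENNReal.tsum_prod' 
      _ ≤ ∑' m : ℤ, ENNReal.ofReal (Real.exp (-a * |(-i.1:ℝ) + 1 * m|)) * G := by
          apply ENNReal.tsum_le_tsum
          intro m
          simp only [R]
          simp_rw [ENNReal.ofReal_mul (Real.exp_pos _).le]
          rw [ENNReal.tsum_mul_left]
          refine mul_le_mul' (le_of_eq ?_) ?_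
          · rw [← abs_neg]; congr 4; ring
          · refine le_trans (le_of_eq ?_) (hG' (L i - L (m, 0)))
            congr 1; ext k
            congr 4
            simp only [L]; push_cast; ring
      _ ≤ _ := by
          rw [ENNReal.tsum_mul_right]
          gcongr
          exact hG1' _
  let D : ℤ × ℤ → ℝ≥0∞ := fun i => c i * ENNReal.ofReal (B i).τ
  let X : ℤ × ℤ → Pt n → ℝ≥0∞ := fun i z => D i * (B i).vf z
  have hXe : ∀ i z, c i * uF (B i).F z = X i z := by
    intro i z
    simp only [X, D, Blk.vf]
    rw [mul_assoc, ENNReal.mul_div_cancel (B i).ofτ_ne (by finiteness)]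
  simp_rw [hXe]
  let w : ℤ × ℤ → ℝ := fun i => (B i).V * (B i).ω
  have hw : ∀ i, 0 ≤ w i := fun i => mul_nonneg (B i).V_pos.le (B i).ω_nonneg
  have := schur (n := n) I hP2 (fun i j => ENNReal.ofReal (R i j)) (fun i j => by simpa using hRp i j)
    (fun i j => by finiteness) X (fun i => (B i).measurable_vf.const_mul _)
    (fun i => D i * ENNReal.ofReal (w i ^ (1 / P))) (C := ENNReal.ofReal C) (S := G1 * G) ?_ hS1 ?_
  · refine this.trans (le_of_eq ?_)
    congr 1
    apply Finset.sum_congr rfl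
    intro i _
    have hτp := (B i).τ_pos
    simp only [D]
    rw [ENNReal.mul_rpow_of_nonneg _ _ hP0.le, ENNReal.mul_rpow_of_nonneg _ _ hP0.le, mul_assoc,
      ENNReal.ofReal_rpow_of_nonneg hτp.le hP0.le, ENNReal.ofReal_rpow_of_nonneg (by have := hw i; positivity) hP0.le,
      ← Real.rpow_mul (hw i), one_div_mul_cancel hP0.ne', Real.rpow_one, ← ENNReal.ofReal_mul (by positivity)]
  · intro i j
    simp only [X]
    have e : ∀ z, D i * (B i).vf z * (D j * (B j).vf z) ^ (P - 1) = (D i * D j ^ (P-1)) * ((B i).vf z * (B j).vf z ^ (P - 1)) := by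
      intro z
      rw [ENNReal.mul_rpow_of_nonneg _ _ hP1.le]; ring
    simp_rw [e]
    have hmm : Measurable (fun z => (B i).vf z * (B j).vf z ^ (P - 1)) :=
      (B i).measurable_vf.mul ((B j).measurable_vf.pow_const _)
    rw [lintegral_const_mul _ hmm]
    refine (mul_le_mul_right (h (B i) (B j)) _).trans (le_of_eq ?_)
    rw [hRe]
    have hwi := hw i
    have hwj := hw j
    change D i * D j ^ (P - 1) * ENNReal.ofReal (C * (w i ^ (1 / P) * w j ^ (1 - 1 / P) * R i j ^ (P - 1))) = _
    generalize D i = Di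
    generalize D j = Dj
    generalize w i = wi at *
    generalize w j = wj at *
    have hRij := hRp i j
    generalize R i j = Rij at *
    have e3 : (1 / P) * (P - 1) = 1 - 1 / P := by field_simp
    rw [ENNReal.mul_rpow_of_nonneg _ _ hP1.le, ENNReal.ofReal_rpow_of_nonneg (x := wj ^ (1 / P)) (by positivity) hP1.le,
      ← Real.rpow_mul hwj, e3, ENNReal.ofReal_rpow_of_pos hRij, ENNReal.ofReal_mul hC.le,
      ENNReal.ofReal_mul (by positivity), ENNReal.ofReal_mul (by positivity)]
    ring
  · intro j
    simp_rw [fun i => hRs i j]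
    exact hS1 j

end LX

namespace LX

def tw (x : ℝ) : ℝ≥0∞ := (2:ℝ≥0∞) ^ x

lemma tw_ne_zero (x : ℝ) : tw x ≠ 0 := by unfold tw; simp
lemma tw_ne_top (x : ℝ) : tw x ≠ ∞ := by unfold tw; simp
lemma tw_add (x y : ℝ) : tw (x + y) = tw x * tw y := ENNReal.rpow_add _ _ (by simp) (by simp)
lemma tw_rpow (x y : ℝ) : tw x ^ y = tw (x * y) := (ENNReal.rpow_mul _ _ _).symm
lemma tw_zero : tw 0 = 1 := ENNReal.rpow_zero
lemma tw_one : tw 1 = 2 := ENNReal.rpow_one _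
lemma tw_int (k : ℤ) : (2:ℝ≥0∞) ^ k = tw k := (ENNReal.rpow_intCast _ _).symm
lemma tw_ofReal (x : ℝ) : ENNReal.ofReal (2 ^ x) = tw x := by
  rw [← ENNReal.ofReal_rpow_of_pos (by norm_num)]; simp [tw]
lemma tw_le {x y : ℝ} (h : x ≤ y) : tw x ≤ tw y := ENNReal.rpow_le_rpow_of_exponent_le (by norm_num) h
lemma tw_lt {x y : ℝ} (h : x < y) : tw x < tw y := ENNReal.rpow_lt_rpow_of_exponent_lt (by norm_num) (by simp) h

lemma energy {n : ℕ} (hn : 2 ≤ n) (B : Blk n) {P a b : ℝ} (ha : B.τ = 2 ^ a) (hb : B.μ = 2 ^ b) :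
    ENNReal.ofReal (B.τ ^ P * (B.V * B.ω)) = tw ((P - (n+3)/2) * a + b / n) * volume B.F := by
  have h1 := B.τ_pos
  have h2 := B.μ_pos
  have hn0 : (0:ℝ) < n := by positivity
  rw [← ENNReal.ofReal_toReal B.volF_ne, ← tw_ofReal, ← ENNReal.ofReal_mul (by positivity)]
  congr 1
  have hφ := B.φ_eq
  rw [hφ]
  have e : (2:ℝ) ^ ((P - (n+3)/2) * a + b / n) = B.τ ^ P * B.V / (B.τ * B.μ) := by
    unfold Blk.V
    rw [ha, hb]
    rw [← Real.rpow_mul (by norm_num), ← Real.rpow_mul (by norm_num), ← Real.rpow_mul (by norm_num),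
      ← Real.rpow_add (by norm_num), ← Real.rpow_add (by norm_num), ← Real.rpow_add (by norm_num),
      ← Real.rpow_sub (by norm_num)]
    congr 1
    field_simp; ring
  rw [e]; field_simp

theorem dualO {n : ℕ} (hn : 2 ≤ n) {p P r : ℝ} (hP : ((n:ℝ) + 3) / 2 < P) (hr : 0 < r) (hpP : p.HolderConjugate P) :
    ∃ C : ℝ≥0∞, C ≠ ∞ ∧
    ∀ (M : ℤ → ℝ) (B : ℤ × ℤ → Blk n), (∀ i, (B i).τ = 2 ^ (i.1 : ℝ)) → (∀ i, (B i).μ = 2 ^ (M i.1 - r * i.2)) →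
      ∀ (c : ℤ × ℤ → ℝ≥0∞) (h : Pt n → ℝ≥0∞), Measurable h →
      ∑' i, c i * ∫⁻ l in (B i).F, ray h l ≤
        (∫⁻ z, h z ^ p) ^ (1 / p) *
        (C * ∑' i, c i ^ P * (tw ((P - (n+3)/2) * i.1 + (M i.1 - r * i.2) / n) * volume (B i).F)) ^ (1 / P) := by
  obtain ⟨C, hC, hO⟩ := thmO hn hP hr
  refine ⟨C, hC, ?_⟩
  intro M B hτ hμ c h hh
  have hP0 : 0 < P := hpP.symm.pos
  rw [ENNReal.tsum_eq_iSup_sum]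
  apply iSup_le
  intro I
  have hm : ∀ i, Measurable (uF (B i).F) := fun i => measurable_uF (B i).hF
  calc ∑ i ∈ I, c i * ∫⁻ l in (B i).F, ray h l = ∑ i ∈ I, ∫⁻ z, h z * (c i * uF (B i).F z) := by
        apply Finset.sum_congr rfl
        intro i _
        have hmm : Measurable (fun z => h z * uF (B i).F z) := hh.mul (hm i)
        rw [dual' hh (B i).hF, ← lintegral_const_mul _ hmm]
        apply lintegral_congr
        intro z; ring
    _ = ∫⁻ z, (h * fun z => ∑ i ∈ I, c i * uF (B i).F z) z := by
        have hmm : ∀ i, Measurable (fun z => h z * (c i * uF (B i).F z)) := fun i => hh.mul ((hm i).const_mul _)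
        rw [← lintegral_finsetSum _ (fun i _ => hmm i)]
        simp [Finset.mul_sum]
    _ ≤ (∫⁻ z, h z ^ p) ^ (1 / p) * (∫⁻ z, (∑ i ∈ I, c i * uF (B i).F z) ^ P) ^ (1 / P) :=
        ENNReal.lintegral_mul_le_Lp_mul_Lq _ hpP hh.aemeasurable
          (Finset.measurable_fun_sum _ (fun i _ => (hm i).const_mul _)).aemeasurable
    _ ≤ _ := by
        gcongr
        refine (hO M B hτ hμ c I).trans ?_
        gcongr
        refine le_trans (le_of_eq ?_) (ENNReal.sum_le_tsum I)
        apply Finset.sum_congr rfl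
        intro i _
        rw [energy hn (B i) (hτ i) (hμ i)]

lemma ext_dual {p P : ℝ} (hpP : p.HolderConjugate P) (J : Finset ℤ) (N : ℤ → ℝ≥0∞) (hN : ∀ j, N j ≠ ∞) {A : ℝ≥0∞}
    (h : ∀ x : ℤ → ℝ≥0∞, (∀ j, x j ≠ ∞) → ∑ j ∈ J, x j * N j ≤ A * (∑ j ∈ J, x j ^ P) ^ (1 / P)) :
    ∑ j ∈ J, N j ^ p ≤ A ^ p := by
  have hp := hpP.pos
  have hP := hpP.symm.pos
  have hp1 : 0 ≤ p - 1 := by linarith [hpP.lt]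
  have h1 := h (fun j => N j ^ (p - 1)) (fun j => ENNReal.rpow_ne_top_of_nonneg hp1 (hN j))
  have e1 : ∀ j, N j ^ (p - 1) * N j = N j ^ p := by
    intro j
    nth_rewrite 2 [← ENNReal.rpow_one (N j)]
    rw [← ENNReal.rpow_add_of_nonneg _ _ hp1 (by norm_num)]
    congr 1; ring
  have e2 : ∀ j, (N j ^ (p - 1)) ^ P = N j ^ p := by
    intro j
    rw [← ENNReal.rpow_mul]
    congr 1
    exact hpP.sub_one_mul_conj
  simp_rw [e1, e2] at h1
  set S := ∑ j ∈ J, N j ^ p with hS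
  have hSt : S ≠ ∞ := by
    rw [hS]
    exact ENNReal.sum_ne_top.2 fun j _ => ENNReal.rpow_ne_top_of_nonneg hp.le (hN j)
  by_cases hS0 : S = 0
  · rw [hS0]; exact zero_le
  have e3 : S = S ^ (1 / p) * S ^ (1 / P) := by
    rw [← ENNReal.rpow_add _ _ hS0 hSt]
    have : 1 / p + 1 / P = 1 := by simpa using hpP.inv_add_inv_eq_one
    rw [this, ENNReal.rpow_one]
  have h4 : S ^ (1 / P) ≠ 0 := by simp [hS0, hSt]
  have h5 : S ^ (1 / P) ≠ ∞ := ENNReal.rpow_ne_top_of_nonneg (by positivity) hSt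
  have h2 : S ^ (1 / p) ≤ A := by
    rw [e3] at h1
    have e4 : (S ^ (1/p) * S ^ (1/P)) ^ (1/P) = S ^ (1/P) := by rw [← e3]
    rw [e4] at h1
    exact (ENNReal.mul_le_mul_iff_left h4 h5).1 h1
  calc S = (S ^ (1 / p)) ^ p := by rw [← ENNReal.rpow_mul, one_div_mul_cancel hp.ne', ENNReal.rpow_one]
    _ ≤ _ := by gcongr

lemma lp_ls {p s : ℝ} (hp : 0 < p) (hs : p ≤ s) (a : ℤ → ℝ≥0∞) {A : ℝ≥0∞} (h : ∑' l, a l ^ p ≤ A ^ p) :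
    (∑' l, a l ^ s) ^ (1 / s) ≤ A := by
  have hs0 : 0 < s := hp.trans_le hs
  have ha : ∀ l, a l ≤ A := by
    intro l
    rw [← ENNReal.rpow_le_rpow_iff hp]
    exact (ENNReal.le_tsum l).trans h
  have : ∑' l, a l ^ s ≤ A ^ s := by
    have e : ∀ c : ℝ≥0∞, c ^ s = c ^ p * c ^ (s - p) := by
      intro c
      rw [← ENNReal.rpow_add_of_nonneg _ _ hp.le (by linarith)]
      congr 1; ring
    calc ∑' l, a l ^ s ≤ ∑' l, a l ^ p * A ^ (s - p) := by
          apply ENNReal.tsum_le_tsum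
          intro l
          rw [e]
          gcongr
          exact ha l
      _ = (∑' l, a l ^ p) * A ^ (s - p) := ENNReal.tsum_mul_right
      _ ≤ A ^ p * A ^ (s - p) := by gcongr
      _ = A ^ s := (e A).symm
  calc (∑' l, a l ^ s) ^ (1 / s) ≤ (A ^ s) ^ (1 / s) := by gcongr
    _ = A := by rw [← ENNReal.rpow_mul, mul_one_div_cancel hs0.ne', ENNReal.rpow_one]

lemma exists_tw {v : ℝ≥0∞} (h0 : v ≠ 0) (ht : v ≠ ∞) : ∃ m : ℤ, tw (m - 1) ≤ v ∧ v < tw m := by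
  obtain ⟨m, hm1, hm2⟩ := ENNReal.exists_mem_Ico_zpow h0 ht (by norm_num : (1:ℝ≥0∞) < 2) (by norm_num)
  refine ⟨m + 1, ?_, ?_⟩
  · rw [tw_int] at hm1; simpa using hm1
  · rw [tw_int] at hm2; exact hm2

lemma select {α β : ℝ} (hα : 0 < α) (hβ : 0 < β) : ∃ C : ℝ≥0∞, C ≠ ∞ ∧ ∀ (v : ℤ → ℝ≥0∞) (L : Finset ℤ),
    (∀ l, v l ≠ ∞) → ∃ (J : Finset ℤ) (σ : ℤ → ℤ), (∀ j ∈ J, tw (j - 1) ≤ v (σ j) ∧ v (σ j) < tw j) ∧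
      ∑ l ∈ L, tw (α * l) * v l ^ β ≤ C * ∑ j ∈ J, tw (α * σ j) * tw (β * j) := by
  refine ⟨∑' k : ℤ, ENNReal.ofReal (Real.exp (-(α * Real.log 2) * |(k:ℝ)|)),
    int_sum (mul_pos hα (Real.log_pos (by norm_num))), ?_⟩
  intro v L hv
  classical
  set L' := L.filter (fun l => v l ≠ 0) with hL'
  have hsum : ∑ l ∈ L, tw (α * l) * v l ^ β = ∑ l ∈ L', tw (α * l) * v l ^ β := by
    rw [hL', Finset.sum_filter_of_ne]
    intro l _ h h0
    rw [h0, ENNReal.zero_rpow_of_pos hβ, mul_zero] at h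
    exact h rfl
  have hex : ∀ l, ∃ m : ℤ, v l ≠ 0 → tw (m - 1) ≤ v l ∧ v l < tw m := by
    intro l
    by_cases h : v l = 0
    · exact ⟨0, fun h' => absurd h h'⟩
    · obtain ⟨m, hm⟩ := exists_tw h (hv l)
      exact ⟨m, fun _ => hm⟩
  choose m hm using hex
  let J := L'.image m
  have hmax : ∀ j, ∃ l, j ∈ J → (l ∈ L' ∧ m l = j ∧ ∀ l' ∈ L', m l' = j → l' ≤ l) := by
    intro j
    by_cases hj : j ∈ J
    · have hne : (L'.filter (fun l => m l = j)).Nonempty := by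
        obtain ⟨l, hl, hl2⟩ := Finset.mem_image.1 hj
        exact ⟨l, Finset.mem_filter.2 ⟨hl, hl2⟩⟩
      obtain ⟨l, hl, hl2⟩ := Finset.exists_max_image _ (fun l => l) hne
      refine ⟨l, fun _ => ⟨(Finset.mem_filter.1 hl).1, (Finset.mem_filter.1 hl).2, fun l' h1 h2 => ?_⟩⟩
      exact hl2 l' (Finset.mem_filter.2 ⟨h1, h2⟩)
    · exact ⟨0, fun h => absurd h hj⟩
  choose σ hσ using hmax
  refine ⟨J, σ, ?_, ?_⟩
  · intro j hj
    obtain ⟨h1, h2, -⟩ := hσ j hj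
    have := hm (σ j) (Finset.mem_filter.1 h1).2
    rwa [h2] at this
  rw [hsum, ← Finset.sum_fiberwise_of_maps_to (g := m) (t := J) (fun l hl => Finset.mem_image_of_mem m hl), Finset.mul_sum]
  apply Finset.sum_le_sum
  intro j hj
  obtain ⟨h1, h2, h3⟩ := hσ j hj
  calc ∑ l ∈ L' with m l = j, tw (α * l) * v l ^ β
      ≤ ∑ l ∈ L' with m l = j, ENNReal.ofReal (Real.exp (-(α * Real.log 2) * |((l - σ j : ℤ):ℝ)|)) * (tw (α * σ j) * tw (β * j)) := by
        apply Finset.sum_le_sum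
        intro l hl
        obtain ⟨hl1, hl2⟩ := Finset.mem_filter.1 hl
        have hle := h3 l hl1 hl2
        have e : ENNReal.ofReal (Real.exp (-(α * Real.log 2) * |((l - σ j : ℤ):ℝ)|)) = tw (α * (l - σ j)) := by
          rw [← tw_ofReal, Real.rpow_def_of_pos (by norm_num)]
          have : ((l - σ j : ℤ):ℝ) ≤ 0 := by exact_mod_cast sub_nonpos.2 hle
          rw [abs_of_nonpos this]
          congr 2; push_cast; ring
        rw [e, ← mul_assoc, ← tw_add]
        have e2 : α * ((l:ℝ) - σ j) + α * σ j = α * l := by ring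
        rw [e2]
        have := (hm l (Finset.mem_filter.1 hl1).2).2
        rw [hl2] at this
        gcongr
        rw [mul_comm, ← tw_rpow]
        gcongr
    _ = (∑ l ∈ L' with m l = j, ENNReal.ofReal (Real.exp (-(α * Real.log 2) * |((l - σ j : ℤ):ℝ)|))) * (tw (α * σ j) * tw (β * j)) := by
        rw [Finset.sum_mul]
    _ ≤ _ := by
        gcongr
        refine (ENNReal.sum_le_tsum _).trans (le_of_eq ?_)
        exact (Equiv.subRight (σ j)).tsum_eq (fun k : ℤ => ENNReal.ofReal (Real.exp (-(α * Real.log 2) * |(k:ℝ)|)))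

lemma exhaust_fam {Ω : Type*} [MeasurableSpace Ω] (ν : Measure Ω) [SigmaFinite ν] (A : ℤ → Set Ω)
    (hA : ∀ l, MeasurableSet (A l)) {α β : ℝ} (hβ : 0 < β) {D : ℝ≥0∞}
    (h : ∀ A' : ℤ → Set Ω, (∀ l, MeasurableSet (A' l)) → (∀ l, A' l ⊆ A l) → (∀ l, ν (A' l) ≠ ∞) → ∀ L : Finset ℤ,
      ∑ l ∈ L, tw (α * (l:ℤ)) * ν (A' l) ^ β ≤ D) :
    ∑' l : ℤ, tw (α * (l:ℤ)) * ν (A l) ^ β ≤ D := by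
  rw [ENNReal.tsum_eq_iSup_sum]
  apply iSup_le
  intro L
  have ht : Tendsto (fun k : ℕ => ∑ l ∈ L, tw (α * (l:ℤ)) * ν (A l ∩ spanningSets ν k) ^ β) atTop
      (nhds (∑ l ∈ L, tw (α * (l:ℤ)) * ν (A l) ^ β)) := by
    apply tendsto_finsetSum
    intro l _
    apply ENNReal.Tendsto.const_mul _ (Or.inr (tw_ne_top _))
    apply (ENNReal.continuous_rpow_const.tendsto _).comp
    have h1 := tendsto_measure_iUnion_atTop (μ := ν) (s := fun k => A l ∩ spanningSets ν k)
      (fun i j hij => inter_subset_inter_right _ (monotone_spanningSets ν hij))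
    rw [← inter_iUnion, iUnion_spanningSets, inter_univ] at h1
    exact h1
  refine le_of_tendsto' ht fun k => ?_
  refine h (fun l => A l ∩ spanningSets ν k) (fun l => (hA l).inter (measurableSet_spanningSets ν k)) (fun l => inter_subset_left) ?_ L
  intro l
  exact ne_top_of_le_ne_top (measure_spanningSets_lt_top ν k).ne (measure_mono inter_subset_right)

end LX

namespace LX

def dlev {Ω : Type*} (ψ : Ω → ℝ≥0∞) (k : ℤ) : Set Ω := {z | tw k ≤ ψ z ∧ ψ z < tw (k + 1)}

lemma dlev_meas {Ω : Type*} [MeasurableSpace Ω] {ψ : Ω → ℝ≥0∞} (h : Measurable ψ) (k : ℤ) :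
    MeasurableSet (dlev ψ k) :=
  (measurableSet_le measurable_const h).inter (measurableSet_lt h measurable_const)

lemma dlev_disj {Ω : Type*} (ψ : Ω → ℝ≥0∞) : Pairwise (Function.onFun Disjoint (dlev ψ)) := by
  have key : ∀ i j : ℤ, i < j → ∀ z, z ∈ dlev ψ i → z ∈ dlev ψ j → False := by
    intro i j hij z h1 h2
    have : tw ((i:ℝ) + 1) ≤ tw j := tw_le (by exact_mod_cast hij)
    exact absurd (h1.2.trans_le this) (not_lt.2 h2.1)
  intro i j hij
  refine Set.disjoint_left.2 fun z h1 h2 => ?_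
  rcases lt_or_gt_of_ne hij with h | h
  · exact key i j h z h1 h2
  · exact key j i h z h2 h1

lemma dlev_union {Ω : Type*} (ψ : Ω → ℝ≥0∞) : ⋃ k, dlev ψ k = {z | ψ z ≠ 0 ∧ ψ z ≠ ∞} := by
  ext z
  simp only [mem_iUnion, mem_ofPred_eq]
  constructor
  · rintro ⟨k, h1, h2⟩
    refine ⟨fun h => ?_, ne_top_of_lt h2⟩
    rw [h] at h1
    exact tw_ne_zero _ (le_zero_iff.1 h1)
  · rintro ⟨h1, h2⟩
    obtain ⟨m, hm1, hm2⟩ := exists_tw h1 h2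
    refine ⟨m - 1, ?_, ?_⟩
    · push_cast; exact hm1
    · push_cast; simpa using hm2

lemma layer {Ω : Type*} [MeasurableSpace Ω] (μ : Measure Ω) {ψ : Ω → ℝ≥0∞} (h : Measurable ψ) {r : ℝ} (hr : 0 < r)
    (hfin : ∫⁻ z, ψ z ^ r ∂μ ≠ ∞) :
    ∫⁻ z, ψ z ^ r ∂μ = ∑' k : ℤ, ∫⁻ z in dlev ψ k, ψ z ^ r ∂μ := by
  have hS : MeasurableSet {z | ψ z ≠ 0 ∧ ψ z ≠ ∞} :=
    (h (measurableSet_singleton 0)).compl.inter (h (measurableSet_singleton ∞)).compl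
  rw [← lintegral_iUnion (fun k => dlev_meas h k) (dlev_disj ψ), dlev_union,
    ← lintegral_indicator hS]
  apply lintegral_congr_ae
  have := ae_lt_top (h.pow_const r) hfin
  filter_upwards [this] with z hz
  have h2 : ψ z ≠ ∞ := by
    intro h3; rw [h3, ENNReal.top_rpow_of_pos hr] at hz; exact absurd hz (by simp)
  by_cases h0 : ψ z = 0
  · simp [indicator, h0, hr]
  · simp [indicator, h0, h2]

lemma lay_lower {Ω : Type*} [MeasurableSpace Ω] (μ : Measure Ω) {ψ : Ω → ℝ≥0∞} (h : Measurable ψ) {r : ℝ} (hr : 0 < r) (k : ℤ) :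
    tw (r * k) * μ (dlev ψ k) ≤ ∫⁻ z in dlev ψ k, ψ z ^ r ∂μ := by
  rw [← setLIntegral_const]
  apply setLIntegral_mono' (dlev_meas h k)
  intro z hz
  rw [mul_comm, ← tw_rpow]
  exact ENNReal.rpow_le_rpow hz.1 hr.le

lemma lay_upper {Ω : Type*} [MeasurableSpace Ω] (μ : Measure Ω) {ψ : Ω → ℝ≥0∞} (h : Measurable ψ) {r : ℝ} (hr : 1 ≤ r) (k : ℤ) :
    ∫⁻ z in dlev ψ k, ψ z ^ r ∂μ ≤ tw ((r - 1) * (k + 1)) * ∫⁻ z in dlev ψ k, ψ z ∂μ := by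
  rw [← lintegral_const_mul _ h]
  apply setLIntegral_mono' (dlev_meas h k)
  intro z hz
  have e : ψ z ^ r = ψ z ^ (r - 1) * ψ z := by
    nth_rewrite 3 [← ENNReal.rpow_one (ψ z)]
    rw [← ENNReal.rpow_add_of_nonneg _ _ (by linarith) (by norm_num)]
    congr 1; ring
  rw [e]
  apply mul_le_mul' _ le_rfl
  rw [mul_comm, ← tw_rpow]
  exact ENNReal.rpow_le_rpow hz.2.le (by linarith)

lemma restrict_strip {n : ℕ} (T : Set ℝ) :
    (volume : Measure (Pt n)).restrict (T ×ˢ univ) = (volume.restrict T).prod volume := by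
  rw [Measure.volume_eq_prod, ← Measure.prod_restrict, Measure.restrict_univ]

lemma strip_int {n : ℕ} (T : Set ℝ) {g : Pt n → ℝ≥0∞} (hg : Measurable g) :
    ∫⁻ z in T ×ˢ univ, g z = ∫⁻ t in T, ∫⁻ y, g (t, y) := by
  rw [restrict_strip, lintegral_prod _ hg.aemeasurable]

lemma mixed_core {n : ℕ} (hn : 2 ≤ n) {p P q r : ℝ} (hP : ((n:ℝ) + 3) / 2 < P) (hpP : p.HolderConjugate P)
    (hr1 : 1 < r) (hq : 1 / q = ((n:ℝ) + 1) / (2 * P)) (hr : 1 / r = 1 - ((n:ℝ) + 1) / (n * P)) :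
    ∃ C : ℝ≥0∞, C ≠ ∞ ∧ ∀ h : Pt n → ℝ≥0∞, Measurable h → ∀ T' : ℤ → Set ℝ, (∀ l, MeasurableSet (T' l)) →
      (∀ l, T' l ⊆ dlev (fun t => ∫⁻ y, ray h (t, y) ^ r) l) → ∀ (J : Finset ℤ) (σ : ℤ → ℤ),
      (∀ m ∈ J, tw (m - 1) ≤ volume (T' (σ m)) ∧ volume (T' (σ m)) < tw m) →
      ∑ m ∈ J, tw (σ m / r + m / q) ^ p ≤ (C * (∫⁻ z, h z ^ p) ^ (1 / p)) ^ p := by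
  obtain ⟨C, hC, hD⟩ := dualO hn hP (by linarith : 0 < r) hpP
  have hP0 := hpP.symm.pos
  have hn0 : (0:ℝ) < n := by positivity
  have hr0 : 0 < r := by linarith
  refine ⟨2 * (C * tw ((r - 1) * P + 1 / n + 1)) ^ (1 / P), ?_, ?_⟩
  · exact ENNReal.mul_ne_top (by simp) (ENNReal.rpow_ne_top_of_nonneg (by positivity) (ENNReal.mul_ne_top hC (tw_ne_top _)))
  intro h hh T' hT' hTl J σ hJ
  classical
  have hg : Measurable (ray h) := measurable_ray hh
  set g := ray h with hgdef
  set G : ℝ → ℝ≥0∞ := fun t => ∫⁻ y, g (t, y) ^ r with hGdef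
  have hgr : Measurable (fun z => g z ^ r) := hg.pow_const r
  -- the integral of G over the selected sets
  have hI1 : ∀ m ∈ J, tw (σ m + m - 1) ≤ ∫⁻ t in T' (σ m), G t := by
    intro m hm
    calc tw (σ m + m - 1) = tw (σ m) * tw (m - 1) := by rw [← tw_add]; congr 1; ring
      _ ≤ tw (σ m) * volume (T' (σ m)) := mul_le_mul' le_rfl (hJ m hm).1
      _ = ∫⁻ t in T' (σ m), tw (σ m) := by rw [setLIntegral_const]
      _ ≤ _ := setLIntegral_mono' (hT' _) fun t ht => (hTl _ ht).1
  have hI2 : ∀ m ∈ J, ∫⁻ t in T' (σ m), G t ≤ tw (σ m + 1 + m) := by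
    intro m hm
    calc ∫⁻ t in T' (σ m), G t ≤ ∫⁻ t in T' (σ m), tw (σ m + 1) :=
          setLIntegral_mono' (hT' _) fun t ht => (hTl _ ht).2.le
      _ = tw (σ m + 1) * volume (T' (σ m)) := by rw [setLIntegral_const]
      _ ≤ tw (σ m + 1) * tw m := mul_le_mul' le_rfl (hJ m hm).2.le
      _ = _ := (tw_add _ _).symm
  -- blocks
  let F : ℤ → ℤ → Set (Pt n) := fun m k => dlev g k ∩ (T' (σ m) ×ˢ univ)
  have hFm : ∀ m k, MeasurableSet (F m k) := fun m k => (dlev_meas hg k).inter ((hT' _).prod MeasurableSet.univ)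
  have hsl : ∀ m k, ∀ t, volume {y : Fin n → ℝ | (t, y) ∈ F m k} ≤ ENNReal.ofReal (2 ^ ((σ m + 1 : ℝ) - r * k)) := by
    intro m k t
    rw [tw_ofReal]
    by_cases ht : t ∈ T' (σ m)
    · have h1 : tw (r * k) * volume {y : Fin n → ℝ | (t, y) ∈ F m k} ≤ G t := by
        have hs : {y : Fin n → ℝ | (t, y) ∈ F m k} ⊆ dlev (fun y => g (t, y)) k := by
          intro y hy; exact hy.1
        have hgt : Measurable (fun y => g (t, y)) := hg.comp measurable_prodMk_left
        calc _ ≤ tw (r * k) * volume (dlev (fun y => g (t, y)) k) := mul_le_mul' le_rfl (measure_mono hs)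
          _ ≤ _ := lay_lower _ hgt hr0 k
          _ ≤ _ := setLIntegral_le_lintegral _ _
      have h2 : G t ≤ tw (σ m + 1) := (hTl _ ht).2.le
      have e : tw ((σ m + 1 : ℝ)) = tw (r * k) * tw ((σ m + 1 : ℝ) - r * k) := by
        rw [← tw_add]; congr 1; ring
      rw [e] at h2
      exact (ENNReal.mul_le_mul_iff_right (tw_ne_zero _) (tw_ne_top _)).1 (h1.trans h2)
    · have : {y : Fin n → ℝ | (t, y) ∈ F m k} = ∅ := by
        ext y
        simp only [mem_ofPred_eq, mem_empty_iff_false, iff_false]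
        intro hy; exact ht hy.2.1
      rw [this]; simp
  have hBex : ∀ i : ℤ × ℤ, ∃ b : Blk n, b.τ = 2 ^ (i.1 : ℝ) ∧ b.μ = 2 ^ ((σ i.1 + 1 : ℝ) - r * i.2) ∧
      b.F = if i.1 ∈ J then F i.1 i.2 else ∅ := by
    intro i
    by_cases hi : i.1 ∈ J
    · refine ⟨⟨F i.1 i.2, T' (σ i.1), 2 ^ (i.1 : ℝ), 2 ^ ((σ i.1 + 1 : ℝ) - r * i.2), hFm _ _, hT' _, ?_, by positivity, by positivity, ?_, ?_⟩, rfl, rfl, ?_⟩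
      · intro z hz; exact hz.2.1
      · rw [tw_ofReal]; exact (hJ _ hi).2
      · exact hsl _ _
      · simp [hi]
    · refine ⟨⟨∅, ∅, 2 ^ (i.1 : ℝ), 2 ^ ((σ i.1 + 1 : ℝ) - r * i.2), MeasurableSet.empty, MeasurableSet.empty, ?_, by positivity, by positivity, ?_, ?_⟩, rfl, rfl, ?_⟩
      · intro z hz; exact absurd hz (by simp)
      · rw [tw_ofReal]; simpa using (tw_ne_zero _).bot_lt
      · simp
      · simp [hi]
  choose B hBτ hBμ hBF using hBex
  -- layer facts
  have hstrip : ∀ m ∈ J, ∫⁻ t in T' (σ m), G t = ∑' k : ℤ, ∫⁻ z in F m k, g z ^ r := by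
    intro m hm
    have h1 : ∫⁻ z in T' (σ m) ×ˢ univ, g z ^ r = ∫⁻ t in T' (σ m), G t := strip_int _ hgr
    rw [← h1, layer _ hg hr0]
    · apply tsum_congr
      intro k
      rw [Measure.restrict_restrict (dlev_meas hg k)]
    · rw [h1]; exact ne_top_of_le_ne_top (tw_ne_top _) (hI2 m hm)
  have hup : ∀ m (k : ℤ), ∫⁻ z in F m k, g z ^ r ≤ tw ((r - 1) * (k + 1)) * ∫⁻ z in F m k, g z := by
    intro m k
    have := lay_upper (volume.restrict (T' (σ m) ×ˢ univ)) hg hr1.le k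
    rwa [Measure.restrict_restrict (dlev_meas hg k)] at this
  have hlo : ∀ m (k : ℤ), tw (r * k) * volume (F m k) ≤ ∫⁻ z in F m k, g z ^ r := by
    intro m k
    have := lay_lower (volume.restrict (T' (σ m) ×ˢ univ)) hg hr0 k
    rwa [Measure.restrict_restrict (dlev_meas hg k), Measure.restrict_apply (dlev_meas hg k)] at this
  refine ext_dual hpP J (fun m => tw (σ m / r + m / q)) (fun _ => tw_ne_top _) ?_
  intro x hx
  let e : ℤ → ℝ≥0∞ := fun m => if m ∈ J then x m * tw (-(σ m * (1 - 1 / r)) - m * (1 - 1 / q)) else 0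
  let c : ℤ × ℤ → ℝ≥0∞ := fun i => e i.1 * tw ((r - 1) * (i.2 + 1))
  have hmain := hD (fun m => σ m + 1) B hBτ hBμ c h hh
  have hL : ∑ m ∈ J, x m * tw (σ m / r + m / q) ≤ 2 * ∑' i, c i * ∫⁻ l in (B i).F, g l := by
    rw [ENNReal.tsum_prod', ← ENNReal.tsum_mul_left]
    refine le_trans ?_ (ENNReal.sum_le_tsum J)
    apply Finset.sum_le_sum
    intro m hm
    have he : e m = x m * tw (-(σ m * (1 - 1 / r)) - m * (1 - 1 / q)) := if_pos hm
    calc x m * tw (σ m / r + m / q) = 2 * (e m * tw (σ m + m - 1)) := by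
          rw [he, mul_assoc, ← tw_add, ← tw_one, mul_left_comm, ← tw_add]
          congr 2; ring
      _ ≤ 2 * (e m * ∑' k : ℤ, ∫⁻ z in F m k, g z ^ r) := by
          rw [← hstrip m hm]
          exact mul_le_mul' le_rfl (mul_le_mul' le_rfl (hI1 m hm))
      _ ≤ 2 * ∑' k : ℤ, c (m, k) * ∫⁻ l in (B (m, k)).F, g l := by
          apply mul_le_mul' le_rfl
          rw [← ENNReal.tsum_mul_left]
          apply ENNReal.tsum_le_tsum
          intro k
          rw [hBF]
          simp only [hm, if_true, c]
          rw [mul_assoc]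
          exact mul_le_mul' le_rfl (hup m k)
  have hR : ∑' i : ℤ × ℤ, c i ^ P * (tw ((P - (n+3)/2) * i.1 + ((σ i.1 + 1 : ℝ) - r * i.2) / n) * volume (B i).F) ≤
      tw ((r - 1) * P + 1 / n + 1) * ∑ m ∈ J, x m ^ P := by
    rw [ENNReal.tsum_prod', tsum_eq_sum (s := J), Finset.mul_sum]
    · apply Finset.sum_le_sum
      intro m hm
      have he : e m = x m * tw (-(σ m * (1 - 1 / r)) - m * (1 - 1 / q)) := if_pos hm
      have hr2 : P * (r - 1) = r + r / n := by
        have : r ≠ 0 := hr0.ne'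
        field_simp at hr ⊢
        linarith
      calc _ = ∑' k : ℤ, (e m ^ P * tw ((r - 1) * P + (P - (n+3)/2) * m + (σ m + 1) / n)) * (tw (r * k) * volume (F m k)) := by
            apply tsum_congr
            intro k
            rw [hBF]
            simp only [hm, if_true, c]
            rw [ENNReal.mul_rpow_of_nonneg _ _ hP0.le, tw_rpow]
            have : tw ((r - 1) * (k + 1) * P) * tw ((P - (n+3)/2) * m + ((σ m + 1 : ℝ) - r * k) / n) =
              tw ((r - 1) * P + (P - (n+3)/2) * m + (σ m + 1) / n) * tw (r * k) := by
              rw [← tw_add, ← tw_add]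
              congr 1
              have h3 : (r - 1) * (k + 1) * P = (r - 1) * P + (r + r / n) * k := by rw [← hr2]; ring
              rw [h3]; ring
            calc _ = e m ^ P * (tw ((r - 1) * (k + 1) * P) * tw ((P - (n+3)/2) * m + ((σ m + 1 : ℝ) - r * k) / n)) * volume (F m k) := by ring
              _ = _ := by rw [this]; ring
        _ = (e m ^ P * tw ((r - 1) * P + (P - (n+3)/2) * m + (σ m + 1) / n)) * ∑' k : ℤ, (tw (r * k) * volume (F m k)) := ENNReal.tsum_mul_left
        _ ≤ (e m ^ P * tw ((r - 1) * P + (P - (n+3)/2) * m + (σ m + 1) / n)) * tw (σ m + 1 + m) := by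
            apply mul_le_mul' le_rfl
            refine le_trans ?_ (hI2 m hm)
            rw [hstrip m hm]
            exact ENNReal.tsum_le_tsum (hlo m)
        _ = _ := by
            rw [he, ENNReal.mul_rpow_of_nonneg _ _ hP0.le, tw_rpow, mul_assoc, mul_assoc, ← tw_add, ← tw_add, mul_comm]
            congr 2
            rw [hr, hq]
            field_simp
            ring
    · intro m hm
      simp only [ENNReal.tsum_eq_zero]
      intro k
      rw [hBF]
      simp [hm]
  calc _ ≤ _ := hL
    _ ≤ 2 * ((∫⁻ z, h z ^ p) ^ (1 / p) * (C * (tw ((r - 1) * P + 1 / n + 1) * ∑ m ∈ J, x m ^ P)) ^ (1 / P)) := by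
        apply mul_le_mul' le_rfl
        refine hmain.trans ?_
        apply mul_le_mul' le_rfl
        apply ENNReal.rpow_le_rpow _ (by positivity)
        exact mul_le_mul' le_rfl hR
    _ = _ := by
        rw [← mul_assoc C, ENNReal.mul_rpow_of_nonneg _ _ (by positivity)]
        ring

end LX

namespace LX

lemma reindex (f : ℤ × ℤ → ℝ≥0∞) : ∑' i, f i = ∑' j : ℤ, ∑' k : ℤ, f (j + k, k) := by
  rw [ENNReal.tsum_prod', ENNReal.tsum_comm]
  conv_rhs => rw [ENNReal.tsum_comm]
  apply tsum_congr
  intro k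
  exact ((Equiv.addRight k).tsum_eq (fun a => f (a, k))).symm

lemma vol_eq_slices {n : ℕ} {D : Set (Pt n)} (hD : MeasurableSet D) :
    volume D = ∫⁻ t, volume {y : Fin n → ℝ | (t, y) ∈ D} := by
  rw [Measure.volume_eq_prod, Measure.prod_apply hD]; rfl

lemma diag_core {n : ℕ} (hn : 2 ≤ n) {p P q : ℝ} (hP : P = ((n:ℝ) + 3) / 2 + 1 / n) (hpP : p.HolderConjugate P)
    (hq : 1 / q = ((n:ℝ) + 1) / (2 * P)) :
    ∃ C : ℝ≥0∞, C ≠ ∞ ∧ ∀ h : Pt n → ℝ≥0∞, Measurable h → ∀ E' : ℤ → Set (Pt n), (∀ l, MeasurableSet (E' l)) →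
      (∀ l, E' l ⊆ dlev (ray h) l) → ∀ (J : Finset ℤ) (σ : ℤ → ℤ),
      (∀ m ∈ J, tw (m - 1) ≤ volume (E' (σ m)) ∧ volume (E' (σ m)) < tw m) →
      ∑ m ∈ J, tw (σ m + m / q) ^ p ≤ (C * (∫⁻ z, h z ^ p) ^ (1 / p)) ^ p := by
  have hn0 : (0:ℝ) < n := by positivity
  have hP1 : ((n:ℝ) + 3) / 2 < P := by rw [hP]; have : 0 < 1 / (n:ℝ) := by positivity
                                       linarith
  obtain ⟨C, hC, hD⟩ := dualO hn hP1 (by norm_num : (0:ℝ) < 1) hpP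
  have hP0 := hpP.symm.pos
  refine ⟨2 * (C * tw (1 / n)) ^ (1 / P), ?_, ?_⟩
  · exact ENNReal.mul_ne_top (by simp) (ENNReal.rpow_ne_top_of_nonneg (by positivity) (ENNReal.mul_ne_top hC (tw_ne_top _)))
  intro h hh E' hE' hEl J σ hJ
  classical
  set g := ray h with hgdef
  have hg : Measurable g := measurable_ray hh
  let ψ : ℤ → ℝ → ℝ≥0∞ := fun j t => volume {y : Fin n → ℝ | (t, y) ∈ E' (σ j)}
  have hψ : ∀ j, Measurable (ψ j) := fun j => measurable_measure_prodMk_left (hE' _)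
  let T : ℤ → ℤ → Set ℝ := fun j k => dlev (ψ j) (-k)
  have hT : ∀ j k, MeasurableSet (T j k) := fun j k => dlev_meas (hψ j) _
  let F : ℤ → ℤ → Set (Pt n) := fun j k => E' (σ j) ∩ (T j k ×ˢ univ)
  have hFm : ∀ j k, MeasurableSet (F j k) := fun j k => (hE' _).inter ((hT j k).prod MeasurableSet.univ)
  have hvF : ∀ j k, volume (F j k) = ∫⁻ t in T j k, ψ j t := by
    intro j k
    rw [vol_eq_slices (hFm j k), ← lintegral_indicator (hT j k)]
    apply lintegral_congr
    intro t
    by_cases ht : t ∈ T j k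
    · rw [indicator_of_mem ht]
      congr 1
      ext y
      simp [F, ht]
    · rw [indicator_of_notMem ht]
      have : {y : Fin n → ℝ | (t, y) ∈ F j k} = ∅ := by
        ext y; simp [F, ht]
      rw [this]; simp
  have hsum : ∀ j ∈ J, volume (E' (σ j)) = ∑' k : ℤ, volume (F j k) := by
    intro j hj
    have hv : volume (E' (σ j)) = ∫⁻ t, ψ j t ^ (1:ℝ) := by
      rw [vol_eq_slices (hE' _)]; simp [ψ]
    have hfin : ∫⁻ t, ψ j t ^ (1:ℝ) ≠ ∞ := by rw [← hv]; exact ne_top_of_lt (hJ j hj).2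
    rw [hv, layer volume (hψ j) one_pos hfin, ← (Equiv.neg ℤ).tsum_eq]
    apply tsum_congr
    intro k
    rw [hvF]
    simp [T]
  have hsl : ∀ j k, ∀ t, volume {y : Fin n → ℝ | (t, y) ∈ F j k} ≤ ENNReal.ofReal (2 ^ ((1 : ℝ) - 1 * (k:ℤ))) := by
    intro j k t
    rw [tw_ofReal]
    by_cases ht : t ∈ T j k
    · calc volume {y : Fin n → ℝ | (t, y) ∈ F j k} ≤ ψ j t := measure_mono fun y hy => hy.1
        _ ≤ tw (((-k : ℤ) : ℝ) + 1) := ht.2.le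
        _ = _ := by congr 1; push_cast; ring
    · have : {y : Fin n → ℝ | (t, y) ∈ F j k} = ∅ := by
        ext y; simp [F, ht]
      rw [this]; simp
  have hTv : ∀ j ∈ J, ∀ k : ℤ, volume (T j k) < tw (j + k) := by
    intro j hj k
    have h1 : tw (1 * ((-k : ℤ) : ℝ)) * volume (T j k) < tw j := by
      calc _ ≤ _ := lay_lower volume (hψ j) one_pos (-k)
        _ = volume (F j k) := by rw [hvF]; simp [T]
        _ ≤ volume (E' (σ j)) := measure_mono inter_subset_left
        _ < tw j := (hJ j hj).2
    have e : tw (j:ℝ) = tw (1 * ((-k : ℤ) : ℝ)) * tw (j + k) := by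
      rw [← tw_add]; congr 1; push_cast; ring
    rw [e] at h1
    exact (ENNReal.mul_lt_mul_iff_right (tw_ne_zero _) (tw_ne_top _)).1 h1
  have hBex : ∀ i : ℤ × ℤ, ∃ b : Blk n, b.τ = 2 ^ (i.1 : ℝ) ∧ b.μ = 2 ^ ((1 : ℝ) - 1 * i.2) ∧
      b.F = if i.1 - i.2 ∈ J then F (i.1 - i.2) i.2 else ∅ := by
    intro i
    by_cases hi : i.1 - i.2 ∈ J
    · refine ⟨⟨F (i.1 - i.2) i.2, T (i.1 - i.2) i.2, 2 ^ (i.1 : ℝ), 2 ^ ((1 : ℝ) - 1 * i.2), hFm _ _, hT _ _, ?_, by positivity, by positivity, ?_, ?_⟩, rfl, rfl, ?_⟩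
      · intro z hz; exact hz.2.1
      · rw [tw_ofReal]
        have := hTv _ hi i.2
        push_cast at this
        simpa using this
      · exact hsl _ _
      · simp [hi]
    · refine ⟨⟨∅, ∅, 2 ^ (i.1 : ℝ), 2 ^ ((1 : ℝ) - 1 * i.2), MeasurableSet.empty, MeasurableSet.empty, ?_, by positivity, by positivity, ?_, ?_⟩, rfl, rfl, ?_⟩
      · intro z hz; exact absurd hz (by simp)
      · rw [tw_ofReal]; simpa using (tw_ne_zero _).bot_lt
      · simp
      · simp [hi]
  choose B hBτ hBμ hBF using hBex
  have hBF' : ∀ j ∈ J, ∀ k, (B (j + k, k)).F = F j k := by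
    intro j hj k
    rw [hBF]; simp [hj]
  refine ext_dual hpP J (fun m => tw (σ m + m / q)) (fun _ => tw_ne_top _) ?_
  intro x hx
  let e : ℤ → ℝ≥0∞ := fun m => if m ∈ J then x m * tw (- (m * (1 - 1 / q))) else 0
  let c : ℤ × ℤ → ℝ≥0∞ := fun i => e (i.1 - i.2)
  have hmain := hD (fun m => 1) B hBτ hBμ c h hh
  have hL : ∑ m ∈ J, x m * tw (σ m + m / q) ≤ 2 * ∑' i, c i * ∫⁻ l in (B i).F, g l := by
    rw [reindex, ← ENNReal.tsum_mul_left]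
    refine le_trans ?_ (ENNReal.sum_le_tsum J)
    apply Finset.sum_le_sum
    intro m hm
    have he : e m = x m * tw (- (m * (1 - 1 / q))) := if_pos hm
    calc x m * tw (σ m + m / q) = 2 * (e m * (tw (σ m) * tw (m - 1))) := by
          rw [he, mul_assoc, ← tw_add, ← tw_add, ← tw_one, mul_left_comm, ← tw_add]
          congr 2; ring
      _ ≤ 2 * (e m * (tw (σ m) * ∑' k : ℤ, volume (F m k))) := by
          rw [← hsum m hm]
          exact mul_le_mul' le_rfl (mul_le_mul' le_rfl (mul_le_mul' le_rfl (hJ m hm).1))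
      _ ≤ 2 * ∑' k : ℤ, c (m + k, k) * ∫⁻ l in (B (m + k, k)).F, g l := by
          apply mul_le_mul' le_rfl
          rw [← ENNReal.tsum_mul_left, ← ENNReal.tsum_mul_left]
          apply ENNReal.tsum_le_tsum
          intro k
          rw [hBF' m hm]
          simp only [c, add_sub_cancel_right]
          apply mul_le_mul' le_rfl
          rw [← setLIntegral_const]
          exact setLIntegral_mono' (hFm m k) fun z hz => (hEl _ hz.1).1
  have hR : ∑' i : ℤ × ℤ, c i ^ P * (tw ((P - (n+3)/2) * i.1 + ((1 : ℝ) - 1 * i.2) / n) * volume (B i).F) ≤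
      tw (1 / n) * ∑ m ∈ J, x m ^ P := by
    rw [reindex, tsum_eq_sum (s := J), Finset.mul_sum]
    · apply Finset.sum_le_sum
      intro m hm
      have he : e m = x m * tw (- (m * (1 - 1 / q))) := if_pos hm
      calc _ = ∑' k : ℤ, (e m ^ P * tw ((m + 1) / n)) * volume (F m k) := by
            apply tsum_congr
            intro k
            rw [hBF' m hm]
            simp only [c, add_sub_cancel_right]
            rw [mul_assoc]
            congr 3
            rw [hP]; push_cast; ring
        _ = (e m ^ P * tw ((m + 1) / n)) * ∑' k : ℤ, volume (F m k) := ENNReal.tsum_mul_left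
        _ ≤ (e m ^ P * tw ((m + 1) / n)) * tw m := by
            apply mul_le_mul' le_rfl
            rw [← hsum m hm]
            exact (hJ m hm).2.le
        _ = _ := by
            rw [he, ENNReal.mul_rpow_of_nonneg _ _ hP0.le, tw_rpow, mul_assoc, mul_assoc, ← tw_add, ← tw_add, mul_comm]
            congr 2
            have h2 : P * (1 - 1 / q) = 1 + 1 / n := by
              rw [hq]
              have : P * (1 - (n + 1) / (2 * P)) = P - (n+1)/2 := by field_simp
              rw [this, hP]; ring
            have h3 : -(m * (1 - 1 / q)) * P = - m * (P * (1 - 1 / q)) := by ring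
            rw [h3, h2]; ring
    · intro m hm
      simp only [ENNReal.tsum_eq_zero]
      intro k
      rw [hBF]
      simp [hm]
  calc _ ≤ _ := hL
    _ ≤ 2 * ((∫⁻ z, h z ^ p) ^ (1 / p) * (C * (tw (1 / n) * ∑ m ∈ J, x m ^ P)) ^ (1 / P)) := by
        apply mul_le_mul' le_rfl
        refine hmain.trans ?_
        apply mul_le_mul' le_rfl
        apply ENNReal.rpow_le_rpow _ (by positivity)
        exact mul_le_mul' le_rfl hR
    _ = _ := by
        rw [← mul_assoc C, ENNReal.mul_rpow_of_nonneg _ _ (by positivity)]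
        ring

end LX

namespace LX

lemma comb {p s a b : ℝ} (hp : 0 < p) (hs : p ≤ s) (ha : 0 < a) (hb : 0 < b) : ∃ K : ℝ≥0∞, K ≠ ∞ ∧
    ∀ {Ω : Type} [MeasurableSpace Ω] (ν : Measure Ω) [SigmaFinite ν] (A : ℤ → Set Ω), (∀ l, MeasurableSet (A l)) →
    ∀ D : ℝ≥0∞, (∀ A' : ℤ → Set Ω, (∀ l, MeasurableSet (A' l)) → (∀ l, A' l ⊆ A l) → ∀ (J : Finset ℤ) (σ : ℤ → ℤ),
      (∀ m ∈ J, tw (m - 1) ≤ ν (A' (σ m)) ∧ ν (A' (σ m)) < tw m) →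
      ∑ m ∈ J, tw (a * σ m + b * m) ^ p ≤ D ^ p) →
    (∑' l : ℤ, (tw (a * l) * ν (A l) ^ b) ^ s) ^ (1 / s) ≤ K * D := by
  obtain ⟨C, hC, hsel⟩ := select (mul_pos hp ha) (mul_pos hp hb)
  refine ⟨C ^ (1 / p), ENNReal.rpow_ne_top_of_nonneg (by positivity) hC, ?_⟩
  intro Ω _ ν _ A hA D hcore
  apply lp_ls hp hs
  have e1 : (C ^ (1 / p) * D) ^ p = C * D ^ p := by
    rw [ENNReal.mul_rpow_of_nonneg _ _ hp.le, ← ENNReal.rpow_mul, one_div_mul_cancel hp.ne', ENNReal.rpow_one]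
  rw [e1]
  have e2 : ∀ l : ℤ, (tw (a * l) * ν (A l) ^ b) ^ p = tw (p * a * l) * ν (A l) ^ (p * b) := by
    intro l
    rw [ENNReal.mul_rpow_of_nonneg _ _ hp.le, tw_rpow, ← ENNReal.rpow_mul]
    congr 2 <;> ring
  simp_rw [e2]
  refine exhaust_fam ν A hA (mul_pos hp hb) ?_
  intro A' hA' hsub hfin L
  obtain ⟨J, σ, hJ, hle⟩ := hsel (fun l => ν (A' l)) L hfin
  refine hle.trans ?_
  apply mul_le_mul' le_rfl
  refine le_trans (le_of_eq ?_) (hcore A' hA' hsub J σ hJ)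
  apply Finset.sum_congr rfl
  intro m _
  rw [tw_rpow, ← tw_add]
  congr 1; ring

theorem mixed_final {n : ℕ} (hn : 2 ≤ n) {p P q r s : ℝ} (hP : ((n:ℝ) + 3) / 2 < P) (hpP : p.HolderConjugate P)
    (hr1 : 1 < r) (hq0 : 0 < q) (hq : 1 / q = ((n:ℝ) + 1) / (2 * P)) (hr : 1 / r = 1 - ((n:ℝ) + 1) / (n * P)) (hs : p ≤ s) :
    ∃ C : ℝ≥0∞, C ≠ ∞ ∧ ∀ h : Pt n → ℝ≥0∞, Measurable h →
      mixedLorentzG volume q s r (ray h) ≤ C * (∫⁻ z, h z ^ p) ^ (1 / p) := by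
  obtain ⟨C, hC, hcore⟩ := mixed_core hn hP hpP hr1 hq hr
  have hr0 : 0 < r := by linarith
  have hp0 := hpP.pos
  have hs0 : 0 < s := hp0.trans_le hs
  obtain ⟨K, hK, hcomb⟩ := comb hp0 hs (one_div_pos.2 hr0) (one_div_pos.2 hq0)
  refine ⟨tw (1 / r) * (K * C), ENNReal.mul_ne_top (tw_ne_top _) (ENNReal.mul_ne_top hK hC), ?_⟩
  intro h hh
  have hg : Measurable (ray h) := measurable_ray hh
  have hgr : Measurable (fun z => ray h z ^ r) := hg.pow_const r
  have hG : Measurable (fun t => ∫⁻ y, ray h (t, y) ^ r) := hgr.lintegral_prod_right'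
  have h1 := hcomb (volume : Measure ℝ) (fun l => dlev (fun t => ∫⁻ y, ray h (t, y) ^ r) l) (fun l => dlev_meas hG l)
    (C * (∫⁻ z, h z ^ p) ^ (1 / p)) (by
      intro A' hA' hsub J σ hJ
      refine le_trans (le_of_eq ?_) (hcore h hh A' hA' hsub J σ hJ)
      apply Finset.sum_congr rfl
      intro m _
      congr 2; ring)
  have h2 : mixedLorentzG volume q s r (ray h) ≤
      tw (1 / r) * (∑' l : ℤ, (tw (1 / r * l) * volume (dlev (fun t => ∫⁻ y, ray h (t, y) ^ r) l) ^ (1 / q)) ^ s) ^ (1 / s) := by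
    unfold mixedLorentzG
    have e : tw (1 / r) = (tw (1 / r) ^ s) ^ (1 / s) := by
      rw [← ENNReal.rpow_mul, mul_one_div_cancel hs0.ne', ENNReal.rpow_one]
    rw [e, ← ENNReal.mul_rpow_of_nonneg _ _ (by positivity), ← ENNReal.tsum_mul_left]
    apply ENNReal.rpow_le_rpow _ (by positivity)
    apply ENNReal.tsum_le_tsum
    intro l
    rw [← ENNReal.mul_rpow_of_nonneg _ _ hs0.le]
    apply ENNReal.rpow_le_rpow _ hs0.le
    unfold mixedNormG
    have hle : ∀ t : ℝ, (∫⁻ y, (Set.indicator {z : ℝ × (Fin n → ℝ) | (2:ℝ≥0∞) ^ l ≤ (∫⁻ y, ray h (z.1, y) ^ r) ∧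
        (∫⁻ y, ray h (z.1, y) ^ r) < (2:ℝ≥0∞) ^ (l+1)} (ray h)) (t, y) ^ r) ^ (q / r) ≤
        (dlev (fun t => ∫⁻ y, ray h (t, y) ^ r) l).indicator (fun _ => tw ((l + 1) * (q / r))) t := by
      intro t
      by_cases ht : t ∈ dlev (fun t => ∫⁻ y, ray h (t, y) ^ r) l
      · rw [indicator_of_mem ht, ← tw_rpow]
        apply ENNReal.rpow_le_rpow _ (by positivity)
        refine le_trans (lintegral_mono fun y => ?_) ht.2.le
        apply ENNReal.rpow_le_rpow _ hr0.le
        exact indicator_le_self _ _ _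
      · rw [indicator_of_notMem ht]
        have hz : ∀ y, (Set.indicator {z : ℝ × (Fin n → ℝ) | (2:ℝ≥0∞) ^ l ≤ (∫⁻ y, ray h (z.1, y) ^ r) ∧
          (∫⁻ y, ray h (z.1, y) ^ r) < (2:ℝ≥0∞) ^ (l+1)} (ray h)) (t, y) = 0 := by
          intro y
          apply indicator_of_notMem
          intro hm
          apply ht
          have hm1 : (2:ℝ≥0∞) ^ l ≤ (∫⁻ y, ray h (t, y) ^ r) := hm.1
          have hm2 : (∫⁻ y, ray h (t, y) ^ r) < (2:ℝ≥0∞) ^ (l+1) := hm.2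
          rw [tw_int] at hm1 hm2
          push_cast at hm2
          exact ⟨hm1, hm2⟩
        simp_rw [hz]
        simp [hr0, hq0]
    calc _ ≤ (∫⁻ t : ℝ, (dlev (fun t => ∫⁻ y, ray h (t, y) ^ r) l).indicator (fun _ => tw ((l + 1) * (q / r))) t) ^ (1 / q) :=
          ENNReal.rpow_le_rpow (lintegral_mono hle) (by positivity)
      _ = _ := by
          rw [lintegral_indicator (dlev_meas hG l), setLIntegral_const, ENNReal.mul_rpow_of_nonneg _ _ (by positivity), tw_rpow,
            ← mul_assoc, ← tw_add]
          congr 2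
          field_simp
          ring
  calc _ ≤ _ := h2
    _ ≤ _ := mul_le_mul' le_rfl h1
    _ = _ := by ring

theorem diag_final {n : ℕ} (hn : 2 ≤ n) {p P q s : ℝ} (hP : P = ((n:ℝ) + 3) / 2 + 1 / n) (hpP : p.HolderConjugate P)
    (hq0 : 0 < q) (hq : 1 / q = ((n:ℝ) + 1) / (2 * P)) (hs : p ≤ s) :
    ∃ C : ℝ≥0∞, C ≠ ∞ ∧ ∀ h : Pt n → ℝ≥0∞, Measurable h →
      lorentzNorm volume q s (ray h) ≤ C * (∫⁻ z, h z ^ p) ^ (1 / p) := by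
  obtain ⟨C, hC, hcore⟩ := diag_core hn hP hpP hq
  have hp0 := hpP.pos
  obtain ⟨K, hK, hcomb⟩ := comb hp0 hs one_pos (one_div_pos.2 hq0)
  refine ⟨K * C, ENNReal.mul_ne_top hK hC, ?_⟩
  intro h hh
  have hg : Measurable (ray h) := measurable_ray hh
  have h1 := hcomb (volume : Measure (Pt n)) (fun l => dlev (ray h) l) (fun l => dlev_meas hg l)
    (C * (∫⁻ z, h z ^ p) ^ (1 / p)) (by
      intro A' hA' hsub J σ hJ
      refine le_trans (le_of_eq ?_) (hcore h hh A' hA' hsub J σ hJ)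
      apply Finset.sum_congr rfl
      intro m _
      congr 2; ring)
  rw [mul_assoc]
  refine le_trans (le_of_eq ?_) h1
  unfold lorentzNorm
  congr 1
  apply tsum_congr
  intro l
  have : {z | (2:ℝ≥0∞) ^ l ≤ ray h z ∧ ray h z < (2:ℝ≥0∞) ^ (l+1)} = dlev (ray h) l := by
    unfold dlev
    rw [tw_int, tw_int]; push_cast; rfl
  rw [this, tw_int, one_mul]

end LX

/-- Lorentz space improvement in the target:
`X : L^{p_θ} → L^{q_θ,s}_t L^{r_θ}_y` for `p_θ < s < q_θ` (ordinary Lorentz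
space when `θ = θ₀`). -/
theorem lorentz_target_bound (d : ℕ) (hd : 3 ≤ d) (θ : ℝ)
    (hθ : θ ∈ Set.Ioo (0:ℝ) 1) (s : ℝ) (hs1 : pExp d θ < s) (hs2 : s < qExp d θ) :
    ∃ C : ℝ, 0 < C ∧
      ∀ f : Pt (d-1) → ℝ, Measurable f → 0 ≤ f →
        (θ ≠ theta0 d →
          mixedLorentzG volume (qExp d θ) s (rExp d θ) (Xray (d-1) f) ≤
            ENNReal.ofReal C * srcNorm d θ f) ∧
        (θ = theta0 d →
          lorentzNorm volume (qExp d θ) s (Xray (d-1) f) ≤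
            ENNReal.ofReal C * srcNorm d θ f) := by
  obtain ⟨n, rfl⟩ : ∃ n, d = n + 1 := ⟨d - 1, by omega⟩
  have hn : 2 ≤ n := by omega
  obtain ⟨hθ0, hθ1⟩ := hθ
  have hn2 : (2:ℝ) ≤ n := by exact_mod_cast hn
  have hn0 : (0:ℝ) < n := by linarith
  set p := pExp (n+1) θ with hp
  set q := qExp (n+1) θ with hq
  set r := rExp (n+1) θ with hr
  set P : ℝ := ((n:ℝ) + 3) / (2 * θ) with hPdef
  have hP0 : 0 < P := by positivity
  have hPgt : ((n:ℝ) + 3) / 2 < P := by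
    rw [hPdef, div_lt_div_iff₀ (by norm_num) (by positivity)]
    nlinarith
  have hPinv : 1 / P = 2 * θ / (n + 3) := by rw [hPdef, one_div_div]
  have hpinv : p⁻¹ = 1 - P⁻¹ := by
    rw [hp, pExp, inv_inv, ← one_div P, hPinv]; push_cast
    have : (n:ℝ) + 1 + 2 ≠ 0 := by positivity
    field_simp
    ring
  have hP1 : 1 < P := by linarith
  have hPP : P⁻¹ < 1 := inv_lt_one_of_one_lt₀ hP1
  have hp0 : 0 < p := by rw [← inv_pos, hpinv]; linarith
  have hpP : p.HolderConjugate P := by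
    have := inv_pos.2 hP0
    rw [Real.holderConjugate_iff]
    refine ⟨?_, by rw [hpinv]; ring⟩
    rw [← inv_lt_one₀ hp0, hpinv]
    linarith
  have hqinv : 1 / q = ((n:ℝ) + 1) / (2 * P) := by
    rw [hq, qExp, one_div, inv_inv, hPdef]; push_cast
    have : (n:ℝ) + 1 + 2 ≠ 0 := by positivity
    field_simp
    ring
  have hq0 : 0 < q := by rw [← one_div_pos, hqinv]; positivity
  have hrinv : 1 / r = 1 - ((n:ℝ) + 1) / (n * P) := by
    rw [hr, rExp, one_div, inv_inv, hPdef]; push_cast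
    have e1 : ((n:ℝ) + 1)^2 - (n+1) - 2 = (n - 1) * (n + 2) := by ring
    have e2 : ((n:ℝ) + 1)^2 + (n+1) - 2 = n * (n + 3) := by ring
    rw [e1, e2]
    field_simp
    ring
  have hr1 : 1 < r := by
    have h1 : 0 < 1 / r := by
      rw [hrinv, sub_pos, div_lt_one (by positivity)]
      nlinarith
    have hr0 : 0 < r := one_div_pos.1 h1
    have h2 : 1 / r < 1 := by
      rw [hrinv]; have : 0 < ((n:ℝ) + 1) / (n * P) := by positivity
      linarith
    rwa [div_lt_one hr0] at h2
  obtain ⟨C1, hC1, hm⟩ := LX.mixed_final hn hPgt hpP hr1 hq0 hqinv hrinv hs1.le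
  have hdiag : ∃ C2 : ℝ≥0∞, C2 ≠ ∞ ∧ ∀ h : Pt n → ℝ≥0∞, Measurable h → θ = theta0 (n+1) →
      lorentzNorm volume q s (LX.ray h) ≤ C2 * (∫⁻ z, h z ^ p) ^ (1 / p) := by
    by_cases hθe : θ = theta0 (n+1)
    · have hPe : P = ((n:ℝ) + 3) / 2 + 1 / n := by
        rw [hPdef, hθe, theta0]; push_cast
        have e2 : ((n:ℝ) + 1)^2 + (n+1) - 2 = n * (n + 3) := by ring
        rw [e2]
        field_simp
        ring
      obtain ⟨C2, hC2, hd2⟩ := LX.diag_final hn hPe hpP hq0 hqinv hs1.le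
      exact ⟨C2, hC2, fun h hh _ => hd2 h hh⟩
    · exact ⟨0, by simp, fun h hh he => absurd he hθe⟩
  obtain ⟨C2, hC2, hd2⟩ := hdiag
  refine ⟨(C1 + C2).toReal + 1, by positivity, ?_⟩
  have hCle : C1 + C2 ≤ ENNReal.ofReal ((C1 + C2).toReal + 1) := by
    rw [ENNReal.le_ofReal_iff_toReal_le (ENNReal.add_ne_top.2 ⟨hC1, hC2⟩) (by positivity)]
    linarith
  intro f hf hf0
  have hh : Measurable (fun z => ENNReal.ofReal (f z)) := hf.ennreal_ofReal
  have hsrc : srcNorm (n+1) θ f = (∫⁻ z, ENNReal.ofReal (f z) ^ p) ^ (1 / p) := by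
    unfold srcNorm LpN
    rw [← hp]
    congr 1
    apply lintegral_congr
    intro z
    rw [abs_of_nonneg (hf0 z)]
  constructor
  · intro _
    rw [hsrc]
    exact (hm _ hh).trans (mul_le_mul' ((le_add_right le_rfl).trans hCle) le_rfl)
  · intro he
    rw [hsrc]
    exact (hd2 _ hh he).trans (mul_le_mul' ((le_add_left le_rfl).trans hCle) le_rfl)

end
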